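/- Let G be a compact, connected, simply connected subgroup of GL(N,ℝ). Then there exists a constant c > 0, independent of the Weyl alcove and of the function, such that for every Weyl alcove P (i.e. every connected component of 𝔱_reg) and every continuous conjugation-invariant function f : G → ℂ one has ∫_G f dμ_G = c · ∫_P f(exp b) · det(1_𝔨 − exp(ad b)|_𝔨) db. -/

import Mathlib

open MeasureTheory

/-!
For an alcove `P`, the pushforward `ν` of `μ_G × (det (1 - Ad (exp b)|_𝔨) db)|_P` under
`(u, b) ↦ u exp(b) u⁻¹` is a multiple of `μ_G`. Indeed, integration by parts shows that `ν` is
invariant under translations by one-parameter groups: the boundary terms vanish because the density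
vanishes on the walls of `P`, and the derivative of the density cancels the divergence of the
change of variables. The integration formula for `P` follows, with constant the inverse of the
total mass of the density on `P`.

If `G` is simply connected, then its determinant characters are trivial, so its Lie algebra has no
centre and `P` is bounded. Since `ν` is a positive multiple of `μ_G`, the conjugates of
`exp (closure P)` cover `G`. Hence two alcoves are always exchanged by an element of the affine Weyl
group, which is an isometry of `𝔱` preserving the density, and the mass does not depend on `P`.
-/

namespace WeylAlcove

open Filter Topology
open scoped Pointwise

/-! ### The exponential map and the adjoint action -/

section Adjoint

variable {A : Type*} [NormedRing A] [NormedAlgebra ℝ A]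

/-- The adjoint action `X ↦ u X u⁻¹` of a unit on the algebra. -/
noncomputable def Ad (u : Aˣ) : A →L[ℝ] A := ContinuousLinearMap.mulLeftRight ℝ A u ↑u⁻¹

@[simp]
theorem Ad_apply (u : Aˣ) (X : A) : Ad u X = u * X * ↑u⁻¹ := rfl

theorem Ad_mul_apply (u v : Aˣ) (X : A) : Ad (u * v) X = Ad u (Ad v X) := by
  simp [mul_assoc]

theorem Ad_inv_apply_Ad (u : Aˣ) (X : A) : Ad u⁻¹ (Ad u X) = X := by
  simp [mul_assoc]

theorem Ad_apply_Ad_inv (u : Aˣ) (X : A) : Ad u (Ad u⁻¹ X) = X := by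
  simp [mul_assoc]

theorem Ad_apply_mul (u : Aˣ) (X Y : A) : Ad u (X * Y) = Ad u X * Ad u Y := by
  simp [mul_assoc]

theorem Ad_apply_eq_self {u : Aˣ} {X : A} : Ad u X = X ↔ Commute (u : A) X := by
  rw [Ad_apply, Units.mul_inv_eq_iff_eq_mul, commute_iff_eq]

theorem continuous_Ad_apply : Continuous fun p : Aˣ × A ↦ Ad p.1 p.2 := by
  simp only [Ad_apply]
  exact ((Units.continuous_val.comp continuous_fst).mul continuous_snd).mul
    (Units.continuous_val.comp continuous_fst.inv)

end Adjoint

section Exponential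

variable {A : Type*} [NormedRing A] [NormedAlgebra ℝ A] [CompleteSpace A]

theorem continuous_exp : Continuous (NormedSpace.exp : A → A) := by
  let _ := NormedAlgebra.restrictScalars ℚ ℝ A
  exact NormedSpace.exp_continuous

theorem exp_add_of_commute {x y : A} (h : Commute x y) :
    NormedSpace.exp (x + y) = NormedSpace.exp x * NormedSpace.exp y := by
  let _ := NormedAlgebra.restrictScalars ℚ ℝ A
  exact NormedSpace.exp_add_of_commute h

theorem contDiff_exp {n : WithTop ℕ∞} : ContDiff ℝ n (NormedSpace.exp : A → A) :=
  contDiff_iff_contDiffAt.2 fun x ↦ (NormedSpace.exp_analytic (𝕂 := ℝ) x).contDiffAt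

/-- The exponential of a Banach algebra, as a map into its group of units. -/
noncomputable def expUnit (x : A) : Aˣ where
  val := NormedSpace.exp x
  inv := NormedSpace.exp (-x)
  val_inv := by rw [← exp_add_of_commute (Commute.refl x).neg_right]; simp
  inv_val := by rw [← exp_add_of_commute (Commute.refl x).neg_left]; simp

@[simp]
theorem val_expUnit (x : A) : (expUnit x : A) = NormedSpace.exp x := rfl

@[simp]
theorem inv_expUnit (x : A) : (expUnit x)⁻¹ = expUnit (-x) := Units.ext rfl

@[simp]
theorem expUnit_zero : expUnit (0 : A) = 1 := by ext; simp

theorem expUnit_add {x y : A} (h : Commute x y) : expUnit (x + y) = expUnit x * expUnit y :=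
  Units.ext (exp_add_of_commute h)

theorem expUnit_zsmul (n : ℤ) (x : A) : expUnit (n • x) = expUnit x ^ n := by
  have key (m : ℕ) : expUnit (m • x) = expUnit x ^ m := by
    let _ := NormedAlgebra.restrictScalars ℚ ℝ A
    ext
    simpa using NormedSpace.exp_nsmul m x
  cases n with
  | ofNat m => simpa using key m
  | negSucc m => rw [negSucc_zsmul, zpow_negSucc, ← key, inv_expUnit]

theorem continuous_expUnit : Continuous (expUnit : A → Aˣ) := by
  refine Units.continuous_iff.2 ⟨continuous_exp, ?_⟩
  simp only [inv_expUnit]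
  exact continuous_exp.comp continuous_neg

theorem expUnit_Ad (u : Aˣ) (X : A) : expUnit (Ad u X) = u * expUnit X * u⁻¹ := by
  let _ := NormedAlgebra.restrictScalars ℚ ℝ A
  ext
  simpa using NormedSpace.exp_units_conj u X

theorem contDiff_Ad_expUnit {n : WithTop ℕ∞} : ContDiff ℝ n fun X : A ↦ Ad (expUnit X) := by
  change ContDiff ℝ n fun X : A ↦
    ContinuousLinearMap.mulLeftRight ℝ A (NormedSpace.exp X) (NormedSpace.exp (-X))
  exact ((ContinuousLinearMap.mulLeftRight ℝ A).contDiff.comp contDiff_exp).clm_apply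
    (contDiff_exp.comp contDiff_neg)

theorem commute_of_forall_exp_smul {X Z : A} (h : ∀ s : ℝ, Commute (NormedSpace.exp (s • X)) Z) :
    Commute X Z := by
  have hleft : HasDerivAt (fun s : ℝ ↦ NormedSpace.exp (s • X) * Z) (X * Z) 0 := by
    simpa using (hasDerivAt_exp_smul_const X (0 : ℝ)).mul_const Z
  have hright : HasDerivAt (fun s : ℝ ↦ Z * NormedSpace.exp (s • X)) (Z * X) 0 := by
    simpa using (hasDerivAt_exp_smul_const X (0 : ℝ)).const_mul Z
  rw [funext fun s ↦ (h s).eq] at hleft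
  exact hleft.unique hright

theorem hasDerivAt_Ad_expUnit_smul (X Y : A) (s : ℝ) :
    HasDerivAt (fun s : ℝ ↦ Ad (expUnit (s • X)) Y) (Ad (expUnit (s • X)) ⁅X, Y⁆) s := by
  have hneg : HasDerivAt (fun s : ℝ ↦ NormedSpace.exp (-(s • X)))
      (-X * NormedSpace.exp (-(s • X))) s := by
    simpa using hasDerivAt_exp_smul_const' (-X) s
  refine (((hasDerivAt_exp_smul_const X s).mul_const Y).mul hneg).congr_deriv ?_
  simp only [Ad_apply, val_expUnit, inv_expUnit, Ring.lie_def]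
  noncomm_ring

theorem lie_mem_of_forall_Ad_mem {p : Submodule ℝ A} (hp : IsClosed (p : Set A)) {X Y : A}
    (h : ∀ s : ℝ, Ad (expUnit (s • X)) Y ∈ p) : ⁅X, Y⁆ ∈ p := by
  have hderiv := hasDerivAt_Ad_expUnit_smul X Y 0
  simp only [zero_smul, expUnit_zero, Ad_apply, Units.val_one, one_mul, inv_one, mul_one] at hderiv
  refine hp.mem_of_tendsto hderiv.tendsto_slope (Eventually.of_forall fun s ↦ ?_)
  rw [slope_def_module]
  exact p.smul_mem _ (p.sub_mem (h s) (by simpa using h 0))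

end Exponential

/-! ### Closed linear groups and their Lie algebras -/

theorem tendsto_floor_div_mul {ι : Type*} {l : Filter ι} {r : ι → ℝ} (hr : Tendsto r l (𝓝 0))
    (hpos : ∀ i, 0 < r i) (s : ℝ) : Tendsto (fun i ↦ (⌊s / r i⌋ : ℝ) * r i) l (𝓝 s) := by
  have hdist : Tendsto (fun i ↦ s - ⌊s / r i⌋ * r i) l (𝓝 0) := by
    refine squeeze_zero (fun i ↦ ?_) (fun i ↦ ?_) hr
    · exact sub_nonneg.2 ((le_div_iff₀ (hpos i)).1 (Int.floor_le _))
    · have := (div_lt_iff₀ (hpos i)).1 (Int.lt_floor_add_one (s / r i))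
      linarith
  simpa using hdist.const_sub s

section ClosedSubgroup

variable {A : Type*} [NormedRing A] [NormedAlgebra ℝ A] [CompleteSpace A]

/-- `𝔥` is the Lie algebra of the linear group `H`: it consists of the `X` whose one-parameter
group stays in `H`. -/
def IsLieAlgebraOf (𝔥 : Submodule ℝ A) (H : Subgroup Aˣ) : Prop :=
  ∀ X, X ∈ 𝔥 ↔ ∀ s : ℝ, expUnit (s • X) ∈ H

theorem IsLieAlgebraOf.expUnit_mem {𝔥 : Submodule ℝ A} {H : Subgroup Aˣ}
    (h𝔥 : IsLieAlgebraOf 𝔥 H) {X : A} (hX : X ∈ 𝔥) : expUnit X ∈ H := by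
  simpa using (h𝔥 X).1 hX 1

theorem IsLieAlgebraOf.Ad_mem {𝔥 : Submodule ℝ A} {H : Subgroup Aˣ} (h𝔥 : IsLieAlgebraOf 𝔥 H)
    {u : Aˣ} (hu : ∀ x ∈ H, u * x * u⁻¹ ∈ H) {X : A} (hX : X ∈ 𝔥) : Ad u X ∈ 𝔥 := by
  refine (h𝔥 _).2 fun s ↦ ?_
  rw [← map_smul, expUnit_Ad]
  exact hu _ ((h𝔥 X).1 hX s)

theorem expUnit_smul_mem_of_tendsto_normalize {H : Subgroup Aˣ} (hH : IsClosed (H : Set Aˣ))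
    {ι : Type*} {l : Filter ι} [l.NeBot] {Y : ι → A} (hY : Tendsto Y l (𝓝 0))
    (hne : ∀ i, Y i ≠ 0) (hmem : ∀ i, expUnit (Y i) ∈ H) {Z : A}
    (hZ : Tendsto (fun i ↦ ‖Y i‖⁻¹ • Y i) l (𝓝 Z)) (s : ℝ) : expUnit (s • Z) ∈ H := by
  have hpos i : 0 < ‖Y i‖ := norm_pos_iff.2 (hne i)
  have hfloor := tendsto_floor_div_mul (by simpa using hY.norm) hpos s
  refine hH.mem_of_tendsto ((continuous_expUnit.tendsto _).comp (hfloor.smul hZ))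
    (Eventually.of_forall fun i ↦ ?_)
  have hmultiple : ((⌊s / ‖Y i‖⌋ : ℝ) * ‖Y i‖) • ‖Y i‖⁻¹ • Y i = ⌊s / ‖Y i‖⌋ • Y i := by
    rw [smul_smul, mul_assoc, mul_inv_cancel₀ (hpos i).ne', mul_one, Int.cast_smul_eq_zsmul]
  rw [Function.comp_apply, hmultiple, expUnit_zsmul]
  exact H.zpow_mem (hmem i) _

theorem hasStrictFDerivAt_exp_mul_exp_zero {p q : A →L[ℝ] A}
    (hpq : p + q = ContinuousLinearMap.id ℝ A) :
    HasStrictFDerivAt (fun Z ↦ NormedSpace.exp (p Z) * NormedSpace.exp (q Z))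
      ((ContinuousLinearEquiv.refl ℝ A : A ≃L[ℝ] A) : A →L[ℝ] A) 0 := by
  have hexp (l : A →L[ℝ] A) : HasStrictFDerivAt (fun Z ↦ NormedSpace.exp (l Z)) l 0 := by
    have h0 : HasStrictFDerivAt (NormedSpace.exp : A → A) (1 : A →L[ℝ] A) (l 0) := by
      rw [map_zero]
      exact hasStrictFDerivAt_exp_zero
    exact h0.comp (0 : A) l.hasStrictFDerivAt
  refine ((hexp p).mul' (hexp q)).congr_fderiv ?_
  ext Z
  simpa [add_comm] using congr($hpq Z)

end ClosedSubgroup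

section ClosedSubgroupTheorem

variable {A : Type*} [NormedRing A] [NormedAlgebra ℝ A] [CompleteSpace A] [FiniteDimensional ℝ A]
  {H : Subgroup Aˣ} {𝔥 : Submodule ℝ A}

theorem IsLieAlgebraOf.eventually_eq_zero (h𝔥 : IsLieAlgebraOf 𝔥 H) (hH : IsClosed (H : Set Aˣ))
    {𝔪 : Submodule ℝ A} (hd : Disjoint 𝔥 𝔪) :
    ∀ᶠ Y in 𝓝 (0 : A), Y ∈ 𝔪 → expUnit Y ∈ H → Y = 0 := by
  have : ProperSpace A := FiniteDimensional.proper ℝ A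
  by_contra hcon
  obtain ⟨Y, hY, hYp⟩ := exists_seq_forall_of_frequently (not_eventually.1 hcon)
  push Not at hYp
  have hsphere n : ‖Y n‖⁻¹ • Y n ∈ Metric.sphere (0 : A) 1 := by
    simp [norm_smul, (hYp n).2.2]
  obtain ⟨Z, hZ, φ, hφ, hlim⟩ := (isCompact_sphere (0 : A) 1).tendsto_subseq hsphere
  have hZ𝔪 : Z ∈ 𝔪 := 𝔪.closed_of_finiteDimensional.mem_of_tendsto hlim
    (Eventually.of_forall fun n ↦ 𝔪.smul_mem _ (hYp (φ n)).1)
  have hZ𝔥 : Z ∈ 𝔥 := (h𝔥 Z).2 <| expUnit_smul_mem_of_tendsto_normalize hH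
    (hY.comp hφ.tendsto_atTop) (fun n ↦ (hYp (φ n)).2.2) (fun n ↦ (hYp (φ n)).2.1) hlim
  have hZ0 : Z = 0 := Submodule.disjoint_def.1 hd Z hZ𝔥 hZ𝔪
  simp [hZ0] at hZ

/-- Near `1`, every unit is `exp X · exp Y` with `X ∈ 𝔥` and `Y` in a complement of `𝔥`; when the
unit lies in `H`, so does `exp Y`, which forces `Y = 0`. -/
theorem IsLieAlgebraOf.eventually_exists_expUnit_eq (h𝔥 : IsLieAlgebraOf 𝔥 H)
    (hH : IsClosed (H : Set Aˣ)) {U : Set A} (hU : U ∈ 𝓝 (0 : A)) :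
    ∀ᶠ u in 𝓝 (1 : Aˣ), u ∈ H → ∃ X ∈ 𝔥, X ∈ U ∧ expUnit X = u := by
  obtain ⟨𝔪, h𝔪⟩ := 𝔥.exists_isCompl
  let p : A →L[ℝ] A := LinearMap.toContinuousLinearMap (𝔥.subtype ∘ₗ 𝔥.projectionOnto 𝔪 h𝔪)
  let q : A →L[ℝ] A := LinearMap.toContinuousLinearMap (𝔪.subtype ∘ₗ 𝔪.projectionOnto 𝔥 h𝔪.symm)
  have hpq : p + q = ContinuousLinearMap.id ℝ A := by
    ext Z
    simpa [p, q] using Submodule.projection_add_projection_eq_self h𝔪 Z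
  have hmap := (hasStrictFDerivAt_exp_mul_exp_zero hpq).map_nhds_eq_of_equiv
  simp only [map_zero, NormedSpace.exp_zero, mul_one] at hmap
  have hsmall : {Z | p Z ∈ U ∧ (q Z ∈ 𝔪 → expUnit (q Z) ∈ H → q Z = 0)} ∈ 𝓝 (0 : A) :=
    ((p.continuous.tendsto' 0 0 (map_zero p)).eventually hU).and
      ((q.continuous.tendsto' 0 0 (map_zero q)).eventually
        (h𝔥.eventually_eq_zero hH h𝔪.disjoint))
  filter_upwards [(Units.continuous_val (M := A)).tendsto' 1 1 rfl
    (hmap ▸ image_mem_map hsmall)] with u ⟨Z, ⟨hpU, hq0⟩, hZu⟩ huH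
  have hu : u = expUnit (p Z) * expUnit (q Z) := Units.ext hZu.symm
  have hp𝔥 : p Z ∈ 𝔥 := by simp [p]
  have hqH : expUnit (q Z) ∈ H := by
    rwa [hu, H.mul_mem_cancel_left (h𝔥.expUnit_mem hp𝔥)] at huH
  refine ⟨p Z, hp𝔥, hpU, ?_⟩
  rw [hu, hq0 (by simp [q]) hqH, expUnit_zero, mul_one]

theorem IsLieAlgebraOf.expUnit_image_mem_nhds_one (h𝔥 : IsLieAlgebraOf 𝔥 H)
    (hH : IsClosed (H : Set Aˣ)) {U : Set A} (hU : U ∈ 𝓝 (0 : A)) :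
    {u : H | ∃ X ∈ 𝔥, X ∈ U ∧ expUnit X = u} ∈ 𝓝 (1 : H) := by
  filter_upwards [(continuous_subtype_val (p := (· ∈ H))).tendsto' 1 1 rfl
    (h𝔥.eventually_exists_expUnit_eq hH hU)] with u hu using hu u.2

theorem IsLieAlgebraOf.le_of_expUnit_mem (h𝔥 : IsLieAlgebraOf 𝔥 H) (hH : IsClosed (H : Set Aˣ))
    (hconn : IsConnected (H : Set Aˣ)) {K : Subgroup Aˣ} (hK : ∀ X ∈ 𝔥, expUnit X ∈ K) :
    H ≤ K := by
  have : ConnectedSpace H := Subtype.connectedSpace hconn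
  have hopen : IsOpen (K.subgroupOf H : Set H) := by
    refine Subgroup.isOpen_of_mem_nhds _ (g := 1) ?_
    filter_upwards [h𝔥.expUnit_image_mem_nhds_one hH univ_mem] with u ⟨X, hX, _, hXu⟩
    exact (hXu ▸ hK X hX : (u : Aˣ) ∈ K)
  have huniv := IsClopen.eq_univ ⟨Subgroup.isClosed_of_isOpen _ hopen, hopen⟩
    ⟨1, (K.subgroupOf H).one_mem⟩
  exact fun x hx ↦ (huniv ▸ Set.mem_univ (⟨x, hx⟩ : H) :)

theorem IsLieAlgebraOf.exists_isPathConnected_mem_nhds_one (h𝔥 : IsLieAlgebraOf 𝔥 H)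
    (hH : IsClosed (H : Set Aˣ)) {V : Set H} (hV : V ∈ 𝓝 1) :
    ∃ W ∈ 𝓝 (1 : H), IsPathConnected W ∧ W ⊆ V := by
  let ex : 𝔥 → H := fun X ↦ ⟨expUnit X, h𝔥.expUnit_mem X.2⟩
  have hex : Continuous ex := (continuous_expUnit.comp continuous_subtype_val).subtype_mk _
  have hpre : ex ⁻¹' V ∈ 𝓝 (0 : 𝔥) := hex.tendsto' 0 1 (Subtype.ext (by simp [ex])) hV
  obtain ⟨r, hr, hrV⟩ := Metric.mem_nhds_iff.1 hpre
  refine ⟨ex '' Metric.ball 0 r, ?_, ?_, Set.image_subset_iff.2 hrV⟩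
  · filter_upwards [h𝔥.expUnit_image_mem_nhds_one hH (Metric.ball_mem_nhds (0 : A) hr)]
      with u ⟨X, hX, hXr, hXu⟩
    exact ⟨⟨X, hX⟩, by simpa using hXr, Subtype.ext hXu⟩
  · exact ((convex_ball (0 : 𝔥) r).isPathConnected ⟨0, Metric.mem_ball_self hr⟩).image hex

theorem IsLieAlgebraOf.locallyPathConnectedSpace (h𝔥 : IsLieAlgebraOf 𝔥 H)
    (hH : IsClosed (H : Set Aˣ)) : LocallyPathConnectedSpace H := by
  refine ⟨fun x ↦ hasBasis_self.2 fun V hV ↦ ?_⟩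
  obtain ⟨W, hW, hWp, hWV⟩ := h𝔥.exists_isPathConnected_mem_nhds_one hH
    ((continuous_const_mul x).tendsto' 1 x (mul_one x) hV)
  refine ⟨(x * ·) '' W, ?_, hWp.image (continuous_const_mul x), Set.image_subset_iff.2 hWV⟩
  simpa only [map_mul_left_nhds, mul_one] using image_mem_map (m := (x * ·)) hW

end ClosedSubgroupTheorem

/-! ### Maximal tori -/

section Torus

variable {A : Type*} [NormedRing A]

/-- `S` is a torus of `G`: a compact, connected, abelian subgroup of `G`. -/
structure IsTorus (G S : Subgroup Aˣ) : Prop where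
  le : S ≤ G
  isCompact : IsCompact (S : Set Aˣ)
  isConnected : IsConnected (S : Set Aˣ)
  commute : ∀ x ∈ S, ∀ y ∈ S, Commute x y

/-- `S` is a maximal torus of `G`. -/
abbrev IsMaximalTorus (G S : Subgroup Aˣ) : Prop := Maximal (IsTorus G) S

variable {G S : Subgroup Aˣ}

theorem IsTorus.conj (hS : IsTorus G S) {g : Aˣ} (hg : g ∈ G) :
    IsTorus G (MulAut.conj g • S) where
  le := Subgroup.conj_smul_le_of_le hS.le ⟨g, hg⟩
  isCompact := hS.isCompact.image (f := fun x ↦ g * x * g⁻¹) (by fun_prop)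
  isConnected := hS.isConnected.image (fun x ↦ g * x * g⁻¹) (by fun_prop)
  commute := by
    rintro _ ⟨x, hx, rfl⟩ _ ⟨y, hy, rfl⟩
    exact (hS.commute x hx y hy).map (MulAut.conj g)

theorem IsMaximalTorus.conj (hS : IsMaximalTorus G S) {g : Aˣ} (hg : g ∈ G) :
    IsMaximalTorus G (MulAut.conj g • S) := by
  refine ⟨hS.prop.conj hg, fun R hR hSR ↦ ?_⟩
  rw [Subgroup.subset_pointwise_smul_iff, ← map_inv]
  refine hS.le_of_ge (hR.conj (G.inv_mem hg)) ?_
  rwa [map_inv, ← Subgroup.pointwise_smul_subset_iff]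

theorem isTorus_topologicalClosure (hG : IsCompact (G : Set Aˣ)) (hSG : S ≤ G)
    (hconn : IsConnected (S : Set Aˣ)) (hcomm : ∀ x ∈ S, ∀ y ∈ S, Commute x y) :
    IsTorus G S.topologicalClosure := by
  have hle := S.topologicalClosure_minimal hSG hG.isClosed
  refine ⟨hle, hG.of_isClosed_subset S.isClosed_topologicalClosure hle, hconn.closure, ?_⟩
  let _ := S.commGroupTopologicalClosure fun x y ↦ Subtype.ext (hcomm x x.2 y y.2)
  exact fun x hx y hy ↦ congr_arg Subtype.val (mul_comm (⟨x, hx⟩ : S.topologicalClosure) ⟨y, hy⟩)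

end Torus

section TorusLieAlgebra

variable {A : Type*} [NormedRing A] [NormedAlgebra ℝ A] [CompleteSpace A]
  {G S : Subgroup Aˣ}

/-- The one-parameter group `s ↦ exp (s X)`. -/
noncomputable def oneParameterGroup (X : A) : Multiplicative ℝ →* Aˣ where
  toFun s := expUnit (s.toAdd • X)
  map_one' := by simp
  map_mul' r s := by
    rw [toAdd_mul, add_smul, expUnit_add (((Commute.refl X).smul_left _).smul_right _)]

theorem IsTorus.commute_of_forall_expUnit_smul_mem (hS : IsTorus G S) {X : A}
    (hX : ∀ s : ℝ, expUnit (s • X) ∈ S) {u : Aˣ} (hu : u ∈ S) : Commute X u :=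
  commute_of_forall_exp_smul fun s ↦ congr_arg Units.val (hS.commute _ (hX s) u hu).eq

theorem IsTorus.commute_of_forall_expUnit_smul_mem' (hS : IsTorus G S) {X Y : A}
    (hX : ∀ s : ℝ, expUnit (s • X) ∈ S) (hY : ∀ s : ℝ, expUnit (s • Y) ∈ S) : Commute X Y :=
  (commute_of_forall_exp_smul fun s ↦
    (hS.commute_of_forall_expUnit_smul_mem hX (hY s)).symm).symm

theorem IsTorus.exists_isLieAlgebraOf (hS : IsTorus G S) :
    ∃ 𝔰 : Submodule ℝ A, IsLieAlgebraOf 𝔰 S := by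
  refine ⟨{ carrier := {X | ∀ s : ℝ, expUnit (s • X) ∈ S}, add_mem' := ?_, zero_mem' := ?_,
            smul_mem' := ?_ }, fun X ↦ Iff.rfl⟩
  · intro X Y hX hY s
    have hXY : Commute X Y := hS.commute_of_forall_expUnit_smul_mem' hX hY
    rw [smul_add, expUnit_add ((hXY.smul_left s).smul_right s)]
    exact S.mul_mem (hX s) (hY s)
  · intro s
    simp [S.one_mem]
  · intro c X hX s
    rw [smul_smul]
    exact hX _

/-- Otherwise the closure of `S · exp (ℝ X)` would be a larger torus. -/
theorem IsMaximalTorus.expUnit_smul_mem (hS : IsMaximalTorus G S) (hG : IsCompact (G : Set Aˣ))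
    {X : A} (hX : ∀ s : ℝ, expUnit (s • X) ∈ G) (hcomm : ∀ u ∈ S, Commute (u : A) X) (s : ℝ) :
    expUnit (s • X) ∈ S := by
  have hcomm' (u : S) (r : Multiplicative ℝ) :
      Commute (S.subtype u) (oneParameterGroup X r) :=
    Units.ext ((hcomm u u.2).smul_right _).exp_right
  let f : S × Multiplicative ℝ →* Aˣ := S.subtype.noncommCoprod (oneParameterGroup X) hcomm'
  have hfG : f.range ≤ G := by
    rintro _ ⟨⟨u, r⟩, rfl⟩
    exact G.mul_mem (hS.prop.le u.2) (hX r.toAdd)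
  have hfconn : IsConnected (f.range : Set Aˣ) := by
    have : ConnectedSpace S := Subtype.connectedSpace hS.prop.isConnected
    have : ConnectedSpace (Multiplicative ℝ) := inferInstanceAs (ConnectedSpace ℝ)
    refine isConnected_range (f := f) ((continuous_subtype_val.comp continuous_fst).mul ?_)
    exact continuous_expUnit.comp ((continuous_toAdd.comp continuous_snd).smul continuous_const)
  have hfcomm : ∀ x ∈ f.range, ∀ y ∈ f.range, Commute x y := by
    rintro _ ⟨⟨u, r⟩, rfl⟩ _ ⟨⟨v, r'⟩, rfl⟩
    have huv : Commute u v := Subtype.ext (hS.prop.commute u u.2 v v.2)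
    exact (huv.prod (Commute.all r r')).map f
  have hSf : S ≤ f.range.topologicalClosure :=
    fun u hu ↦ f.range.le_topologicalClosure ⟨(⟨u, hu⟩, 1), by simp [f]⟩
  refine hS.le_of_ge (isTorus_topologicalClosure hG hfG hfconn hfcomm) hSf ?_
  exact f.range.le_topologicalClosure ⟨(1, .ofAdd s), by simp [f, oneParameterGroup]⟩

theorem IsTorus.exists_expUnit_eq [FiniteDimensional ℝ A] (hS : IsTorus G S) {𝔰 : Submodule ℝ A}
    (h𝔰 : IsLieAlgebraOf 𝔰 S) {u : Aˣ} (hu : u ∈ S) : ∃ X ∈ 𝔰, expUnit X = u := by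
  let K : Subgroup Aˣ :=
    { carrier := {u | ∃ X ∈ 𝔰, expUnit X = u}
      mul_mem' := by
        rintro _ _ ⟨X, hX, rfl⟩ ⟨Y, hY, rfl⟩
        have hXY := hS.commute_of_forall_expUnit_smul_mem' ((h𝔰 X).1 hX) ((h𝔰 Y).1 hY)
        exact ⟨X + Y, 𝔰.add_mem hX hY, expUnit_add hXY⟩
      one_mem' := ⟨0, 𝔰.zero_mem, expUnit_zero⟩
      inv_mem' := by
        rintro _ ⟨X, hX, rfl⟩
        exact ⟨-X, 𝔰.neg_mem hX, (inv_expUnit X).symm⟩ }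
  have hle : S ≤ K :=
    h𝔰.le_of_expUnit_mem hS.isCompact.isClosed hS.isConnected fun X hX ↦ ⟨X, hX, rfl⟩
  exact hle hu

end TorusLieAlgebra

/-! ### The decomposition `𝔤 = 𝔱 ⊕ 𝔨` -/

/-- The standing data: a compact connected linear group `G` with Lie algebra `𝔤`, a maximal torus
`T` with Lie algebra `𝔱`, and the orthogonal complement `𝔨` of `𝔱` in `𝔤` for a symmetric bilinear
form `B` whose restriction to `𝔤` is an `Ad`-invariant inner product. -/
structure IsTorusDecomposition {A : Type*} [NormedRing A] [NormedAlgebra ℝ A] [CompleteSpace A]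
    (G T : Subgroup Aˣ) (𝔤 𝔱 𝔨 : Submodule ℝ A) (B : LinearMap.BilinForm ℝ A) : Prop where
  isCompact : IsCompact (G : Set Aˣ)
  isConnected : IsConnected (G : Set Aˣ)
  isMaximalTorus : IsMaximalTorus G T
  isLieAlgebraOf : IsLieAlgebraOf 𝔤 G
  isLieAlgebraOf_torus : IsLieAlgebraOf 𝔱 T
  isSymm : B.IsSymm
  pos : ∀ X ∈ 𝔤, X ≠ 0 → 0 < B X X
  invariant : ∀ u ∈ G, ∀ X ∈ 𝔤, ∀ Y ∈ 𝔤, B (Ad u X) (Ad u Y) = B X Y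
  mem_iff : ∀ X, X ∈ 𝔨 ↔ X ∈ 𝔤 ∧ ∀ Y ∈ 𝔱, B X Y = 0

namespace IsTorusDecomposition

section Basic

variable {A : Type*} [NormedRing A] [NormedAlgebra ℝ A] [CompleteSpace A]
  {G T : Subgroup Aˣ} {𝔤 𝔱 𝔨 : Submodule ℝ A} {B : LinearMap.BilinForm ℝ A} {X Y b : A} {u : Aˣ}

theorem torus_le (D : IsTorusDecomposition G T 𝔤 𝔱 𝔨 B) : 𝔱 ≤ 𝔤 := fun X hX ↦
  (D.isLieAlgebraOf X).2 fun s ↦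
    D.isMaximalTorus.prop.le ((D.isLieAlgebraOf_torus X).1 hX s)

theorem compl_le (D : IsTorusDecomposition G T 𝔤 𝔱 𝔨 B) : 𝔨 ≤ 𝔤 := fun X hX ↦
  ((D.mem_iff X).1 hX).1

theorem expUnit_mem (D : IsTorusDecomposition G T 𝔤 𝔱 𝔨 B) (hX : X ∈ 𝔤) : expUnit X ∈ G :=
  D.isLieAlgebraOf.expUnit_mem hX

theorem expUnit_mem_torus (D : IsTorusDecomposition G T 𝔤 𝔱 𝔨 B) (hb : b ∈ 𝔱) : expUnit b ∈ T :=
  D.isLieAlgebraOf_torus.expUnit_mem hb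

theorem Ad_mem (D : IsTorusDecomposition G T 𝔤 𝔱 𝔨 B) (hu : u ∈ G) (hX : X ∈ 𝔤) : Ad u X ∈ 𝔤 :=
  D.isLieAlgebraOf.Ad_mem (fun _ hx ↦ G.mul_mem (G.mul_mem hu hx) (G.inv_mem hu)) hX

theorem commute_of_mem_torus (D : IsTorusDecomposition G T 𝔤 𝔱 𝔨 B) (hb : b ∈ 𝔱) (hu : u ∈ T) :
    Commute b u :=
  D.isMaximalTorus.prop.commute_of_forall_expUnit_smul_mem ((D.isLieAlgebraOf_torus b).1 hb) hu

theorem commute (D : IsTorusDecomposition G T 𝔤 𝔱 𝔨 B) (hX : X ∈ 𝔱) (hY : Y ∈ 𝔱) : Commute X Y :=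
  D.isMaximalTorus.prop.commute_of_forall_expUnit_smul_mem' ((D.isLieAlgebraOf_torus X).1 hX)
    ((D.isLieAlgebraOf_torus Y).1 hY)

theorem Ad_eq_self (D : IsTorusDecomposition G T 𝔤 𝔱 𝔨 B) (hu : u ∈ T) (hb : b ∈ 𝔱) :
    Ad u b = b :=
  Ad_apply_eq_self.2 (D.commute_of_mem_torus hb hu).symm

theorem disjoint (D : IsTorusDecomposition G T 𝔤 𝔱 𝔨 B) : Disjoint 𝔱 𝔨 := by
  refine Submodule.disjoint_def.2 fun X hXt hXk ↦ by_contra fun hne ↦ ?_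
  exact (D.pos X (D.torus_le hXt) hne).ne' (((D.mem_iff X).1 hXk).2 X hXt)

theorem Ad_mem_compl (D : IsTorusDecomposition G T 𝔤 𝔱 𝔨 B) (hu : u ∈ T) (hX : X ∈ 𝔨) :
    Ad u X ∈ 𝔨 := by
  have huG := D.isMaximalTorus.prop.le hu
  refine (D.mem_iff _).2 ⟨D.Ad_mem huG (D.compl_le hX), fun Y hY ↦ ?_⟩
  rw [← D.Ad_eq_self hu hY, D.invariant u huG X (D.compl_le hX) Y (D.torus_le hY)]
  exact ((D.mem_iff X).1 hX).2 Y hY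

theorem Ad_mem_torus_of_conj_eq (D : IsTorusDecomposition G T 𝔤 𝔱 𝔨 B)
    (hu : MulAut.conj u • T = T) (hb : b ∈ 𝔱) : Ad u b ∈ 𝔱 :=
  D.isLieAlgebraOf_torus.Ad_mem
    (fun x hx ↦ hu ▸ Subgroup.smul_mem_pointwise_smul x (MulAut.conj u) T hx) hb

theorem nondegenerate_restrict_torus (D : IsTorusDecomposition G T 𝔤 𝔱 𝔨 B) :
    (B.restrict 𝔱).Nondegenerate := by
  refine B.nondegenerate_restrict_of_disjoint_orthogonal D.isSymm.isRefl ?_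
  refine Submodule.disjoint_def.2 fun X hX hXorth ↦ by_contra fun hne ↦ ?_
  exact (D.pos X (D.torus_le hX) hne).ne' (hXorth X hX)

theorem Ad_mem_compl_of_conj_eq (D : IsTorusDecomposition G T 𝔤 𝔱 𝔨 B) (huG : u ∈ G)
    (hu : MulAut.conj u • T = T) (hX : X ∈ 𝔨) : Ad u X ∈ 𝔨 := by
  refine (D.mem_iff _).2 ⟨D.Ad_mem huG (D.compl_le hX), fun Y hY ↦ ?_⟩
  have huinv : MulAut.conj u⁻¹ • T = T := by rw [map_inv, inv_smul_eq_iff, hu]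
  have hYt := D.Ad_mem_torus_of_conj_eq huinv hY
  rw [← Ad_apply_Ad_inv u Y, D.invariant u huG X (D.compl_le hX) _ (D.torus_le hYt)]
  exact ((D.mem_iff X).1 hX).2 _ hYt

end Basic

section FiniteDimensional

variable {A : Type*} [NormedRing A] [NormedAlgebra ℝ A] [CompleteSpace A] [FiniteDimensional ℝ A]
  {G T : Subgroup Aˣ} {𝔤 𝔱 𝔨 : Submodule ℝ A} {B : LinearMap.BilinForm ℝ A} {X Y b : A} {u : Aˣ}

theorem lie_mem (D : IsTorusDecomposition G T 𝔤 𝔱 𝔨 B) (hX : X ∈ 𝔤) (hY : Y ∈ 𝔤) : ⁅X, Y⁆ ∈ 𝔤 :=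
  lie_mem_of_forall_Ad_mem 𝔤.closed_of_finiteDimensional fun s ↦
    D.Ad_mem (D.expUnit_mem (𝔤.smul_mem s hX)) hY

theorem lie_mem_compl (D : IsTorusDecomposition G T 𝔤 𝔱 𝔨 B) (hb : b ∈ 𝔱) (hX : X ∈ 𝔨) :
    ⁅b, X⁆ ∈ 𝔨 :=
  lie_mem_of_forall_Ad_mem 𝔨.closed_of_finiteDimensional fun s ↦
    D.Ad_mem_compl (D.expUnit_mem_torus (𝔱.smul_mem s hb)) hX

theorem mem_torus_of_commute (D : IsTorusDecomposition G T 𝔤 𝔱 𝔨 B) (hX : X ∈ 𝔤)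
    (hcomm : ∀ b ∈ 𝔱, Commute b X) : X ∈ 𝔱 := by
  refine (D.isLieAlgebraOf_torus X).2 fun s ↦
    D.isMaximalTorus.expUnit_smul_mem D.isCompact ((D.isLieAlgebraOf X).1 hX) ?_ s
  intro u hu
  obtain ⟨b, hb, rfl⟩ := D.isMaximalTorus.prop.exists_expUnit_eq D.isLieAlgebraOf_torus hu
  exact (hcomm b hb).exp_left

theorem exists_sub_mem_compl (D : IsTorusDecomposition G T 𝔤 𝔱 𝔨 B) (hY : Y ∈ 𝔤) :
    ∃ τ ∈ 𝔱, Y - τ ∈ 𝔨 := by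
  have hcompl := LinearMap.BilinForm.isCompl_orthogonal_of_restrict_nondegenerate D.isSymm.isRefl
    D.nondegenerate_restrict_torus
  obtain ⟨τ, hτ, κ, hκ, rfl⟩ := Submodule.mem_sup.1 (hcompl.sup_eq_top ▸ Submodule.mem_top (x := Y))
  refine ⟨τ, hτ, (D.mem_iff _).2 ⟨𝔤.sub_mem hY (D.torus_le hτ), fun Z hZ ↦ ?_⟩⟩
  rw [add_sub_cancel_left]
  exact D.isSymm.isRefl _ _ (hκ Z hZ)

/-- If `Ad (exp b)` fixes `X ∈ 𝔨`, then `exp (ℝ X)` commutes with `exp b`, so it normalizes the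
only maximal torus through `exp b`; hence `[X, 𝔱] ⊆ 𝔱 ∩ 𝔨 = 0` and `X ∈ 𝔱`. -/
theorem eq_zero_of_existsUnique_isMaximalTorus (D : IsTorusDecomposition G T 𝔤 𝔱 𝔨 B)
    (hb : b ∈ 𝔱) (hreg : ∃! S, IsMaximalTorus G S ∧ expUnit b ∈ S) (hX : X ∈ 𝔨)
    (hfix : Ad (expUnit b) X = X) : X = 0 := by
  have hXb : Commute X (expUnit b) := (Ad_apply_eq_self.1 hfix).symm
  have hnormalize (s : ℝ) : MulAut.conj (expUnit (s • X)) • T = T := by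
    have hmax := D.isMaximalTorus.conj (D.expUnit_mem (𝔤.smul_mem s (D.compl_le hX)))
    refine hreg.unique ⟨hmax, ?_⟩ ⟨D.isMaximalTorus, D.expUnit_mem_torus hb⟩
    have hfixed : MulAut.conj (expUnit (s • X)) • expUnit b = expUnit b :=
      mul_inv_eq_of_eq_mul (Units.ext (hXb.smul_left s).exp_left)
    exact hfixed ▸ Subgroup.smul_mem_pointwise_smul _ _ T (D.expUnit_mem_torus hb)
  have hXt : X ∈ 𝔱 := by
    refine D.mem_torus_of_commute (D.compl_le hX) fun c hc ↦ ?_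
    have hlie_torus : ⁅X, c⁆ ∈ 𝔱 := lie_mem_of_forall_Ad_mem 𝔱.closed_of_finiteDimensional
      fun s ↦ D.Ad_mem_torus_of_conj_eq (hnormalize s) hc
    have hlie_compl : ⁅X, c⁆ ∈ 𝔨 := by
      simpa [Ring.lie_def] using 𝔨.neg_mem (D.lie_mem_compl hc hX)
    have hlie := Submodule.disjoint_def.1 D.disjoint _ hlie_torus hlie_compl
    exact (commute_iff_lie_eq.2 hlie).symm
  exact Submodule.disjoint_def.1 D.disjoint X hXt hX

theorem eq_of_isMaximalTorus_of_expUnit_mem (D : IsTorusDecomposition G T 𝔤 𝔱 𝔨 B) (hb : b ∈ 𝔱)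
    (hfix : ∀ X ∈ 𝔨, Ad (expUnit b) X = X → X = 0) {S : Subgroup Aˣ} (hS : IsMaximalTorus G S)
    (hbS : expUnit b ∈ S) : S = T := by
  obtain ⟨𝔰, h𝔰⟩ := hS.prop.exists_isLieAlgebraOf
  refine Eq.symm <| hS.eq_of_ge D.isMaximalTorus.prop <|
    h𝔰.le_of_expUnit_mem hS.prop.isCompact.isClosed hS.prop.isConnected fun X hX ↦ ?_
  have hXg : X ∈ 𝔤 := (D.isLieAlgebraOf X).2 fun s ↦ hS.prop.le ((h𝔰 X).1 hX s)
  have hXb : Ad (expUnit b) X = X :=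
    Ad_apply_eq_self.2 (hS.prop.commute_of_forall_expUnit_smul_mem ((h𝔰 X).1 hX) hbS).symm
  obtain ⟨τ, hτ, hκ⟩ := D.exists_sub_mem_compl hXg
  have hXτ : X - τ = 0 := hfix _ hκ <| by
    rw [map_sub, hXb, D.Ad_eq_self (D.expUnit_mem_torus hb) hτ]
  rw [sub_eq_zero.1 hXτ]
  exact D.expUnit_mem_torus hτ

theorem existsUnique_isMaximalTorus_iff (D : IsTorusDecomposition G T 𝔤 𝔱 𝔨 B) (hb : b ∈ 𝔱) :
    (∃! S, IsMaximalTorus G S ∧ expUnit b ∈ S) ↔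
      ∀ X ∈ 𝔨, Ad (expUnit b) X = X → X = 0 :=
  ⟨fun hreg _ hX hfix ↦ D.eq_zero_of_existsUnique_isMaximalTorus hb hreg hX hfix,
    fun hfix ↦ ⟨T, ⟨D.isMaximalTorus, D.expUnit_mem_torus hb⟩,
      fun _ hS ↦ D.eq_of_isMaximalTorus_of_expUnit_mem hb hfix hS.1 hS.2⟩⟩

end FiniteDimensional

end IsTorusDecomposition

/-! ### Determinants and skew-symmetric operators -/

section Determinant

variable {V : Type*} [NormedAddCommGroup V] [NormedSpace ℝ V] [FiniteDimensional ℝ V]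

theorem contDiff_det {n : WithTop ℕ∞} :
    ContDiff ℝ n (ContinuousLinearMap.det : (V →L[ℝ] V) → ℝ) := by
  let b := Module.finBasis ℝ V
  have hdet (M : V →L[ℝ] V) : M.det = (LinearMap.toMatrix b b (M : V →ₗ[ℝ] V)).det :=
    (LinearMap.det_toMatrix b _).symm
  have hentry (i j) :
      ContDiff ℝ n fun M : V →L[ℝ] V ↦ LinearMap.toMatrix b b (M : V →ₗ[ℝ] V) i j :=
    (LinearMap.toContinuousLinearMap <| Matrix.entryLinearMap ℝ ℝ i j ∘ₗ
      (LinearMap.toMatrix b b).toLinearMap ∘ₗ ContinuousLinearMap.coeLM ℝ).contDiff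
  rw [funext hdet]
  simp only [Matrix.det_apply]
  exact ContDiff.sum fun σ _ ↦ (contDiff_prod fun i _ ↦ hentry _ _).const_smul _

theorem hasDerivAt_det_one_add_smul (C : V →L[ℝ] V) :
    HasDerivAt (fun r : ℝ ↦ (1 + r • C).det) (LinearMap.trace ℝ V C) 0 := by
  let b := Module.finBasis ℝ V
  let M := LinearMap.toMatrix b b C
  let P := ((1 + (Polynomial.X : Polynomial ℝ) • M.map Polynomial.C).det).divX.divX
  have hdet (r : ℝ) : (1 + r • C).det = 1 + M.trace * r + P.eval r * r ^ 2 := by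
    rw [← Matrix.det_one_add_smul, ContinuousLinearMap.det, ← LinearMap.det_toMatrix b]
    simp [M]
  have hderiv := (((hasDerivAt_id (0 : ℝ)).const_mul M.trace).const_add 1).add
    ((P.hasDerivAt 0).mul ((hasDerivAt_id (0 : ℝ)).pow 2))
  rw [funext hdet]
  refine hderiv.congr_deriv ?_
  simp [M, LinearMap.trace_eq_matrix_trace ℝ b]

/-- Jacobi's formula. -/
theorem hasDerivAt_det {M : ℝ → V →L[ℝ] V} {M' N : V →L[ℝ] V} {s : ℝ} (hM : HasDerivAt M M' s)
    (hN : N * M s = 1) :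
    HasDerivAt (fun r ↦ (M r).det) ((M s).det * LinearMap.trace ℝ V (N * M' : V →L[ℝ] V)) s := by
  have hdiff := ((contDiff_det (V := V) (n := 1)).differentiable one_ne_zero 1).hasFDerivAt
  have htrace (C : V →L[ℝ] V) :
      fderiv ℝ ContinuousLinearMap.det (1 : V →L[ℝ] V) C = LinearMap.trace ℝ V C := by
    have hline : HasDerivAt (fun r : ℝ ↦ (1 : V →L[ℝ] V) + r • C) C 0 := by
      simpa using ((hasDerivAt_id (0 : ℝ)).smul_const C).const_add (1 : V →L[ℝ] V)
    have hdiff' : HasFDerivAt ContinuousLinearMap.det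
        (fderiv ℝ ContinuousLinearMap.det 1) ((1 : V →L[ℝ] V) + (0 : ℝ) • C) := by simpa using hdiff
    have hcomp := hdiff'.comp_hasDerivAt 0 hline
    exact hcomp.unique (hasDerivAt_det_one_add_smul C)
  have hmul (K L : V →L[ℝ] V) : (K * L).det = K.det * L.det := LinearMap.det_comp _ _
  have hfactor (r : ℝ) : (M r).det = (M s).det * (N * M r).det := by
    have hdet : N.det * (M s).det = 1 := by rw [← hmul, hN]; exact LinearMap.det_id
    linear_combination -(M r).det * hdet - (M s).det * hmul N (M r)
  rw [funext hfactor, ← htrace]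
  have hdiffN : HasFDerivAt ContinuousLinearMap.det
      (fderiv ℝ ContinuousLinearMap.det (1 : V →L[ℝ] V)) (N * M s) := by rwa [hN]
  have hcomp := hdiffN.comp_hasDerivAt s (hM.const_mul N)
  exact hcomp.const_mul _

end Determinant

section InvariantForm

variable {V : Type*} [AddCommGroup V] [Module ℝ V] [FiniteDimensional ℝ V]

theorem det_one_sub_nonneg {Q : QuadraticForm ℝ V} (hQ : Q.PosDef) {R : V →ₗ[ℝ] V}
    (hR : ∀ x, Q (R x) = Q x) : 0 ≤ LinearMap.det (1 - R) := by
  let f : ℝ → ℝ := fun s ↦ LinearMap.det (1 - s • R)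
  have hf : Continuous f := by
    let b := Module.finBasis ℝ V
    have hdet (s : ℝ) : f s = (1 - s • LinearMap.toMatrix b b R).det := by
      rw [← LinearMap.toMatrix_one b, ← map_smul, ← map_sub, LinearMap.det_toMatrix]
    rw [funext hdet]
    fun_prop
  by_contra! hneg
  have hf0 : f 0 = 1 := by simp [f]
  have hf1 : f 1 < 0 := by simpa [f] using hneg
  obtain ⟨s, hs, hfs⟩ := intermediate_value_Icc' zero_le_one hf.continuousOn
    ⟨hf1.le, hf0 ▸ zero_le_one⟩
  have hs1 : s < 1 := hs.2.lt_of_ne fun h ↦ hf1.ne (h ▸ hfs)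
  obtain ⟨x, hxker, hx⟩ := Submodule.exists_mem_ne_zero_of_ne_bot
    (LinearMap.bot_lt_ker_of_det_eq_zero hfs).ne'
  have hxR : x = s • R x := sub_eq_zero.1 (by simpa using hxker)
  have hQx : Q x = s * s * Q x := by
    conv_lhs => rw [hxR, QuadraticMap.map_smul, hR, smul_eq_mul]
  nlinarith [hQ x hx, mul_lt_one_of_nonneg_of_lt_one_left hs.1 hs1 hs1.le]

theorem exists_linearEquiv_euclideanSpace {B : LinearMap.BilinForm ℝ V} (hsymm : B.IsSymm)
    (hpos : ∀ x, x ≠ 0 → 0 < B x x) :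
    ∃ (n : ℕ) (φ : EuclideanSpace ℝ (Fin n) ≃ₗ[ℝ] V), ∀ x y, B (φ x) (φ y) = inner ℝ x y := by
  let core : InnerProductSpace.Core ℝ V :=
    { inner x y := B x y
      conj_inner_symm x y := hsymm.eq y x
      re_inner_nonneg x := by
        rcases eq_or_ne x 0 with rfl | hx
        · simp
        · exact (hpos x hx).le
      add_left := by simp
      smul_left := by simp
      definite x hx := by_contra fun hne ↦ (hpos x hne).ne' hx }
  let _ : NormedAddCommGroup V := core.toNormedAddCommGroup
  let _ : InnerProductSpace ℝ V := InnerProductSpace.ofCore core.toCore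
  exact ⟨_, (stdOrthonormalBasis ℝ V).repr.symm.toLinearEquiv,
    (stdOrthonormalBasis ℝ V).repr.symm.inner_map_map⟩

end InvariantForm

section Skew

theorem exists_norm_eq_one_norm_apply_eq {E F : Type*} [NormedAddCommGroup E] [NormedSpace ℝ E]
    [FiniteDimensional ℝ E] [Nontrivial E] [NormedAddCommGroup F] [NormedSpace ℝ F]
    (M : E →L[ℝ] F) : ∃ x, ‖x‖ = 1 ∧ ‖M x‖ = ‖M‖ := by
  have := FiniteDimensional.proper ℝ E
  obtain ⟨x, hx, hmax⟩ := (isCompact_sphere (0 : E) 1).exists_isMaxOn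
    (NormedSpace.sphere_nonempty.2 zero_le_one) (f := fun x ↦ ‖M x‖) (by fun_prop)
  have hx1 : ‖x‖ = 1 := by simpa using hx
  refine ⟨x, hx1, le_antisymm (by simpa [hx1] using M.le_opNorm x) ?_⟩
  refine M.opNorm_le_of_unit_norm (norm_nonneg _) fun y hy ↦ hmax (by simpa using hy)

/-- A unit vector at which `‖M x‖` is maximal is an eigenvector of `M ^ 2`. -/
theorem exists_apply_apply_eq_of_skew {W : Type*} [NormedAddCommGroup W] [InnerProductSpace ℝ W]
    [FiniteDimensional ℝ W] {M : W →L[ℝ] W} (hM : ∀ x y, inner ℝ (M x) y = -inner ℝ x (M y))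
    (hM0 : M ≠ 0) : ∃ x, x ≠ 0 ∧ M (M x) = -(‖M‖ ^ 2 • x) := by
  have : Nontrivial W := by
    by_contra! h
    exact hM0 (Subsingleton.elim _ _)
  obtain ⟨x, hx, hMx⟩ := exists_norm_eq_one_norm_apply_eq M
  refine ⟨x, fun h ↦ by simp [h] at hx, eq_neg_of_add_eq_zero_left ?_⟩
  have hinner : inner ℝ (M (M x)) (‖M‖ ^ 2 • x) = -‖M‖ ^ 4 := by
    rw [inner_smul_right, hM, real_inner_self_eq_norm_sq, hMx]
    ring
  have hle : ‖M (M x)‖ ≤ ‖M‖ * ‖M‖ := by simpa [hMx] using M.le_opNorm (M x)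
  have hsq : ‖M (M x) + ‖M‖ ^ 2 • x‖ ^ 2 ≤ 0 := calc
    ‖M (M x) + ‖M‖ ^ 2 • x‖ ^ 2 = ‖M (M x)‖ ^ 2 + 2 * -‖M‖ ^ 4 + ‖M‖ ^ 4 := by
      rw [norm_add_sq_real, hinner, norm_smul, hx, norm_pow, norm_norm]
      ring
    _ ≤ (‖M‖ * ‖M‖) ^ 2 + 2 * -‖M‖ ^ 4 + ‖M‖ ^ 4 := by gcongr
    _ = 0 := by ring
  simpa using hsq.antisymm (sq_nonneg _)

/-- `Ad (exp (s b)) X` solves the harmonic oscillator equation with frequency `ρ`. -/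
theorem Ad_expUnit_eq_self_of_lie_lie {A : Type*} [NormedRing A] [NormedAlgebra ℝ A]
    [CompleteSpace A] {b X : A} {ρ : ℝ} (hρ : ρ ≠ 0) (hX : ⁅b, ⁅b, X⁆⁆ = -(ρ ^ 2 • X))
    (hcos : Real.cos ρ = 1) (hsin : Real.sin ρ = 0) : Ad (expUnit b) X = X := by
  let f (s : ℝ) : A := Ad (expUnit (s • b)) X
  let g (s : ℝ) : A := Ad (expUnit (s • b)) ⁅b, X⁆
  have hf (s) : HasDerivAt f (g s) s := hasDerivAt_Ad_expUnit_smul b X s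
  have hg (s) : HasDerivAt g (-(ρ ^ 2 • f s)) s := by
    simpa only [hX, map_neg, map_smul] using hasDerivAt_Ad_expUnit_smul b ⁅b, X⁆ s
  let w (s : ℝ) : A := Real.cos (s * ρ) • f s - (Real.sin (s * ρ) / ρ) • g s
  have hw (s) : HasDerivAt w 0 s := by
    have hlin : HasDerivAt (fun s : ℝ ↦ s * ρ) ρ s := by simpa using (hasDerivAt_id s).mul_const ρ
    refine ((hlin.cos.smul (hf s)).sub ((hlin.sin.div_const ρ).smul (hg s))).congr_deriv ?_
    match_scalars <;> field_simp <;> ring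
  have hconst : w 1 = w 0 :=
    is_const_of_deriv_eq_zero (fun s ↦ (hw s).differentiableAt) (fun s ↦ (hw s).deriv) 1 0
  simpa [w, f, hcos, hsin] using hconst

end Skew

/-! ### Integrals of derivatives -/

theorem integrable_of_continuous_of_compactSpace {X : Type*} [TopologicalSpace X] [CompactSpace X]
    [MeasurableSpace X] [OpensMeasurableSpace X] (μ : Measure X) [IsFiniteMeasureOnCompacts μ]
    {f : X → ℂ} (hf : Continuous f) : Integrable f μ :=
  hf.integrable_of_hasCompactSupport (.of_compactSpace f)

section Haar

variable {G : Type*} [Group G] [TopologicalSpace G] [IsTopologicalGroup G] [CompactSpace G]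
  [MeasurableSpace G] [BorelSpace G] (μ : Measure G) [μ.IsHaarMeasure] [IsProbabilityMeasure μ]

theorem isMulRightInvariant_of_isProbabilityMeasure : μ.IsMulRightInvariant := by
  refine ⟨fun g ↦ ?_⟩
  have : IsProbabilityMeasure (μ.map (· * g)) := Measure.isProbabilityMeasure_map (by fun_prop)
  exact Measure.isHaarMeasure_eq_of_isProbabilityMeasure _ _

theorem integral_eq_zero_of_hasDerivAt_mul_right [SecondCountableTopology G] {Ψ Ψ' : G → ℂ}
    (hΨ : Continuous Ψ) (hΨ' : Continuous Ψ') {γ : ℝ → G} (hγ : Continuous γ) (hγ0 : γ 0 = 1)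
    (hderiv : ∀ g s, HasDerivAt (fun s ↦ Ψ (g * γ s)) (Ψ' (g * γ s)) s) : ∫ g, Ψ' g ∂μ = 0 := by
  have := isMulRightInvariant_of_isProbabilityMeasure μ
  have hftc (g) : ∫ s in (0 : ℝ)..1, Ψ' (g * γ s) = Ψ (g * γ 1) - Ψ g := by
    simpa [hγ0] using intervalIntegral.integral_eq_sub_of_hasDerivAt (a := 0) (b := 1)
      (fun s _ ↦ hderiv g s) (Continuous.intervalIntegrable (by fun_prop) _ _)
  obtain ⟨C, hC⟩ := (isCompact_range hΨ').isBounded.exists_norm_le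
  have hswap : ∫ g, (∫ s in (0 : ℝ)..1, Ψ' (g * γ s)) ∂μ =
      ∫ s in (0 : ℝ)..1, (∫ g, Ψ' (g * γ s) ∂μ) := by
    simp only [intervalIntegral.integral_of_le (zero_le_one' ℝ)]
    refine integral_integral_swap (.of_bound ?_ C (.of_forall fun p ↦ hC _ ⟨_, rfl⟩))
    refine Continuous.aestronglyMeasurable ?_
    simp only [Function.uncurry_def]
    fun_prop
  simp only [integral_mul_right_eq_self, hftc] at hswap
  rw [integral_sub (integrable_of_continuous_of_compactSpace μ (by fun_prop))
    (integrable_of_continuous_of_compactSpace μ hΨ), integral_mul_right_eq_self Ψ,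
    sub_self] at hswap
  simpa using hswap.symm

end Haar

section LineDeriv

variable {E : Type*} [NormedAddCommGroup E] [NormedSpace ℝ E]

theorem hasLineDerivAt_const (c : ℂ) (x v : E) : HasLineDerivAt ℝ (fun _ : E ↦ c) 0 x v :=
  hasDerivAt_const _ _

theorem hasLineDerivAt_indicator {U : Set E} (hU : IsOpen U) {H : E → ℂ} {H' : ℂ} {x v : E}
    (hderiv : HasLineDerivAt ℝ H H' x v) (hH : x ∈ frontier U → H x = 0)
    (hH' : x ∈ frontier U → H' = 0) :
    HasLineDerivAt ℝ (U.indicator H) (U.indicator (fun _ ↦ H') x) x v := by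
  by_cases hxU : x ∈ U
  · rw [Set.indicator_of_mem hxU]
    refine hderiv.congr_of_eventuallyEq ?_
    filter_upwards [hU.mem_nhds hxU] with y hy using Set.indicator_of_mem hy _
  rw [Set.indicator_of_notMem hxU]
  by_cases hxcl : x ∈ closure U
  · have hxfr : x ∈ frontier U := hU.frontier_eq ▸ ⟨hxcl, hxU⟩
    rw [hH' hxfr, HasLineDerivAt, hasDerivAt_iff_isLittleO] at hderiv
    rw [HasLineDerivAt, hasDerivAt_iff_isLittleO]
    simp only [zero_smul, add_zero, hH hxfr, sub_zero, smul_zero] at hderiv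
    simp only [zero_smul, add_zero, sub_zero, smul_zero, Set.indicator_of_notMem hxU]
    exact (Asymptotics.isBigO_of_le _ fun s ↦
      norm_indicator_le_norm_self _ _).trans_isLittleO hderiv
  · refine (hasLineDerivAt_const 0 x v).congr_of_eventuallyEq ?_
    filter_upwards [isClosed_closure.isOpen_compl.mem_nhds hxcl] with y hy
    exact Set.indicator_of_notMem (fun hyU ↦ hy (subset_closure hyU)) _

theorem setIntegral_eq_zero_of_hasLineDerivAt [FiniteDimensional ℝ E] [MeasurableSpace E]
    [BorelSpace E] (m : Measure E) [m.IsAddHaarMeasure] {U : Set E} (hU : IsOpen U)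
    (hbdd : Bornology.IsBounded U) {H H' : E → ℂ} {v : E} (hH : Continuous H)
    (hH' : Continuous H') (hderiv : ∀ x, HasLineDerivAt ℝ H (H' x) x v)
    (hH0 : ∀ x ∈ frontier U, H x = 0) (hH'0 : ∀ x ∈ frontier U, H' x = 0) :
    ∫ x in U, H' x ∂m = 0 := by
  have := FiniteDimensional.proper ℝ E
  have hint {K : E → ℂ} (hK : Continuous K) : Integrable (U.indicator K) m := by
    rw [integrable_indicator_iff hU.measurableSet]
    exact (hK.continuousOn.integrableOn_compact hbdd.isCompact_closure).mono_set subset_closure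
  have hparts := integral_bilinear_hasLineDerivAt_right_eq_neg_left_of_integrable (μ := m)
    (f := fun _ ↦ (1 : ℂ)) (f' := 0) (g := U.indicator H) (g' := U.indicator H')
    (B := ContinuousLinearMap.mul ℝ ℂ) (by simp) (by simpa using hint hH')
    (by simpa using hint hH) (fun x _ ↦ hasLineDerivAt_const 1 x v)
    (fun x _ ↦ hasLineDerivAt_indicator hU (hderiv x) (hH0 x) (hH'0 x))
  simpa [integral_indicator hU.measurableSet] using hparts

end LineDeriv

/-! ### The Weyl density -/

section Projection

variable {E : Type*} [NormedAddCommGroup E] [NormedSpace ℝ E] [FiniteDimensional ℝ E]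
  {p q : Submodule ℝ E}

theorem exists_projection (h : Disjoint p q) :
    ∃ π : E →L[ℝ] p, (∀ x : p, π x = x) ∧ ∀ y : q, π y = 0 := by
  obtain ⟨r, hqr, hpr⟩ := h.symm.exists_isCompl
  refine ⟨LinearMap.toContinuousLinearMap (p.projectionOnto r hpr.symm), by simp, fun y ↦ ?_⟩
  exact (Submodule.projectionOnto_apply_eq_zero_iff hpr.symm).2 (hqr y.2)

/-- A continuous projection onto `p` vanishing on `q`; its values are canonical only on `p ⊔ q`. -/
noncomputable def projAlong (h : Disjoint p q) : E →L[ℝ] p := (exists_projection h).choose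

@[simp]
theorem projAlong_left (h : Disjoint p q) (x : p) : projAlong h x = x :=
  (exists_projection h).choose_spec.1 x

@[simp]
theorem projAlong_right (h : Disjoint p q) (y : q) : projAlong h y = 0 :=
  (exists_projection h).choose_spec.2 y

end Projection

section Ring

variable {S : Type*} [Ring S] {a a' r x : S}

theorem neg_mul_one_sub_eq_one (ha : a' * a = 1) (hr : r * (1 - a') = 1) :
    -(r * a') * (1 - a) = 1 := by
  rw [neg_mul, mul_assoc, mul_sub, mul_one, ha, ← mul_neg, neg_sub, hr]

theorem neg_mul_mul_neg_mul_cancel (ha : a' * a = 1) : -(r * a') * -(a * x) = r * x := by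
  rw [neg_mul_neg, mul_assoc, ← mul_assoc a', ha, one_mul]

theorem isUnit_one_sub_of_mul_eq_one (ha : a' * a = 1) (ha' : a * a' = 1) (h : IsUnit (1 - a)) :
    IsUnit (1 - a') := by
  have hfactor : 1 - a' = a' * (a - 1) := by rw [mul_sub, ha, mul_one]
  rw [hfactor]
  exact IsUnit.mul ⟨⟨a', a, ha, ha'⟩, rfl⟩ (IsUnit.sub_iff.1 h)

end Ring

theorem hasDerivAt_of_forall_apply {E F : Type*} [NormedAddCommGroup E] [NormedSpace ℝ E]
    [NormedAddCommGroup F] [NormedSpace ℝ F] {L : ℝ → E →L[ℝ] F} {L' : E →L[ℝ] F} {s : ℝ}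
    (hL : DifferentiableAt ℝ L s) (h : ∀ x, HasDerivAt (fun r ↦ L r x) (L' x) s) :
    HasDerivAt L L' s := by
  refine hL.hasDerivAt.congr_deriv (ContinuousLinearMap.ext fun x ↦ ?_)
  simpa using (hL.hasDerivAt.clm_apply (hasDerivAt_const s x)).unique (h x)

namespace IsTorusDecomposition

variable {A : Type*} [NormedRing A] [NormedAlgebra ℝ A] [CompleteSpace A] [FiniteDimensional ℝ A]
  {G T : Subgroup Aˣ} {𝔤 𝔱 𝔨 : Submodule ℝ A} {B : LinearMap.BilinForm ℝ A}

/-- The projection `𝔤 → 𝔱` along `𝔨`, extended to the whole algebra. -/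
noncomputable def projT (D : IsTorusDecomposition G T 𝔤 𝔱 𝔨 B) : A →L[ℝ] 𝔱 := projAlong D.disjoint

/-- The projection `𝔤 → 𝔨` along `𝔱`, extended to the whole algebra. -/
noncomputable def projK (D : IsTorusDecomposition G T 𝔤 𝔱 𝔨 B) : A →L[ℝ] 𝔨 :=
  projAlong D.disjoint.symm

/-- The operator `Ad (exp b)` on `𝔨`. -/
noncomputable def AdK (D : IsTorusDecomposition G T 𝔤 𝔱 𝔨 B) (b : 𝔱) : 𝔨 →L[ℝ] 𝔨 :=
  D.projK ∘L Ad (expUnit b) ∘L 𝔨.subtypeL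

/-- The compression to `𝔨` of the operator `ad Y`. -/
noncomputable def bracketK (D : IsTorusDecomposition G T 𝔤 𝔱 𝔨 B) : A →L[ℝ] 𝔨 →L[ℝ] 𝔨 :=
  ContinuousLinearMap.compL ℝ 𝔨 A 𝔨 D.projK ∘L (ContinuousLinearMap.compL ℝ 𝔨 A A).flip 𝔨.subtypeL
    ∘L (ContinuousLinearMap.mul ℝ A - (ContinuousLinearMap.mul ℝ A).flip)

/-- The functional `Y ↦ tr (N ∘ ad Y)` on `𝔨`. -/
noncomputable def traceBracket (D : IsTorusDecomposition G T 𝔤 𝔱 𝔨 B) (N : 𝔨 →L[ℝ] 𝔨) :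
    A →L[ℝ] ℝ :=
  LinearMap.toContinuousLinearMap <| LinearMap.trace ℝ 𝔨 ∘ₗ ContinuousLinearMap.coeLM ℝ ∘ₗ
    (ContinuousLinearMap.compL ℝ 𝔨 𝔨 𝔨 N ∘L D.bracketK).toLinearMap

/-- The Weyl density `det (1 - Ad (exp b))` on `𝔨`. -/
noncomputable def weylDensity (D : IsTorusDecomposition G T 𝔤 𝔱 𝔨 B) (b : 𝔱) : ℝ :=
  (1 - D.AdK b).det

theorem bracketK_apply (D : IsTorusDecomposition G T 𝔤 𝔱 𝔨 B) (Y : A) (X : 𝔨) :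
    D.bracketK Y X = D.projK ⁅Y, (X : A)⁆ := rfl

theorem traceBracket_apply (D : IsTorusDecomposition G T 𝔤 𝔱 𝔨 B) (N : 𝔨 →L[ℝ] 𝔨) (Y : A) :
    D.traceBracket N Y = LinearMap.trace ℝ 𝔨 (N * D.bracketK Y : 𝔨 →L[ℝ] 𝔨) := rfl

theorem projT_add_projK (D : IsTorusDecomposition G T 𝔤 𝔱 𝔨 B) {Y : A} (hY : Y ∈ 𝔤) :
    (D.projT Y : A) + D.projK Y = Y := by
  obtain ⟨τ, hτ, hκ⟩ := D.exists_sub_mem_compl hY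
  lift τ to 𝔱 using hτ
  obtain ⟨κ, hκ⟩ : ∃ κ : 𝔨, (κ : A) = Y - τ := ⟨⟨_, hκ⟩, rfl⟩
  obtain rfl : Y = τ + κ := by rw [hκ, add_sub_cancel]
  simp only [map_add, projT, projK, projAlong_left, projAlong_right, add_zero, zero_add]

theorem coe_AdK (D : IsTorusDecomposition G T 𝔤 𝔱 𝔨 B) (b : 𝔱) (X : 𝔨) :
    (D.AdK b X : A) = Ad (expUnit (b : A)) X :=
  congr_arg Subtype.val
    (projAlong_left D.disjoint.symm ⟨_, D.Ad_mem_compl (D.expUnit_mem_torus b.2) X.2⟩)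

theorem AdK_add (D : IsTorusDecomposition G T 𝔤 𝔱 𝔨 B) (b c : 𝔱) :
    D.AdK (b + c) = D.AdK b * D.AdK c := by
  ext X
  rw [mul_apply_eq_comp, coe_AdK, coe_AdK, coe_AdK, Submodule.coe_add,
    expUnit_add (D.commute b.2 c.2), Ad_mul_apply]

theorem AdK_mul_AdK_neg (D : IsTorusDecomposition G T 𝔤 𝔱 𝔨 B) (b : 𝔱) :
    D.AdK b * D.AdK (-b) = 1 := by
  rw [← AdK_add, add_neg_cancel]
  ext X
  simp [coe_AdK]

theorem AdK_neg_mul_AdK (D : IsTorusDecomposition G T 𝔤 𝔱 𝔨 B) (b : 𝔱) :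
    D.AdK (-b) * D.AdK b = 1 := by
  simpa using D.AdK_mul_AdK_neg (-b)

theorem projK_Ad (D : IsTorusDecomposition G T 𝔤 𝔱 𝔨 B) (b : 𝔱) {Z : A} (hZ : Z ∈ 𝔤) :
    D.projK (Ad (expUnit (b : A)) Z) = D.AdK b (D.projK Z) := by
  conv_lhs => rw [← D.projT_add_projK hZ, map_add,
    D.Ad_eq_self (D.expUnit_mem_torus b.2) (D.projT Z).2, map_add]
  rw [projK, projAlong_right, zero_add]
  rfl

theorem bracketK_AdK (D : IsTorusDecomposition G T 𝔤 𝔱 𝔨 B) (b : 𝔱) (κ : 𝔨) :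
    D.bracketK (D.AdK b κ) = D.AdK b * D.bracketK κ * D.AdK (-b) := by
  have hAd (X : 𝔨) : (X : A) = Ad (expUnit (b : A)) (D.AdK (-b) X) := by
    rw [← D.coe_AdK, ← mul_apply_eq_comp, D.AdK_mul_AdK_neg, one_apply_eq_self]
  refine ContinuousLinearMap.ext fun X ↦ ?_
  have hlie : ⁅(D.AdK b κ : A), (X : A)⁆ = Ad (expUnit (b : A)) ⁅(κ : A), (D.AdK (-b) X : A)⁆ := by
    rw [Ring.lie_def, Ring.lie_def, map_sub, Ad_apply_mul, Ad_apply_mul, ← hAd, coe_AdK]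
  rw [bracketK_apply, hlie, D.projK_Ad b (D.lie_mem (D.compl_le κ.2) (D.compl_le (D.AdK (-b) X).2))]
  rfl

/-- The functional is `AdK b`-invariant, and every element of `𝔨` is of the form `Z - AdK b Z`. -/
theorem traceBracket_coe (D : IsTorusDecomposition G T 𝔤 𝔱 𝔨 B) {b : 𝔱} {R : (𝔨 →L[ℝ] 𝔨)ˣ}
    (hR : (R : 𝔨 →L[ℝ] 𝔨) = 1 - D.AdK b) (κ : 𝔨) :
    D.traceBracket (↑R⁻¹ : 𝔨 →L[ℝ] 𝔨) κ = 0 := by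
  have hcomm : Commute (↑R⁻¹ : 𝔨 →L[ℝ] 𝔨) (D.AdK b) := by
    refine Commute.units_inv_left ?_
    rw [hR]
    exact (Commute.one_left _).sub_left (Commute.refl _)
  have hinv (Z : 𝔨) : D.traceBracket (↑R⁻¹ : 𝔨 →L[ℝ] 𝔨) (D.AdK b Z) =
      D.traceBracket (↑R⁻¹ : 𝔨 →L[ℝ] 𝔨) Z := by
    have hconj : (↑R⁻¹ : 𝔨 →L[ℝ] 𝔨) * D.bracketK (D.AdK b Z) =
        D.AdK b * (↑R⁻¹ * D.bracketK Z * D.AdK (-b)) := by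
      rw [bracketK_AdK, ← mul_assoc, ← mul_assoc, hcomm.eq]
      simp only [mul_assoc]
    rw [traceBracket_apply, traceBracket_apply, hconj]
    refine (LinearMap.trace_mul_comm ℝ _ _).trans ?_
    refine congr_arg (fun L : 𝔨 →L[ℝ] 𝔨 ↦ LinearMap.trace ℝ 𝔨 L)
      (?_ : (↑R⁻¹ * D.bracketK Z * D.AdK (-b)) * D.AdK b = _)
    rw [mul_assoc, D.AdK_neg_mul_AdK, mul_one]
  let Z : 𝔨 := (↑R⁻¹ : 𝔨 →L[ℝ] 𝔨) κ
  have hκ : Z - D.AdK b Z = κ := by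
    have : (↑R * ↑R⁻¹ : 𝔨 →L[ℝ] 𝔨) κ = κ := by simp
    rwa [mul_apply_eq_comp, hR] at this
  rw [← hκ, Submodule.coe_sub, map_sub, hinv, sub_self]

theorem contDiff_AdK (D : IsTorusDecomposition G T 𝔤 𝔱 𝔨 B) {n : WithTop ℕ∞} :
    ContDiff ℝ n D.AdK :=
  contDiff_const.clm_comp ((contDiff_Ad_expUnit.comp 𝔱.subtypeL.contDiff).clm_comp contDiff_const)

theorem contDiff_weylDensity (D : IsTorusDecomposition G T 𝔤 𝔱 𝔨 B) {n : WithTop ℕ∞} :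
    ContDiff ℝ n D.weylDensity :=
  contDiff_det.comp (contDiff_const.sub D.contDiff_AdK)

theorem hasDerivAt_AdK (D : IsTorusDecomposition G T 𝔤 𝔱 𝔨 B) (b τ : 𝔱) :
    HasDerivAt (fun s : ℝ ↦ D.AdK (b + s • τ)) (D.AdK b * D.bracketK τ) 0 := by
  have hline : ContDiff ℝ 1 fun s : ℝ ↦ b + s • τ := by fun_prop
  have hdiff : Differentiable ℝ fun s : ℝ ↦ D.AdK (b + s • τ) :=
    (D.contDiff_AdK.comp hline).differentiable one_ne_zero
  refine hasDerivAt_of_forall_apply (hdiff 0) fun X ↦ ?_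
  have hAd : HasDerivAt (fun s : ℝ ↦ Ad (expUnit (s • (τ : A))) X) ⁅(τ : A), (X : A)⁆ 0 := by
    simpa using hasDerivAt_Ad_expUnit_smul (τ : A) X 0
  simp only [AdK_add]
  exact (D.AdK b).hasFDerivAt.comp_hasDerivAt (0 : ℝ) (D.projK.hasFDerivAt.comp_hasDerivAt 0 hAd)

theorem hasDerivAt_weylDensity (D : IsTorusDecomposition G T 𝔤 𝔱 𝔨 B) (b τ : 𝔱) :
    HasDerivAt (fun s : ℝ ↦ D.weylDensity (b + s • τ)) (fderiv ℝ D.weylDensity b τ) 0 :=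
  ((D.contDiff_weylDensity (n := 1)).differentiable one_ne_zero b).hasFDerivAt.hasLineDerivAt τ

theorem fderiv_weylDensity (D : IsTorusDecomposition G T 𝔤 𝔱 𝔨 B) {b : 𝔱} (τ : 𝔱)
    {R : (𝔨 →L[ℝ] 𝔨)ˣ} (hR : (R : 𝔨 →L[ℝ] 𝔨) = 1 - D.AdK (-b)) :
    fderiv ℝ D.weylDensity b τ = D.weylDensity b * D.traceBracket (↑R⁻¹ : 𝔨 →L[ℝ] 𝔨) τ := by
  have hinv : -(↑R⁻¹ * D.AdK (-b)) * (1 - D.AdK (b + (0 : ℝ) • τ)) = 1 := by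
    rw [zero_smul, add_zero]
    exact neg_mul_one_sub_eq_one (D.AdK_neg_mul_AdK b) (by rw [← hR, R.inv_mul])
  have hdet := hasDerivAt_det (M := fun s : ℝ ↦ 1 - D.AdK (b + s • τ))
    ((D.hasDerivAt_AdK b τ).const_sub 1) hinv
  have htrace : -(↑R⁻¹ * D.AdK (-b)) * -(D.AdK b * D.bracketK τ) = ↑R⁻¹ * D.bracketK τ :=
    neg_mul_mul_neg_mul_cancel (D.AdK_neg_mul_AdK b)
  rw [htrace, zero_smul, add_zero] at hdet
  exact (D.hasDerivAt_weylDensity b τ).unique hdet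

theorem weylDensity_ne_zero_iff (D : IsTorusDecomposition G T 𝔤 𝔱 𝔨 B) {b : 𝔱} :
    D.weylDensity b ≠ 0 ↔ ∀ X ∈ 𝔨, Ad (expUnit (b : A)) X = X → X = 0 := by
  rw [weylDensity, ContinuousLinearMap.det, Ne, LinearMap.det_eq_zero_iff_ker_ne_bot, not_not,
    LinearMap.ker_eq_bot']
  have hfix (X : 𝔨) : (1 - D.AdK b) X = 0 ↔ Ad (expUnit (b : A)) X = X := by
    rw [sub_apply, one_apply_eq_self, sub_eq_zero, eq_comm, Subtype.ext_iff, coe_AdK]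
  refine ⟨fun h X hX hXfix ↦ ?_, fun h X hX ↦ ?_⟩
  · exact congr_arg Subtype.val (h ⟨X, hX⟩ ((hfix _).2 hXfix))
  · exact Subtype.ext (h X X.2 ((hfix X).1 hX))

theorem isUnit_one_sub_AdK_neg (D : IsTorusDecomposition G T 𝔤 𝔱 𝔨 B) {b : 𝔱}
    (hb : D.weylDensity b ≠ 0) : IsUnit (1 - D.AdK (-b)) := by
  have hunit : IsUnit (1 - D.AdK b) := by
    rw [ContinuousLinearMap.isUnit_iff_bijective]
    exact (Module.End.isUnit_iff _).1 ((LinearMap.isUnit_iff_isUnit_det _).2 hb.isUnit)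
  exact isUnit_one_sub_of_mul_eq_one (D.AdK_neg_mul_AdK b) (D.AdK_mul_AdK_neg b) hunit

theorem weylDensity_nonneg (D : IsTorusDecomposition G T 𝔤 𝔱 𝔨 B) (b : 𝔱) :
    0 ≤ D.weylDensity b := by
  let Q : QuadraticForm ℝ 𝔨 := B.toQuadraticMap.comp 𝔨.subtype
  refine det_one_sub_nonneg (Q := Q) (R := (D.AdK b : 𝔨 →ₗ[ℝ] 𝔨)) (fun X hX ↦ ?_) fun X ↦ ?_
  · exact D.pos X (D.compl_le X.2) (by simpa using hX)
  · have hX := D.compl_le X.2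
    change B (D.AdK b X) (D.AdK b X) = B X X
    rw [coe_AdK, D.invariant _ (D.expUnit_mem (D.torus_le b.2)) X hX X hX]

theorem fderiv_weylDensity_eq_zero (D : IsTorusDecomposition G T 𝔤 𝔱 𝔨 B) {b : 𝔱}
    (hb : D.weylDensity b = 0) (τ : 𝔱) : fderiv ℝ D.weylDensity b τ = 0 := by
  refine IsLocalMin.hasDerivAt_eq_zero (.of_forall fun s ↦ ?_) (D.hasDerivAt_weylDensity b τ)
  simpa [hb] using D.weylDensity_nonneg (b + s • τ)

end IsTorusDecomposition

/-! ### Translation invariance by integration by parts -/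

theorem Ad_apply_lie {A : Type*} [NormedRing A] [NormedAlgebra ℝ A] (u : Aˣ) (X Y : A) :
    Ad u ⁅X, Y⁆ = ⁅Ad u X, Ad u Y⁆ := by
  rw [Ring.lie_def, Ring.lie_def, map_sub, Ad_apply_mul, Ad_apply_mul]

section Translation

variable {A : Type*} [NormedRing A] [NormedAlgebra ℝ A] [CompleteSpace A]

theorem hasDerivAt_Ad_mul_expUnit (u : Aˣ) (X Y : A) (s : ℝ) :
    HasDerivAt (fun s : ℝ ↦ Ad (u * expUnit (s • X)) Y) (Ad (u * expUnit (s • X)) ⁅X, Y⁆) s := by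
  simp only [Ad_mul_apply]
  exact (Ad u).hasFDerivAt.comp_hasDerivAt s (hasDerivAt_Ad_expUnit_smul X Y s)

theorem hasDerivAt_Ad_inv_mul_expUnit (u : Aˣ) (X Y : A) (s : ℝ) :
    HasDerivAt (fun s : ℝ ↦ Ad (u * expUnit (s • X))⁻¹ Y)
      ⁅Ad (u * expUnit (s • X))⁻¹ Y, X⁆ s := by
  have hinv (s : ℝ) : (u * expUnit (s • X))⁻¹ = expUnit (s • -X) * u⁻¹ := by
    rw [mul_inv_rev, inv_expUnit, smul_neg]
  have hfix : Ad (expUnit (s • -X)) X = X := by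
    rw [Ad_apply_eq_self, val_expUnit]
    exact ((Commute.refl X).neg_left.smul_left s).exp_left
  simp only [hinv, Ad_mul_apply]
  refine (hasDerivAt_Ad_expUnit_smul (-X) (Ad u⁻¹ Y) s).congr_deriv ?_
  rw [Ad_apply_lie, map_neg, hfix, Ring.lie_def, Ring.lie_def]
  noncomm_ring

theorem hasDerivAt_expUnit_add_smul {X Y : A} (h : Commute X Y) :
    HasDerivAt (fun s : ℝ ↦ (expUnit (X + s • Y) : A)) (expUnit X * Y) 0 := by
  have hexp : HasDerivAt (fun s : ℝ ↦ NormedSpace.exp (s • Y)) Y 0 := by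
    simpa using hasDerivAt_exp_smul_const Y (0 : ℝ)
  refine (hexp.const_mul (expUnit X : A)).congr_of_eventuallyEq (.of_forall fun s ↦ ?_)
  dsimp only
  rw [expUnit_add (h.smul_right s), Units.val_mul, val_expUnit (s • Y)]

end Translation

section Continuity

variable {A : Type*} [NormedRing A] [NormedAlgebra ℝ A] {G : Subgroup Aˣ}

theorem continuous_Ad_coe {α : Type*} [TopologicalSpace α] {u : α → G} {X : α → A}
    (hu : Continuous u) (hX : Continuous X) :
    Continuous fun p ↦ Ad (u p : Aˣ) (X p) :=
  continuous_Ad_apply.comp (f := fun p ↦ ((u p : Aˣ), X p)) (by fun_prop)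

theorem continuous_Ad_coe_inv {α : Type*} [TopologicalSpace α] {u : α → G} {X : α → A}
    (hu : Continuous u) (hX : Continuous X) :
    Continuous fun p ↦ Ad (u p : Aˣ)⁻¹ (X p) :=
  continuous_Ad_apply.comp (f := fun p ↦ ((u p : Aˣ)⁻¹, X p)) (by fun_prop)

theorem continuous_fderiv_Ad_lie {F : A → ℂ} (hF : ContDiff ℝ 1 F) (ε : A →L[ℝ] ℝ) (X x Y : A) :
    Continuous fun u : G ↦ (ε ⁅Ad (u : Aˣ)⁻¹ Y, X⁆ : ℂ) * F (Ad (u : Aˣ) x) +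
      ε (Ad (u : Aˣ)⁻¹ Y) * fderiv ℝ F (Ad (u : Aˣ) x) (Ad (u : Aˣ) ⁅X, x⁆) := by
  have hAd (Z : A) : Continuous fun u : G ↦ Ad (u : Aˣ) Z :=
    continuous_Ad_coe continuous_id continuous_const
  have hAd_inv : Continuous fun u : G ↦ Ad (u : Aˣ)⁻¹ Y :=
    continuous_Ad_coe_inv continuous_id continuous_const
  simp only [Ring.lie_def]
  refine .add (.mul (by fun_prop) (hF.continuous.comp (hAd x))) (.mul (by fun_prop) ?_)
  exact ((hF.continuous_fderiv one_ne_zero).comp (hAd x)).clm_apply (hAd _)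

end Continuity

section Haar

variable {A : Type*} [NormedRing A] [NormedAlgebra ℝ A] [CompleteSpace A] {G : Subgroup Aˣ}

theorem secondCountableTopology_subgroup [FiniteDimensional ℝ A] (G : Subgroup Aˣ) :
    SecondCountableTopology G := by
  have := FiniteDimensional.proper ℝ A
  have : SecondCountableTopology Aˣ :=
    (Units.isOpenEmbedding_val (R := A)).isEmbedding.secondCountableTopology
  exact (IsEmbedding.subtypeVal (p := (· ∈ G))).secondCountableTopology

theorem integral_fderiv_Ad_lie_eq_zero [FiniteDimensional ℝ A] [CompactSpace G] [MeasurableSpace G]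
    [BorelSpace G] (μ : Measure G) [μ.IsHaarMeasure] [IsProbabilityMeasure μ] {F : A → ℂ}
    (hF : ContDiff ℝ 1 F) {X : A} (hX : ∀ s : ℝ, expUnit (s • X) ∈ G) (ε : A →L[ℝ] ℝ) (x Y : A) :
    ∫ u : G, ((ε ⁅Ad (u : Aˣ)⁻¹ Y, X⁆ : ℂ) * F (Ad (u : Aˣ) x) +
      ε (Ad (u : Aˣ)⁻¹ Y) * fderiv ℝ F (Ad (u : Aˣ) x) (Ad (u : Aˣ) ⁅X, x⁆)) ∂μ = 0 := by
  have := secondCountableTopology_subgroup G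
  have hγ : Continuous fun s : ℝ ↦ (⟨expUnit (s • X), hX s⟩ : G) :=
    (continuous_expUnit.comp (by fun_prop)).subtype_mk _
  have hAd : Continuous fun u : G ↦ Ad (u : Aˣ) x :=
    continuous_Ad_coe continuous_id continuous_const
  have hAd_inv : Continuous fun u : G ↦ Ad (u : Aˣ)⁻¹ Y :=
    continuous_Ad_coe_inv continuous_id continuous_const
  refine integral_eq_zero_of_hasDerivAt_mul_right μ
    (Ψ := fun u ↦ (ε (Ad (u : Aˣ)⁻¹ Y) : ℂ) * F (Ad (u : Aˣ) x))
    (.mul (by fun_prop) (hF.continuous.comp hAd)) (continuous_fderiv_Ad_lie hF ε X x Y) hγ ?_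
    fun u s ↦ ?_
  · ext; simp
  · have hε := ε.hasFDerivAt.comp_hasDerivAt s (hasDerivAt_Ad_inv_mul_expUnit (u : Aˣ) X Y s)
    have hFderiv := (hF.differentiable one_ne_zero
      (Ad ((u : Aˣ) * expUnit (s • X)) x)).hasFDerivAt.comp_hasDerivAt s
        (hasDerivAt_Ad_mul_expUnit (u : Aˣ) X x s)
    exact hε.ofReal_comp.mul hFderiv

end Haar

theorem integrable_prod_restrict_of_continuous {X E : Type*} [TopologicalSpace X] [CompactSpace X]
    [SecondCountableTopology X] [MeasurableSpace X] [BorelSpace X] (μ : Measure X)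
    [IsFiniteMeasure μ] [PseudoMetricSpace E] [ProperSpace E] [MeasurableSpace E] [BorelSpace E]
    (m : Measure E) [IsFiniteMeasureOnCompacts m] [SFinite m] {P : Set E}
    (hP : Bornology.IsBounded P) {f : X × E → ℂ} (hf : Continuous f) :
    Integrable f (μ.prod (m.restrict P)) := by
  rw [← Measure.restrict_univ (μ := μ), Measure.prod_restrict]
  have hcompact : IsCompact (Set.univ ×ˢ closure P : Set (X × E)) :=
    isCompact_univ.prod hP.isCompact_closure
  exact (hf.continuousOn.integrableOn_compact' hcompact
    (MeasurableSet.univ.prod isClosed_closure.measurableSet)).mono_set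
      (Set.prod_mono_right subset_closure)

namespace IsTorusDecomposition

variable {A : Type*} [NormedRing A] [NormedAlgebra ℝ A] [CompleteSpace A] [FiniteDimensional ℝ A]
  {G T : Subgroup Aˣ} {𝔤 𝔱 𝔨 : Submodule ℝ A} {B : LinearMap.BilinForm ℝ A} {F : A → ℂ}

theorem traceBracket_eq_sum (D : IsTorusDecomposition G T 𝔤 𝔱 𝔨 B) (N : 𝔨 →L[ℝ] 𝔨) {ι : Type*}
    [Fintype ι] (e : Module.Basis ι ℝ 𝔨) (Y : A) :
    D.traceBracket N Y = ∑ i, e.coord i (N (D.projK ⁅Y, (e i : A)⁆)) := by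
  classical
  rw [traceBracket_apply, LinearMap.trace_eq_matrix_trace ℝ e, Matrix.trace]
  simp [LinearMap.toMatrix_apply, bracketK_apply]

theorem traceBracket_projT (D : IsTorusDecomposition G T 𝔤 𝔱 𝔨 B) {b : 𝔱} {R : (𝔨 →L[ℝ] 𝔨)ˣ}
    (hR : (R : 𝔨 →L[ℝ] 𝔨) = 1 - D.AdK b) {Y : A} (hY : Y ∈ 𝔤) :
    D.traceBracket (↑R⁻¹ : 𝔨 →L[ℝ] 𝔨) (D.projT Y) = D.traceBracket (↑R⁻¹ : 𝔨 →L[ℝ] 𝔨) Y := by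
  conv_rhs => rw [← D.projT_add_projK hY, map_add, D.traceBracket_coe hR, add_zero]

theorem lie_inv_apply_exp (D : IsTorusDecomposition G T 𝔤 𝔱 𝔨 B) {b : 𝔱} {R : (𝔨 →L[ℝ] 𝔨)ˣ}
    (hR : (R : 𝔨 →L[ℝ] 𝔨) = 1 - D.AdK (-b)) (κ : 𝔨) :
    ⁅((↑R⁻¹ : 𝔨 →L[ℝ] 𝔨) κ : A), (expUnit (b : A) : A)⁆ = -((expUnit (b : A) : A) * κ) := by
  set Z : 𝔨 := (↑R⁻¹ : 𝔨 →L[ℝ] 𝔨) κ with hZ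
  have hκ : (κ : A) = Z - Ad (expUnit (b : A))⁻¹ Z := by
    have hRZ : (R : 𝔨 →L[ℝ] 𝔨) Z = κ := by
      rw [hZ, ← mul_apply_eq_comp, R.mul_inv, one_apply_eq_self]
    rw [← hRZ, hR, sub_apply, one_apply_eq_self, Submodule.coe_sub, coe_AdK, Submodule.coe_neg,
      inv_expUnit]
  rw [hκ, Ad_apply, Ring.lie_def, inv_inv, mul_sub, mul_assoc _ (Z : A), Units.mul_inv_cancel_left,
    neg_sub]

section Torus

/-- A bounded open set of the torus algebra on which the Weyl density is nonzero while vanishing on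
the boundary; Weyl alcoves are the main example. -/
structure IsWeylDomain (D : IsTorusDecomposition G T 𝔤 𝔱 𝔨 B) (P : Set 𝔱) : Prop where
  isOpen : IsOpen P
  isBounded : Bornology.IsBounded P
  weylDensity_ne_zero : ∀ b ∈ P, D.weylDensity b ≠ 0
  weylDensity_eq_zero : ∀ b ∈ frontier P, D.weylDensity b = 0

variable [MeasurableSpace 𝔱] [BorelSpace 𝔱] (m : Measure 𝔱) [m.IsAddHaarMeasure] {P : Set 𝔱}

theorem setIntegral_fderiv_mul_eq_zero (D : IsTorusDecomposition G T 𝔤 𝔱 𝔨 B)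
    (hP : D.IsWeylDomain P) (hF : ContDiff ℝ 1 F) (u : Aˣ) (τ : 𝔱) :
    ∫ b in P, (fderiv ℝ F (Ad u (expUnit (b : A))) (Ad u (expUnit (b : A) * τ)) * D.weylDensity b +
      F (Ad u (expUnit (b : A))) * fderiv ℝ D.weylDensity b τ) ∂m = 0 := by
  have hexp : Continuous fun b : 𝔱 ↦ (expUnit (b : A) : A) :=
    continuous_exp.comp continuous_subtype_val
  have hF'exp : Continuous fun b : 𝔱 ↦
      fderiv ℝ F (Ad u (expUnit (b : A))) (Ad u (expUnit (b : A) * τ)) :=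
    ((hF.continuous_fderiv one_ne_zero).comp (by fun_prop)).clm_apply (by fun_prop)
  have hδ : Continuous D.weylDensity := (D.contDiff_weylDensity (n := 0)).continuous
  have hδ' : Continuous fun b ↦ fderiv ℝ D.weylDensity b τ :=
    ((D.contDiff_weylDensity (n := 1)).continuous_fderiv one_ne_zero).clm_apply continuous_const
  refine setIntegral_eq_zero_of_hasLineDerivAt m hP.isOpen hP.isBounded (v := τ)
    (H := fun b ↦ F (Ad u (expUnit (b : A))) * D.weylDensity b)
    (.mul (hF.continuous.comp (by fun_prop)) (by fun_prop))
    (.add (by fun_prop) (.mul (hF.continuous.comp (by fun_prop)) (by fun_prop)))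
    (fun b ↦ ?_) (fun b hb ↦ ?_) fun b hb ↦ ?_
  · have hFb : HasFDerivAt F (fderiv ℝ F (Ad u (expUnit (b : A))))
        (Ad u (expUnit ((b + (0 : ℝ) • τ : 𝔱) : A))) := by
      simpa using (hF.differentiable one_ne_zero _).hasFDerivAt
    have hAd := (Ad u).hasFDerivAt.comp_hasDerivAt (0 : ℝ)
      (hasDerivAt_expUnit_add_smul (D.commute b.2 τ.2))
    refine ((hFb.comp_hasDerivAt (0 : ℝ) hAd).mul
      (D.hasDerivAt_weylDensity b τ).ofReal_comp).congr_deriv ?_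
    simp
  · simp [hP.weylDensity_eq_zero b hb]
  · simp [hP.weylDensity_eq_zero b hb, D.fderiv_weylDensity_eq_zero (hP.weylDensity_eq_zero b hb)]

end Torus

variable [CompactSpace G] [MeasurableSpace G] [BorelSpace G] (μ : Measure G) [μ.IsHaarMeasure]
  [IsProbabilityMeasure μ]

theorem integral_traceBracket_add_fderiv_eq_zero (D : IsTorusDecomposition G T 𝔤 𝔱 𝔨 B)
    (hF : ContDiff ℝ 1 F) (N : 𝔨 →L[ℝ] 𝔨) (x Y : A) :
    ∫ u : G, ((D.traceBracket N (Ad (u : Aˣ)⁻¹ Y) : ℂ) * F (Ad (u : Aˣ) x) +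
      fderiv ℝ F (Ad (u : Aˣ) x)
        (Ad (u : Aˣ) ⁅(N (D.projK (Ad (u : Aˣ)⁻¹ Y)) : A), x⁆)) ∂μ = 0 := by
  let e := Module.finBasis ℝ 𝔨
  let ε (i) : A →L[ℝ] ℝ := LinearMap.toContinuousLinearMap (e.coord i) ∘L N ∘L D.projK
  have hsum (u : G) : (D.traceBracket N (Ad (u : Aˣ)⁻¹ Y) : ℂ) * F (Ad (u : Aˣ) x) +
      fderiv ℝ F (Ad (u : Aˣ) x) (Ad (u : Aˣ) ⁅(N (D.projK (Ad (u : Aˣ)⁻¹ Y)) : A), x⁆) =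
      ∑ i, ((ε i ⁅Ad (u : Aˣ)⁻¹ Y, (e i : A)⁆ : ℂ) * F (Ad (u : Aˣ) x) +
        ε i (Ad (u : Aˣ)⁻¹ Y) * fderiv ℝ F (Ad (u : Aˣ) x) (Ad (u : Aˣ) ⁅(e i : A), x⁆)) := by
    let L : 𝔨 →ₗ[ℝ] ℂ := (fderiv ℝ F (Ad (u : Aˣ) x) ∘L Ad (u : Aˣ)).toLinearMap ∘ₗ
      (LinearMap.mulRight ℝ x - LinearMap.mulLeft ℝ x) ∘ₗ 𝔨.subtype
    have hL (Z : 𝔨) : L Z = ∑ i, (e.coord i Z : ℂ) * L (e i) := by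
      conv_lhs => rw [← e.sum_repr Z, map_sum]
      simp
    rw [Finset.sum_add_distrib, ← Finset.sum_mul, D.traceBracket_eq_sum N e, Complex.ofReal_sum]
    exact congr_arg _ (hL _)
  have hterm (i) := integral_fderiv_Ad_lie_eq_zero μ hF
    (fun s ↦ D.expUnit_mem (𝔤.smul_mem s (D.compl_le (e i).2))) (ε i) x Y
  simp only [hsum]
  rw [integral_finsetSum _ fun i _ ↦ integrable_of_continuous_of_compactSpace μ
    (continuous_fderiv_Ad_lie hF (ε i) _ x Y)]
  exact Finset.sum_eq_zero fun i _ ↦ hterm i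

theorem integral_fderiv_mul_projK (D : IsTorusDecomposition G T 𝔤 𝔱 𝔨 B) (hF : ContDiff ℝ 1 F)
    {b : 𝔱} (hb : D.weylDensity b ≠ 0) {Y : A} (hY : Y ∈ 𝔤) :
    (∫ u : G, fderiv ℝ F (Ad (u : Aˣ) (expUnit (b : A)))
      (Ad (u : Aˣ) (expUnit (b : A) * D.projK (Ad (u : Aˣ)⁻¹ Y))) ∂μ) * D.weylDensity b =
    ∫ u : G, F (Ad (u : Aˣ) (expUnit (b : A))) *
      fderiv ℝ D.weylDensity b (D.projT (Ad (u : Aˣ)⁻¹ Y)) ∂μ := by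
  obtain ⟨R, hR⟩ := D.isUnit_one_sub_AdK_neg hb
  have hAd (Z : A) : Continuous fun u : G ↦ Ad (u : Aˣ) Z :=
    continuous_Ad_coe continuous_id continuous_const
  have hAd_inv : Continuous fun u : G ↦ Ad (u : Aˣ)⁻¹ Y :=
    continuous_Ad_coe_inv continuous_id continuous_const
  have hparts := D.integral_traceBracket_add_fderiv_eq_zero μ hF (↑R⁻¹ : 𝔨 →L[ℝ] 𝔨)
    (expUnit (b : A)) Y
  simp only [D.lie_inv_apply_exp hR, map_neg, ← sub_eq_add_neg] at hparts
  rw [integral_sub, sub_eq_zero] at hparts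
  · rw [← hparts, ← integral_mul_const]
    refine integral_congr_ae (.of_forall fun u ↦ ?_)
    have hmem : Ad (u : Aˣ)⁻¹ Y ∈ 𝔤 := D.Ad_mem (inv_mem u.2) hY
    dsimp only
    rw [D.fderiv_weylDensity _ hR, D.traceBracket_projT hR hmem]
    push_cast
    ring
  · refine integrable_of_continuous_of_compactSpace μ (.mul (by fun_prop) ?_)
    exact hF.continuous.comp (hAd _)
  · refine integrable_of_continuous_of_compactSpace μ
      (((hF.continuous_fderiv one_ne_zero).comp (hAd _)).clm_apply ?_)
    exact continuous_Ad_coe continuous_id (by fun_prop)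

theorem integral_fderiv_mul_eq_add (D : IsTorusDecomposition G T 𝔤 𝔱 𝔨 B) (hF : ContDiff ℝ 1 F)
    {b : 𝔱} (hb : D.weylDensity b ≠ 0) {Y : A} (hY : Y ∈ 𝔤) :
    (∫ u : G, fderiv ℝ F (Ad (u : Aˣ) (expUnit (b : A))) (Ad (u : Aˣ) (expUnit (b : A)) * Y) ∂μ) *
      D.weylDensity b =
    ∫ u : G, (fderiv ℝ F (Ad (u : Aˣ) (expUnit (b : A)))
        (Ad (u : Aˣ) (expUnit (b : A) * D.projT (Ad (u : Aˣ)⁻¹ Y))) * D.weylDensity b +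
      F (Ad (u : Aˣ) (expUnit (b : A))) *
        fderiv ℝ D.weylDensity b (D.projT (Ad (u : Aˣ)⁻¹ Y))) ∂μ := by
  have hAd : Continuous fun u : G ↦ Ad (u : Aˣ) (expUnit (b : A)) :=
    continuous_Ad_coe continuous_id continuous_const
  have hAd_inv : Continuous fun u : G ↦ Ad (u : Aˣ)⁻¹ Y :=
    continuous_Ad_coe_inv continuous_id continuous_const
  have hint {Z : G → A} (hZ : Continuous Z) : Integrable (fun u : G ↦
      fderiv ℝ F (Ad (u : Aˣ) (expUnit (b : A))) (Ad (u : Aˣ) (expUnit (b : A) * Z u))) μ :=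
    integrable_of_continuous_of_compactSpace μ
      (((hF.continuous_fderiv one_ne_zero).comp hAd).clm_apply
        (continuous_Ad_coe continuous_id (by fun_prop)))
  have hsplit (u : G) : Ad (u : Aˣ) (expUnit (b : A)) * Y =
      Ad (u : Aˣ) (expUnit (b : A) * D.projT (Ad (u : Aˣ)⁻¹ Y)) +
        Ad (u : Aˣ) (expUnit (b : A) * D.projK (Ad (u : Aˣ)⁻¹ Y)) := by
    rw [← map_add, ← mul_add, D.projT_add_projK (D.Ad_mem (inv_mem u.2) hY), Ad_apply_mul,
      Ad_apply_Ad_inv]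
  simp only [hsplit, map_add]
  rw [integral_add (hint (by fun_prop)) (hint (by fun_prop)), add_mul,
    D.integral_fderiv_mul_projK μ hF hb hY, ← integral_mul_const, ← integral_add]
  · exact (hint (by fun_prop)).mul_const _
  · exact integrable_of_continuous_of_compactSpace μ
      (.mul (hF.continuous.comp hAd) (by fun_prop))

variable [MeasurableSpace 𝔱] [BorelSpace 𝔱] (m : Measure 𝔱) [m.IsAddHaarMeasure] {P : Set 𝔱}

/-- The infinitesimal form of the invariance of the pushforward of `μ × weylDensity • m` under
`(u, b) ↦ u * exp b * u⁻¹`. -/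
theorem setIntegral_integral_fderiv_mul_eq_zero (D : IsTorusDecomposition G T 𝔤 𝔱 𝔨 B)
    (hP : D.IsWeylDomain P) (hF : ContDiff ℝ 1 F) {Y : A} (hY : Y ∈ 𝔤) :
    ∫ b in P, (∫ u : G, fderiv ℝ F (Ad (u : Aˣ) (expUnit (b : A)))
      (Ad (u : Aˣ) (expUnit (b : A)) * Y) ∂μ) * D.weylDensity b ∂m = 0 := by
  have := secondCountableTopology_subgroup G
  have hexp : Continuous fun p : G × 𝔱 ↦ (expUnit (p.2 : A) : A) :=
    continuous_exp.comp (by fun_prop)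
  have hAd : Continuous fun p : G × 𝔱 ↦ Ad (p.1 : Aˣ) (expUnit (p.2 : A)) :=
    continuous_Ad_coe continuous_fst hexp
  have hAd_inv : Continuous fun p : G × 𝔱 ↦ Ad (p.1 : Aˣ)⁻¹ Y :=
    continuous_Ad_coe_inv continuous_fst continuous_const
  have hδ : Continuous D.weylDensity := (D.contDiff_weylDensity (n := 0)).continuous
  have hδ' : Continuous (fderiv ℝ D.weylDensity) :=
    (D.contDiff_weylDensity (n := 1)).continuous_fderiv one_ne_zero
  rw [setIntegral_congr_fun hP.isOpen.measurableSet fun b hb ↦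
    D.integral_fderiv_mul_eq_add μ hF (hP.weylDensity_ne_zero b hb) hY]
  rw [← integral_integral_swap]
  · simp only [D.setIntegral_fderiv_mul_eq_zero m hP hF, integral_zero]
  · refine integrable_prod_restrict_of_continuous μ m hP.isBounded (.add (.mul ?_ ?_) (.mul ?_ ?_))
    · exact ((hF.continuous_fderiv one_ne_zero).comp hAd).clm_apply
        (continuous_Ad_coe continuous_fst (by fun_prop))
    · fun_prop
    · exact hF.continuous.comp hAd
    · exact Complex.continuous_ofReal.comp ((hδ'.comp continuous_snd).clm_apply (by fun_prop))

end IsTorusDecomposition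

/-! ### Alcoves -/

namespace IsTorusDecomposition

variable {A : Type*} [NormedRing A] [NormedAlgebra ℝ A] [CompleteSpace A] [FiniteDimensional ℝ A]
  {G T : Subgroup Aˣ} {𝔤 𝔱 𝔨 : Submodule ℝ A} {B : LinearMap.BilinForm ℝ A}

theorem coe_bracketK (D : IsTorusDecomposition G T 𝔤 𝔱 𝔨 B) (b : 𝔱) (X : 𝔨) :
    (D.bracketK b X : A) = ⁅(b : A), (X : A)⁆ :=
  congr_arg Subtype.val
    (projAlong_left D.disjoint.symm ⟨_, D.lie_mem_compl b.2 X.2⟩)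

theorem bilin_lie_left (D : IsTorusDecomposition G T 𝔤 𝔱 𝔨 B) {X Y Z : A} (hX : X ∈ 𝔤)
    (hY : Y ∈ 𝔤) (hZ : Z ∈ 𝔤) : B ⁅X, Y⁆ Z = -B Y ⁅X, Z⁆ := by
  let C := LinearMap.toContinuousBilinearMap B
  have hAd (W : A) : HasDerivAt (fun s : ℝ ↦ Ad (expUnit (s • X)) W) ⁅X, W⁆ 0 := by
    simpa using hasDerivAt_Ad_expUnit_smul X W 0
  have hderiv := (C.hasFDerivAt.comp_hasDerivAt 0 (hAd Y)).clm_apply (hAd Z)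
  have hconst : (fun s : ℝ ↦ C (Ad (expUnit (s • X)) Y) (Ad (expUnit (s • X)) Z)) =
      fun _ ↦ B Y Z :=
    funext fun s ↦ D.invariant _ (D.expUnit_mem (𝔤.smul_mem s hX)) Y hY Z hZ
  have hzero : B ⁅X, Y⁆ Z + B Y ⁅X, Z⁆ = 0 := by
    simpa [C] using hderiv.unique (hconst ▸ hasDerivAt_const 0 (B Y Z))
  exact eq_neg_of_add_eq_zero_left hzero

theorem exists_skew_representation (D : IsTorusDecomposition G T 𝔤 𝔱 𝔨 B) :
    ∃ (n : ℕ) (φ : EuclideanSpace ℝ (Fin n) ≃ₗ[ℝ] 𝔨)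
      (M : 𝔱 →ₗ[ℝ] EuclideanSpace ℝ (Fin n) →L[ℝ] EuclideanSpace ℝ (Fin n)),
      (∀ b x, (φ (M b x) : A) = ⁅(b : A), (φ x : A)⁆) ∧
      ∀ b x y, inner ℝ (M b x) y = -inner ℝ x (M b y) := by
  obtain ⟨n, φ, hφ⟩ := exists_linearEquiv_euclideanSpace (B := B.restrict 𝔨)
    ⟨fun X Y ↦ D.isSymm.eq X Y⟩ fun X hX ↦ D.pos X (D.compl_le X.2) (by simpa using hX)
  let M : 𝔱 →ₗ[ℝ] EuclideanSpace ℝ (Fin n) →L[ℝ] EuclideanSpace ℝ (Fin n) :=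
    φ.symm.toContinuousLinearEquiv.conjContinuousAlgEquiv.toAlgEquiv.toLinearMap ∘ₗ
      D.bracketK.toLinearMap ∘ₗ 𝔱.subtype
  have hM (b : 𝔱) (x : EuclideanSpace ℝ (Fin n)) : φ (M b x) = D.bracketK b (φ x) :=
    φ.apply_symm_apply _
  have hMlie (b : 𝔱) (x : EuclideanSpace ℝ (Fin n)) : (φ (M b x) : A) = ⁅(b : A), (φ x : A)⁆ := by
    rw [hM, coe_bracketK]
  refine ⟨n, φ, M, hMlie, fun b x y ↦ ?_⟩
  have hmem (x : EuclideanSpace ℝ (Fin n)) : (φ x : A) ∈ 𝔤 := D.compl_le (φ x).2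
  rw [← hφ, ← hφ]
  change B (φ (M b x)) (φ y) = -B (φ x) (φ (M b y))
  rw [hMlie, hMlie, D.bilin_lie_left (D.torus_le b.2) (hmem x) (hmem y)]

/-- `ad b` has the eigenvalues `±i‖ad b‖`, so `Ad (exp b)` fixes a vector when the norm is a
multiple of `2π`. -/
theorem weylDensity_eq_zero_of_norm_eq (D : IsTorusDecomposition G T 𝔤 𝔱 𝔨 B) {n : ℕ}
    {φ : EuclideanSpace ℝ (Fin n) ≃ₗ[ℝ] 𝔨} {b : 𝔱}
    {L : EuclideanSpace ℝ (Fin n) →L[ℝ] EuclideanSpace ℝ (Fin n)}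
    (hL : ∀ x, (φ (L x) : A) = ⁅(b : A), (φ x : A)⁆)
    (hskew : ∀ x y, inner ℝ (L x) y = -inner ℝ x (L y)) {j : ℕ} (hj : 0 < j)
    (hnorm : ‖L‖ = j * (2 * Real.pi)) : D.weylDensity b = 0 := by
  have hpos : 0 < ‖L‖ := hnorm ▸ by positivity
  obtain ⟨x, hx, hLLx⟩ := exists_apply_apply_eq_of_skew hskew (norm_pos_iff.1 hpos)
  have hlie : ⁅(b : A), ⁅(b : A), (φ x : A)⁆⁆ = -(‖L‖ ^ 2 • (φ x : A)) := by
    rw [← hL, ← hL, hLLx]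
    simp
  have hsin : Real.sin ‖L‖ = 0 := by
    rw [hnorm, ← mul_assoc]
    exact_mod_cast Real.sin_nat_mul_pi (j * 2)
  have hfix : Ad (expUnit (b : A)) (φ x) = φ x :=
    Ad_expUnit_eq_self_of_lie_lie hpos.ne' hlie (hnorm ▸ Real.cos_nat_mul_two_pi j) hsin
  by_contra hne
  exact hx (by simpa using D.weylDensity_ne_zero_iff.1 hne _ (φ x).2 hfix)

variable {P : Set 𝔱}

theorem isBounded_of_isPreconnected (D : IsTorusDecomposition G T 𝔤 𝔱 𝔨 B)
    (hfaithful : ∀ b ∈ 𝔱, (∀ X ∈ 𝔨, Commute b X) → b = 0) (hP : IsPreconnected P)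
    (hne : ∀ b ∈ P, D.weylDensity b ≠ 0) : Bornology.IsBounded P := by
  obtain rfl | ⟨b₀, hb₀⟩ := P.eq_empty_or_nonempty
  · exact Bornology.isBounded_empty
  obtain ⟨n, φ, M, hM, hskew⟩ := D.exists_skew_representation
  have hker : LinearMap.ker M = ⊥ := LinearMap.ker_eq_bot'.2 fun b hb ↦ by
    refine Subtype.ext (hfaithful b b.2 fun X hX ↦ ?_)
    have hlie := hM b (φ.symm ⟨X, hX⟩)
    rw [hb] at hlie
    exact commute_iff_lie_eq.2 (by simpa using hlie.symm)
  obtain ⟨K, -, hK⟩ := LinearMap.exists_antilipschitzWith M hker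
  obtain ⟨j, hj⟩ := exists_nat_gt (‖M b₀‖ / (2 * Real.pi))
  have hj0 : 0 < j := by exact_mod_cast (by positivity : 0 ≤ ‖M b₀‖ / (2 * Real.pi)).trans_lt hj
  rw [div_lt_iff₀ Real.two_pi_pos] at hj
  have hlt : ∀ b ∈ P, ‖M b‖ < j * (2 * Real.pi) := by
    intro b hb
    by_contra! hge
    have hcont : Continuous fun b : 𝔱 ↦ ‖M b‖ := M.continuous_of_finiteDimensional.norm
    obtain ⟨c, hc, hnorm⟩ := hP.intermediate_value hb₀ hb hcont.continuousOn ⟨hj.le, hge⟩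
    exact hne c hc (D.weylDensity_eq_zero_of_norm_eq (hM c) (hskew c) hj0 hnorm)
  refine isBounded_iff_forall_norm_le.2 ⟨K * (j * (2 * Real.pi)), fun b hb ↦ ?_⟩
  calc ‖b‖ ≤ K * ‖M b‖ := by simpa using hK.le_mul_dist b 0
    _ ≤ K * (j * (2 * Real.pi)) := by gcongr; exact (hlt b hb).le

/-- The Weyl alcoves: the connected components of the regular set of the torus algebra. -/
def IsAlcove (D : IsTorusDecomposition G T 𝔤 𝔱 𝔨 B) (P : Set 𝔱) : Prop :=
  ∃ b₀, D.weylDensity b₀ ≠ 0 ∧ P = connectedComponentIn {b | D.weylDensity b ≠ 0} b₀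

namespace IsAlcove

variable {D : IsTorusDecomposition G T 𝔤 𝔱 𝔨 B}

theorem weylDensity_ne_zero (h : D.IsAlcove P) {b : 𝔱} (hb : b ∈ P) : D.weylDensity b ≠ 0 := by
  obtain ⟨b₀, -, rfl⟩ := h
  exact connectedComponentIn_subset _ _ hb

theorem isOpen (h : D.IsAlcove P) : IsOpen P := by
  obtain ⟨b₀, -, rfl⟩ := h
  exact (isOpen_ne_fun (D.contDiff_weylDensity (n := 0)).continuous
    continuous_const).connectedComponentIn

theorem isConnected (h : D.IsAlcove P) : IsConnected P := by
  obtain ⟨b₀, hb₀, rfl⟩ := h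
  exact isConnected_connectedComponentIn_iff.2 hb₀

theorem mem_of_mem_closure (h : D.IsAlcove P) {b : 𝔱} (hb : b ∈ closure P)
    (hne : D.weylDensity b ≠ 0) : b ∈ P := by
  have hinsert : IsPreconnected (insert b P) := h.isConnected.isPreconnected.subset_closure
    (Set.subset_insert _ _) (Set.insert_subset hb subset_closure)
  obtain ⟨b₀, hb₀, rfl⟩ := h
  exact hinsert.subset_connectedComponentIn
    (Set.mem_insert_of_mem _ (mem_connectedComponentIn hb₀))
    (Set.insert_subset hne (connectedComponentIn_subset _ _)) (Set.mem_insert _ _)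

theorem isWeylDomain (h : D.IsAlcove P) (hfaithful : ∀ b ∈ 𝔱, (∀ X ∈ 𝔨, Commute b X) → b = 0) :
    D.IsWeylDomain P where
  isOpen := h.isOpen
  isBounded := D.isBounded_of_isPreconnected hfaithful h.isConnected.isPreconnected
    fun _ ↦ h.weylDensity_ne_zero
  weylDensity_ne_zero _ := h.weylDensity_ne_zero
  weylDensity_eq_zero b hb := by
    rw [h.isOpen.frontier_eq] at hb
    exact by_contra fun hne ↦ hb.2 (h.mem_of_mem_closure hb.1 hne)

end IsAlcove

end IsTorusDecomposition

/-! ### Simply connected compact groups have trivial centre -/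

section Characters

variable {H : Type*} [Group H] [TopologicalSpace H] [IsTopologicalGroup H] [SimplyConnectedSpace H]
  [LocallyPathConnectedSpace H]

theorem exists_continuous_exp_eq (χ : H →* ℂ) (hχ : Continuous χ) :
    ∃ F : Additive H →+ ℂ, Continuous (fun u ↦ F (.ofMul u)) ∧
      ∀ u, Complex.exp (F (.ofMul u)) = χ u := by
  have hne (u : H) : χ u ≠ 0 := ((Group.isUnit u).map χ).ne_zero
  have hlift := Complex.isCoveringMapOn_exp.existsUnique_continuousMap_lifts
    (⟨χ, hχ⟩ : C(H, ℂ)) (a₀ := 1) (e₀ := 0) (by simp) hne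
  obtain ⟨F, hF1, hF⟩ := hlift.exists
  have hexp (u : H) : Complex.exp (F u) = χ u := congr_fun hF u
  -- Both `F` and `v ↦ F (u * v) - F u` lift `χ` and vanish at `1`.
  have hadd (u v : H) : F (u * v) = F u + F v := by
    have hshift : F = ⟨fun v ↦ F (u * v) - F u, by fun_prop⟩ :=
      hlift.unique ⟨hF1, hF⟩ ⟨by simp, funext fun w ↦ by
        simp [Complex.exp_sub, hexp, mul_div_cancel_left₀ _ (hne u)]⟩
    exact eq_add_of_sub_eq' (DFunLike.congr_fun hshift v).symm
  exact ⟨AddMonoidHom.mk' (fun u ↦ F u.toMul) fun u v ↦ hadd _ _, F.continuous, hexp⟩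

theorem apply_eq_one_of_continuous [CompactSpace H] (χ : H →* ℂ) (hχ : Continuous χ) (u : H) :
    χ u = 1 := by
  obtain ⟨F, hF, hexp⟩ := exists_continuous_exp_eq χ hχ
  obtain ⟨C, hC⟩ := isCompact_univ.exists_bound_of_continuousOn hF.continuousOn
  have hzero : F (.ofMul u) = 0 := by
    by_contra hne
    obtain ⟨n, hn⟩ := exists_nat_gt (C / ‖F (.ofMul u)‖)
    rw [div_lt_iff₀ (norm_pos_iff.2 hne)] at hn
    have hle := hC (u ^ n) trivial
    rw [ofMul_pow, map_nsmul, nsmul_eq_mul, norm_mul, Complex.norm_natCast] at hle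
    exact hle.not_gt hn
  rw [← hexp, hzero, Complex.exp_zero]

end Characters

section BoundedExponential

variable {A : Type*} [NormedRing A] [NormedAlgebra ℝ A] [CompleteSpace A] {Z : A} {C : ℝ}

theorem exp_smul_mul_eq_of_mul_mul_eq_zero {w : A} (hw : Z * (Z * w) = 0) (s : ℝ) :
    NormedSpace.exp (s • Z) * w = w + s • (Z * w) := by
  have hsum := (NormedSpace.exp_series_hasSum_exp' (𝕂 := ℝ) (s • Z)).mul_right w
  have hfin : HasSum (fun n ↦ ((n.factorial : ℝ)⁻¹ • (s • Z) ^ n) * w) _ :=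
    hasSum_sum_of_ne_finset_zero (s := Finset.range 2) fun n hn ↦ by
      obtain ⟨k, rfl⟩ := Nat.exists_eq_add_of_le' (not_lt.1 (mt Finset.mem_range.2 hn))
      simp [smul_pow, pow_add, pow_two, mul_assoc, hw]
  simpa [Finset.sum_range_succ] using hsum.unique hfin

theorem mul_eq_zero_of_norm_exp_smul_le (hC : ∀ s : ℝ, ‖NormedSpace.exp (s • Z)‖ ≤ C) {w : A}
    (hw : Z * (Z * w) = 0) : Z * w = 0 := by
  by_contra hne
  obtain ⟨n, hn⟩ := exists_nat_gt ((C * ‖w‖ + ‖w‖) / ‖Z * w‖)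
  rw [div_lt_iff₀ (norm_pos_iff.2 hne)] at hn
  refine hn.not_ge ?_
  calc n * ‖Z * w‖ = ‖NormedSpace.exp ((n : ℝ) • Z) * w - w‖ := by
        rw [exp_smul_mul_eq_of_mul_mul_eq_zero hw, add_sub_cancel_left, norm_smul,
          Real.norm_natCast]
    _ ≤ ‖NormedSpace.exp ((n : ℝ) • Z)‖ * ‖w‖ + ‖w‖ :=
        (norm_sub_le _ _).trans (by gcongr; exact norm_mul_le _ _)
    _ ≤ C * ‖w‖ + ‖w‖ := by gcongr; exact hC n

theorem eq_zero_of_isNilpotent_of_norm_exp_smul_le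
    (hC : ∀ s : ℝ, ‖NormedSpace.exp (s • Z)‖ ≤ C) (hZ : IsNilpotent Z) : Z = 0 := by
  obtain ⟨n, hn⟩ := hZ
  induction n with
  | zero => exact eq_zero_of_zero_eq_one (by simpa using hn.symm) Z
  | succ n ih =>
    cases n with
    | zero => simpa using hn
    | succ n =>
      rw [pow_succ', pow_succ'] at hn
      exact ih (by rw [pow_succ']; exact mul_eq_zero_of_norm_exp_smul_le hC hn)

end BoundedExponential

theorem isNilpotent_of_forall_hasEigenvalue {K W : Type*} [Field K] [IsAlgClosed K]
    [AddCommGroup W] [Module K W] [FiniteDimensional K W] {f : Module.End K W}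
    (hf : ∀ l, f.HasEigenvalue l → l = 0) : IsNilpotent f := by
  have hbot (l : K) (hl : l ≠ 0) : f.maxGenEigenspace l = ⊥ :=
    not_not.1 fun hne ↦ hl (hf l (Module.End.HasUnifEigenvalue.lt zero_lt_one hne))
  have htop : f.maxGenEigenspace 0 = ⊤ := by
    rw [← f.iSup_maxGenEigenspace_eq_top]
    refine le_antisymm (le_iSup f.maxGenEigenspace 0) (iSup_le fun l ↦ ?_)
    obtain rfl | hl := eq_or_ne l 0
    · exact le_rfl
    · simp [hbot l hl]
  refine ((LinearMap.charpoly_nilpotent_tfae f).out 0 2).2 fun w ↦ ?_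
  simpa using Module.End.mem_maxGenEigenspace f 0 w |>.1 (htop ▸ Submodule.mem_top)

section Centre

variable {W : Type*} [NormedAddCommGroup W] [NormedSpace ℂ W] [FiniteDimensional ℂ W]

theorem exp_apply_eq_of_apply_eq_smul {L : W →L[ℂ] W} {l : ℂ} {v : W} (hv : L v = l • v) :
    NormedSpace.exp L v = Complex.exp l • v := by
  have hpow (n : ℕ) : (L ^ n) v = l ^ n • v := by
    induction n with
    | zero => simp
    | succ n ih => rw [pow_succ, mul_apply_eq_comp, hv, map_smul, ih, smul_smul, pow_succ']
  have hL := (ContinuousLinearMap.apply ℂ W v).hasSum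
    (NormedSpace.exp_series_hasSum_exp' (𝕂 := ℂ) L)
  have hl := (NormedSpace.exp_series_hasSum_exp' (𝕂 := ℂ) l).smul_const v
  rw [Complex.exp_eq_exp_ℂ]
  refine hL.unique ?_
  convert hl using 2 with n
  simp [hpow, smul_smul]

theorem eq_zero_of_forall_exp_mul_eq_one {l : ℂ} (h : ∀ s : ℝ, Complex.exp (s * l) = 1) :
    l = 0 := by
  have hderiv : HasDerivAt (fun s : ℝ ↦ Complex.exp (s * l)) l 0 := by
    simpa using ((Complex.ofRealCLM.hasDerivAt (x := 0)).mul_const l).cexp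
  exact hderiv.unique ((funext h : (fun s : ℝ ↦ _) = _) ▸ hasDerivAt_const _ _)

variable {H : Type*} [Group H] [TopologicalSpace H]

theorem exists_continuous_det_eigenspace {R : H →* (W →L[ℂ] W)} (hR : Continuous R)
    {L : W →L[ℂ] W} (hL : ∀ u, Commute (R u) L) (l : ℂ) :
    ∃ χ : H →* ℂ, Continuous χ ∧ ∀ u (a : ℂ), (∀ v, L v = l • v → R u v = a • v) →
      χ u = a ^ Module.finrank ℂ (Module.End.eigenspace (L : W →ₗ[ℂ] W) l) := by
  let V := Module.End.eigenspace (L : W →ₗ[ℂ] W) l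
  have hV (v : W) : v ∈ V ↔ L v = l • v := Module.End.mem_eigenspace_iff
  have hmem (u : H) (v : V) : R u v ∈ V := by
    rw [hV, ← mul_apply_eq_comp, ← (hL u).eq, mul_apply_eq_comp, (hV v).1 v.2, map_smul]
  obtain ⟨π, hπ⟩ : ∃ π : W →L[ℂ] V, ∀ v : V, π v = v :=
    Submodule.ClosedComplemented.of_finiteDimensional V
  let S (u : H) : V →L[ℂ] V := π ∘L R u ∘L V.subtypeL
  have hS (u : H) (v : V) : (S u v : W) = R u v := congr_arg Subtype.val (hπ ⟨_, hmem u v⟩)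
  have hScont : Continuous S := continuous_const.clm_comp (hR.clm_comp continuous_const)
  let S' : H →* Module.End ℂ V :=
    { toFun u := S u
      map_one' := by ext v; simp [hS]
      map_mul' u v := by ext w; simp [hS] }
  refine ⟨LinearMap.det.comp S', ContinuousLinearMap.continuous_det.comp hScont, fun u a ha ↦ ?_⟩
  have hscalar : S' u = a • (1 : Module.End ℂ V) :=
    LinearMap.ext fun v ↦ Subtype.ext ((hS u v).trans (ha v ((hV v).1 v.2)))
  rw [MonoidHom.comp_apply, hscalar, LinearMap.det_smul, map_one, mul_one]

variable {A : Type*} [NormedRing A] [NormedAlgebra ℝ A] [CompleteSpace A] [FiniteDimensional ℝ A]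
  {G : Subgroup Aˣ} [CompactSpace G] [SimplyConnectedSpace G] [LocallyPathConnectedSpace G] {Z : A}

/-- The determinant on the eigenspace of `Z` is a character, hence trivial, and it takes the value
`exp (s * l) ^ d` at `exp (s • Z)`. -/
theorem eq_zero_of_hasEigenvalue (ρ : A →ₐ[ℝ] (W →L[ℂ] W)) (hZ : ∀ s : ℝ, expUnit (s • Z) ∈ G)
    (hcomm : ∀ u ∈ G, Commute (u : A) Z) {l : ℂ}
    (hl : Module.End.HasEigenvalue (ρ Z : W →ₗ[ℂ] W) l) : l = 0 := by
  have hρ : Continuous ρ := ρ.toLinearMap.continuous_of_finiteDimensional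
  let R : G →* (W →L[ℂ] W) := (ρ : A →* (W →L[ℂ] W)).comp ((Units.coeHom A).comp G.subtype)
  obtain ⟨χ, hχ, hχeq⟩ := exists_continuous_det_eigenspace (R := R)
    (hρ.comp (Units.continuous_val.comp continuous_subtype_val))
    (fun u ↦ (hcomm u u.2).map ρ) l
  set d := Module.finrank ℂ (Module.End.eigenspace (ρ Z : W →ₗ[ℂ] W) l)
  have hd : d ≠ 0 := (Module.finrank_pos_iff.2 (Submodule.nontrivial_iff_ne_bot.2 hl)).ne'
  have hexp (s : ℝ) : Complex.exp (s * (d * l)) = 1 := by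
    have happly (v : W) (hv : ρ Z v = l • v) :
        R ⟨expUnit (s • Z), hZ s⟩ v = Complex.exp (s * l) • v := by
      let _ : NormedAlgebra ℚ A := .restrictScalars ℚ ℝ A
      let _ : NormedAlgebra ℚ (W →L[ℂ] W) := .restrictScalars ℚ ℂ (W →L[ℂ] W)
      have hmap : ρ (NormedSpace.exp (s • Z)) = NormedSpace.exp (ρ (s • Z)) :=
        NormedSpace.map_exp ρ hρ _
      refine (congr_arg (· v) hmap).trans (exp_apply_eq_of_apply_eq_smul ?_)
      rw [map_smul, mul_smul, ← hv]
      rfl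
    rw [mul_left_comm, Complex.exp_nat_mul, ← hχeq _ _ happly, apply_eq_one_of_continuous χ hχ]
  exact (mul_eq_zero.1 (eq_zero_of_forall_exp_mul_eq_one hexp)).resolve_left (mod_cast hd)

theorem eq_zero_of_forall_commute {ρ : A →ₐ[ℝ] (W →L[ℂ] W)} (hρ : Function.Injective ρ)
    (hZ : ∀ s : ℝ, expUnit (s • Z) ∈ G) (hcomm : ∀ u ∈ G, Commute (u : A) Z) : Z = 0 := by
  have hcont : Continuous fun u : G ↦ ((u : Aˣ) : A) :=
    Units.continuous_val.comp continuous_subtype_val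
  obtain ⟨C, hC⟩ := isCompact_univ.exists_bound_of_continuousOn hcont.continuousOn
  have hnil : IsNilpotent (ρ Z : W →ₗ[ℂ] W) :=
    isNilpotent_of_forall_hasEigenvalue fun _ hl ↦ eq_zero_of_hasEigenvalue ρ hZ hcomm hl
  refine eq_zero_of_isNilpotent_of_norm_exp_smul_le (fun s ↦ hC ⟨_, hZ s⟩ trivial) ?_
  have hinj : Function.Injective fun X ↦ (ρ X : W →ₗ[ℂ] W) :=
    ContinuousLinearMap.coe_injective.comp hρ
  obtain ⟨n, hn⟩ := hnil
  refine ⟨n, hinj ?_⟩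
  simpa using hn

end Centre

/-- The complexified left regular representation. -/
theorem exists_injective_algHom_clm (A : Type*) [Ring A] [Algebra ℝ A] [FiniteDimensional ℝ A] :
    ∃ (n : ℕ) (ρ : A →ₐ[ℝ] (EuclideanSpace ℂ (Fin n) →L[ℂ] EuclideanSpace ℂ (Fin n))),
      Function.Injective ρ := by
  let Φ := (Matrix.toEuclideanCLM (n := Fin (Module.finrank ℝ A)) (𝕜 := ℂ)).toAlgEquiv
  refine ⟨Module.finrank ℝ A, (Φ.toAlgHom.restrictScalars ℝ).comp <|
    (Algebra.ofId ℝ ℂ).mapMatrix.comp (Algebra.leftMulMatrix (Module.finBasis ℝ A)), ?_⟩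
  exact Φ.injective.comp <| (Matrix.map_injective (algebraMap ℝ ℂ).injective).comp <|
    Algebra.leftMulMatrix_injective _

theorem IsLieAlgebraOf.eq_zero_of_forall_commute {A : Type*} [NormedRing A] [NormedAlgebra ℝ A]
    [CompleteSpace A] [FiniteDimensional ℝ A] {G : Subgroup Aˣ} [SimplyConnectedSpace G]
    {𝔤 : Submodule ℝ A} (h𝔤 : IsLieAlgebraOf 𝔤 G) (hG : IsCompact (G : Set Aˣ)) {Z : A}
    (hZ : Z ∈ 𝔤) (hcomm : ∀ X ∈ 𝔤, Commute Z X) : Z = 0 := by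
  obtain ⟨n, ρ, hρ⟩ := exists_injective_algHom_clm A
  have : CompactSpace G := isCompact_iff_compactSpace.1 hG
  have := h𝔤.locallyPathConnectedSpace hG.isClosed
  have hconn : IsConnected (G : Set Aˣ) := isConnected_iff_connectedSpace.2 inferInstance
  refine WeylAlcove.eq_zero_of_forall_commute hρ ((h𝔤 Z).1 hZ) fun u hu ↦ ?_
  have hle := h𝔤.le_of_expUnit_mem hG.isClosed hconn
    (K := Subgroup.centralizer (Set.range fun s : ℝ ↦ expUnit (s • Z))) fun X hX ↦ ?_
  · refine (commute_of_forall_exp_smul fun s ↦ ?_).symm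
    exact congr_arg Units.val (Subgroup.mem_centralizer_iff.1 (hle hu) _ ⟨s, rfl⟩)
  · refine Subgroup.mem_centralizer_iff.2 ?_
    rintro _ ⟨s, rfl⟩
    exact Units.ext (((hcomm X hX).smul_left s).exp_left.exp_right).eq

/-! ### From infinitesimal invariance to Haar measure -/

theorem eq_measure_univ_smul_of_isMulRightInvariant {G : Type*} [Group G] [TopologicalSpace G]
    [IsTopologicalGroup G] [CompactSpace G] [MeasurableSpace G] [BorelSpace G] (μ : Measure G)
    [μ.IsHaarMeasure] [IsProbabilityMeasure μ] (ν : Measure G) [IsFiniteMeasure ν]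
    [ν.IsMulRightInvariant] : ν = ν Set.univ • μ := by
  have := isMulRightInvariant_of_isProbabilityMeasure μ
  have : μ.inv.IsHaarMeasure := {}
  have hinv : ν.inv = ν.inv.haarScalarFactor μ.inv • μ.inv :=
    Measure.isMulInvariant_eq_smul_of_compactSpace _ _
  have hsmul : ν = ν.inv.haarScalarFactor μ.inv • μ := by
    ext s -
    simpa [Measure.inv_apply] using congr_arg (· s⁻¹) hinv
  have huniv := congr_arg (· Set.univ) hsmul
  simp only [Measure.smul_apply, measure_univ, ENNReal.smul_def, smul_eq_mul, mul_one] at huniv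
  rwa [huniv]

section Separation

variable {A : Type*} [NormedRing A] [NormedAlgebra ℝ A] [FiniteDimensional ℝ A]
  {G : Subgroup Aˣ} [CompactSpace G] [MeasurableSpace G] [BorelSpace G]

theorem eq_of_forall_integral_contDiff_eq {ν₁ ν₂ : Measure G} [IsFiniteMeasure ν₁]
    [IsFiniteMeasure ν₂]
    (h : ∀ F : A → ℂ, ContDiff ℝ 1 F → ∫ u : G, F (u : Aˣ) ∂ν₁ = ∫ u : G, F (u : Aˣ) ∂ν₂) :
    ν₁ = ν₂ := by
  let _ : MeasurableSpace A := borel A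
  have : BorelSpace A := ⟨rfl⟩
  have := FiniteDimensional.proper ℝ A
  have hval : Continuous fun u : G ↦ ((u : Aˣ) : A) :=
    Units.continuous_val.comp continuous_subtype_val
  have hemb : MeasurableEmbedding fun u : G ↦ ((u : Aˣ) : A) :=
    (hval.isClosedEmbedding fun _ _ huv ↦ Subtype.ext (Units.ext huv)).measurableEmbedding
  have hmap : ν₁.map (fun u : G ↦ ((u : Aˣ) : A)) = ν₂.map (fun u : G ↦ ((u : Aˣ) : A)) := by
    refine Measure.ext_of_charFunDual (funext fun L ↦ ?_)
    rw [charFunDual_apply, charFunDual_apply, hemb.integral_map, hemb.integral_map]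
    have hL : ContDiff ℝ 1 fun X ↦ (L X : ℂ) := Complex.ofRealCLM.contDiff.comp L.contDiff
    exact h _ (hL.mul contDiff_const).cexp
  rw [← hemb.comap_map ν₁, hmap, hemb.comap_map]

end Separation

theorem continuous_fderiv_coe_mul {A : Type*} [NormedRing A] [NormedAlgebra ℝ A]
    {G : Subgroup Aˣ} {F : A → ℂ} (hF : ContDiff ℝ 1 F) (Y : A) :
    Continuous fun u : G ↦ fderiv ℝ F (u : Aˣ) ((u : Aˣ) * Y) := by
  have := hF.continuous_fderiv one_ne_zero
  fun_prop

section Invariance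

variable {A : Type*} [NormedRing A] [NormedAlgebra ℝ A] [CompleteSpace A] {G : Subgroup Aˣ}
  [CompactSpace G] [MeasurableSpace G] [BorelSpace G] {ν : Measure G} [IsFiniteMeasure ν]
  {F : A → ℂ} {Y : A}

theorem hasDerivAt_integral_mul_expUnit_smul (hF : ContDiff ℝ 1 F)
    (hexp : ∀ s : ℝ, expUnit (s • Y) ∈ G) (s : ℝ) :
    HasDerivAt (fun s : ℝ ↦ ∫ u : G, F ((u : Aˣ) * expUnit (s • Y)) ∂ν)
      (∫ u : G, fderiv ℝ F ((u : Aˣ) * expUnit (s • Y)) ((u : Aˣ) * expUnit (s • Y) * Y) ∂ν) s := by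
  obtain ⟨C, hC⟩ := (isCompact_range
    (continuous_fderiv_coe_mul (G := G) hF Y)).isBounded.exists_norm_le
  have hmul (s : ℝ) : Continuous fun u : G ↦ u * ⟨expUnit (s • Y), hexp s⟩ :=
    continuous_mul_const _
  have hFG : Continuous fun u : G ↦ F (u : Aˣ) :=
    hF.continuous.comp (Units.continuous_val.comp continuous_subtype_val)
  refine (hasDerivAt_integral_of_dominated_loc_of_deriv_le (μ := ν)
    (F := fun (s : ℝ) (u : G) ↦ F ((u : Aˣ) * expUnit (s • Y)))
    (F' := fun (s : ℝ) (u : G) ↦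
      fderiv ℝ F ((u : Aˣ) * expUnit (s • Y)) ((u : Aˣ) * expUnit (s • Y) * Y))
    (bound := fun _ ↦ C) univ_mem ?_ ?_ ?_ ?_ (integrable_const _) ?_).2
  · exact .of_forall fun s ↦ (hFG.comp (hmul s)).aestronglyMeasurable
  · exact integrable_of_continuous_of_compactSpace ν (hFG.comp (hmul s))
  · exact ((continuous_fderiv_coe_mul hF Y).comp (hmul s)).aestronglyMeasurable
  · exact .of_forall fun u s _ ↦ hC _ ⟨u * ⟨_, hexp s⟩, rfl⟩
  · refine .of_forall fun u s _ ↦ ?_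
    have hexp' := (hasDerivAt_exp_smul_const Y s).const_mul ((u : Aˣ) : A)
    rw [← mul_assoc] at hexp'
    exact ((hF.differentiable one_ne_zero).differentiableAt.hasFDerivAt).comp_hasDerivAt s hexp'

theorem integral_mul_expUnit_eq_self (hexp : ∀ s : ℝ, expUnit (s • Y) ∈ G)
    (hν : ∀ F : A → ℂ, ContDiff ℝ 1 F → ∫ u : G, fderiv ℝ F (u : Aˣ) ((u : Aˣ) * Y) ∂ν = 0)
    (hF : ContDiff ℝ 1 F) :
    ∫ u : G, F ((u : Aˣ) * expUnit Y) ∂ν = ∫ u : G, F (u : Aˣ) ∂ν := by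
  have hderiv (s : ℝ) : ∫ u : G, fderiv ℝ F ((u : Aˣ) * expUnit (s • Y))
      ((u : Aˣ) * expUnit (s • Y) * Y) ∂ν = 0 := by
    let R : A →L[ℝ] A := (ContinuousLinearMap.mul ℝ A).flip (expUnit (s • Y))
    have hcomm : Commute (expUnit (s • Y) : A) Y := ((Commute.refl Y).smul_left s).exp_left
    rw [← hν _ (hF.comp R.contDiff)]
    refine integral_congr_ae (.of_forall fun u ↦ ?_)
    have hfderiv := fderiv_comp ((u : Aˣ) : A)
      (hF.differentiable one_ne_zero).differentiableAt R.differentiableAt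
    dsimp only
    rw [hfderiv, R.fderiv, ContinuousLinearMap.comp_apply]
    simp only [R, ContinuousLinearMap.flip_apply, ContinuousLinearMap.mul_apply', mul_assoc,
      hcomm.eq]
  have hconst := is_const_of_deriv_eq_zero
    (fun s ↦ (hasDerivAt_integral_mul_expUnit_smul (ν := ν) hF hexp s).differentiableAt)
    (fun s ↦ (hasDerivAt_integral_mul_expUnit_smul hF hexp s).deriv.trans (hderiv s)) 1 0
  simpa only [one_smul, zero_smul, expUnit_zero, Units.val_one, mul_one] using hconst

theorem map_mul_expUnit_eq_self [FiniteDimensional ℝ A] (hexp : ∀ s : ℝ, expUnit (s • Y) ∈ G)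
    (hν : ∀ F : A → ℂ, ContDiff ℝ 1 F → ∫ u : G, fderiv ℝ F (u : Aˣ) ((u : Aˣ) * Y) ∂ν = 0)
    (hY : expUnit Y ∈ G) : ν.map (· * ⟨expUnit Y, hY⟩) = ν := by
  refine eq_of_forall_integral_contDiff_eq fun F hF ↦ ?_
  have hFG : Continuous fun u : G ↦ F (u : Aˣ) :=
    hF.continuous.comp (Units.continuous_val.comp continuous_subtype_val)
  rw [integral_map (by fun_prop) hFG.aestronglyMeasurable]
  exact integral_mul_expUnit_eq_self hexp hν hF

end Invariance

/-- The elements whose right translation preserves `ν`. -/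
def rightStabilizer {G : Type*} [Group G] [MeasurableSpace G] [MeasurableMul G] (ν : Measure G) :
    Subgroup G where
  carrier := {v | ν.map (· * v) = ν}
  one_mem' := by simp
  mul_mem' {v w} hv hw := by
    have hcomp : (fun u ↦ u * (v * w)) = (· * w) ∘ (· * v) := funext fun u ↦ (mul_assoc u v w).symm
    change ν.map _ = ν
    rw [hcomp, ← Measure.map_map (measurable_mul_const w) (measurable_mul_const v),
      hv.out, hw.out]
  inv_mem' {v} hv := by
    change ν.map (· * v⁻¹) = ν
    nth_rw 1 [← hv.out]
    rw [Measure.map_map (measurable_mul_const v⁻¹) (measurable_mul_const v)]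
    simp [Function.comp_def]

theorem IsLieAlgebraOf.isMulRightInvariant {A : Type*} [NormedRing A] [NormedAlgebra ℝ A]
    [CompleteSpace A] [FiniteDimensional ℝ A] {G : Subgroup Aˣ} [CompactSpace G]
    [MeasurableSpace G] [BorelSpace G] {𝔤 : Submodule ℝ A} (h𝔤 : IsLieAlgebraOf 𝔤 G)
    (hconn : IsConnected (G : Set Aˣ)) {ν : Measure G} [IsFiniteMeasure ν]
    (hν : ∀ Y ∈ 𝔤, ∀ F : A → ℂ, ContDiff ℝ 1 F →
      ∫ u : G, fderiv ℝ F (u : Aˣ) ((u : Aˣ) * Y) ∂ν = 0) : ν.IsMulRightInvariant := by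
  have hle : G ≤ (rightStabilizer ν).map G.subtype :=
    h𝔤.le_of_expUnit_mem (isCompact_iff_compactSpace.2 ‹_›).isClosed hconn fun Y hY ↦
      ⟨_, map_mul_expUnit_eq_self ((h𝔤 Y).1 hY) (hν Y hY) (h𝔤.expUnit_mem hY), rfl⟩
  refine ⟨fun v ↦ ?_⟩
  obtain ⟨w, hw, hwv⟩ := hle v.2
  exact Subtype.ext hwv ▸ hw

/-! ### The Weyl integration formula -/

namespace IsTorusDecomposition

section Measures

variable {A : Type*} [NormedRing A] [NormedAlgebra ℝ A] [CompleteSpace A]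
  {G T : Subgroup Aˣ} {𝔤 𝔱 𝔨 : Submodule ℝ A} {B : LinearMap.BilinForm ℝ A}

/-- The exponential map of the torus algebra, with values in `G`. -/
noncomputable def expTorus (D : IsTorusDecomposition G T 𝔤 𝔱 𝔨 B) (b : 𝔱) : G :=
  ⟨expUnit (b : A), D.expUnit_mem (D.torus_le b.2)⟩

theorem continuous_expTorus (D : IsTorusDecomposition G T 𝔤 𝔱 𝔨 B) : Continuous D.expTorus :=
  (continuous_expUnit.comp continuous_subtype_val).subtype_mk _

theorem continuous_conj_expTorus (D : IsTorusDecomposition G T 𝔤 𝔱 𝔨 B) :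
    Continuous fun p : G × 𝔱 ↦ p.1 * D.expTorus p.2 * p.1⁻¹ := by
  have := D.continuous_expTorus
  fun_prop

variable [FiniteDimensional ℝ A] [MeasurableSpace 𝔱] (m : Measure 𝔱) {P : Set 𝔱}

/-- The measure with density `weylDensity` on a subset `P` of the torus algebra. -/
noncomputable def densityMeasure (D : IsTorusDecomposition G T 𝔤 𝔱 𝔨 B) (P : Set 𝔱) : Measure 𝔱 :=
  (m.restrict P).withDensity fun b ↦ ENNReal.ofReal (D.weylDensity b)

/-- The total Weyl density of `P`, the inverse of the constant in the integration formula. -/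
noncomputable def weylMass (D : IsTorusDecomposition G T 𝔤 𝔱 𝔨 B) (P : Set 𝔱) : ℝ :=
  ∫ b in P, D.weylDensity b ∂m

/-- The pushforward of the Weyl density on `P`, averaged over `G`, under the conjugation map
`(u, b) ↦ u * exp b * u⁻¹`. -/
noncomputable def weylMeasure (D : IsTorusDecomposition G T 𝔤 𝔱 𝔨 B) [MeasurableSpace G]
    (μ : Measure G) (P : Set 𝔱) : Measure G :=
  (μ.prod (D.densityMeasure m P)).map fun p ↦ p.1 * D.expTorus p.2 * p.1⁻¹

variable [BorelSpace 𝔱] [IsFiniteMeasureOnCompacts m]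

theorem integrableOn_weylDensity (D : IsTorusDecomposition G T 𝔤 𝔱 𝔨 B)
    (hP : Bornology.IsBounded P) : IntegrableOn D.weylDensity P m :=
  ((D.contDiff_weylDensity (n := 0)).continuous.continuousOn.integrableOn_compact
    hP.isCompact_closure).mono_set subset_closure

theorem isFiniteMeasure_densityMeasure (D : IsTorusDecomposition G T 𝔤 𝔱 𝔨 B)
    (hP : Bornology.IsBounded P) : IsFiniteMeasure (D.densityMeasure m P) :=
  isFiniteMeasure_withDensity_ofReal (D.integrableOn_weylDensity m hP).2

theorem densityMeasure_univ (D : IsTorusDecomposition G T 𝔤 𝔱 𝔨 B)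
    (hP : Bornology.IsBounded P) :
    D.densityMeasure m P Set.univ = ENNReal.ofReal (D.weylMass m P) := by
  rw [densityMeasure, withDensity_apply _ .univ, Measure.restrict_univ, weylMass,
    ofReal_integral_eq_lintegral_ofReal (D.integrableOn_weylDensity m hP)
      (.of_forall D.weylDensity_nonneg)]

end Measures

variable {A : Type*} [NormedRing A] [NormedAlgebra ℝ A] [CompleteSpace A] [FiniteDimensional ℝ A]
  {G T : Subgroup Aˣ} {𝔤 𝔱 𝔨 : Submodule ℝ A} {B : LinearMap.BilinForm ℝ A}

section WeylMeasure

variable [MeasurableSpace 𝔱] [BorelSpace 𝔱] (m : Measure 𝔱) {P : Set 𝔱}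

theorem integral_densityMeasure (D : IsTorusDecomposition G T 𝔤 𝔱 𝔨 B) (f : 𝔱 → ℂ) :
    ∫ b, f b ∂(D.densityMeasure m P) = ∫ b in P, f b * D.weylDensity b ∂m := by
  have hmeas : Measurable fun b ↦ ENNReal.ofReal (D.weylDensity b) :=
    (D.contDiff_weylDensity (n := 0)).continuous.measurable.ennreal_ofReal
  rw [densityMeasure, integral_withDensity_eq_integral_toReal_smul hmeas
    (.of_forall fun _ ↦ ENNReal.ofReal_lt_top)]
  simp only [ENNReal.toReal_ofReal (D.weylDensity_nonneg _), Complex.real_smul, mul_comm]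

variable [CompactSpace G] [MeasurableSpace G] [BorelSpace G] (μ : Measure G)

theorem integral_weylMeasure [IsFiniteMeasureOnCompacts m] [IsFiniteMeasure μ]
    (D : IsTorusDecomposition G T 𝔤 𝔱 𝔨 B) (hP : Bornology.IsBounded P) {f : G → ℂ}
    (hf : Continuous f) :
    ∫ v, f v ∂(D.weylMeasure m μ P) =
      ∫ b in P, (∫ u : G, f (u * D.expTorus b * u⁻¹) ∂μ) * D.weylDensity b ∂m := by
  have := secondCountableTopology_subgroup G
  have := D.isFiniteMeasure_densityMeasure m hP
  have hconj := D.continuous_conj_expTorus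
  obtain ⟨C, hC⟩ := (isCompact_range hf).isBounded.exists_norm_le
  rw [weylMeasure, integral_map hconj.measurable.aemeasurable hf.aestronglyMeasurable,
    ← integral_densityMeasure, integral_prod_symm]
  exact .of_bound (hf.comp hconj).aestronglyMeasurable C (.of_forall fun p ↦ hC _ ⟨_, rfl⟩)

theorem weylMeasure_compl_conj_closure [IsFiniteMeasureOnCompacts m]
    (D : IsTorusDecomposition G T 𝔤 𝔱 𝔨 B) (hP : D.IsWeylDomain P) :
    D.weylMeasure m μ P
      ((fun p : G × 𝔱 ↦ p.1 * D.expTorus p.2 * p.1⁻¹) '' (Set.univ ×ˢ closure P))ᶜ = 0 := by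
  have := secondCountableTopology_subgroup G
  have := D.isFiniteMeasure_densityMeasure m hP.isBounded
  have hκ := D.continuous_conj_expTorus
  have hmem : ∀ᵐ b ∂D.densityMeasure m P, b ∈ P :=
    (withDensity_absolutelyContinuous _ _).ae_le (ae_restrict_mem hP.isOpen.measurableSet)
  refine (ae_map_iff hκ.aemeasurable ((isCompact_univ.prod
    hP.isBounded.isCompact_closure).image hκ).measurableSet).2 ?_
  filter_upwards [Measure.quasiMeasurePreserving_snd.ae hmem] with p hp
  exact ⟨p, ⟨trivial, subset_closure hp⟩, rfl⟩

end WeylMeasure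

section WeylFormula

variable [MeasurableSpace 𝔱] [BorelSpace 𝔱] (m : Measure 𝔱) [m.IsAddHaarMeasure] {P : Set 𝔱}

theorem weylMass_pos (D : IsTorusDecomposition G T 𝔤 𝔱 𝔨 B) (hP : D.IsWeylDomain P)
    (hne : P.Nonempty) : 0 < D.weylMass m P := by
  have hsupp : Function.support D.weylDensity ∩ P = P :=
    Set.inter_eq_right.2 hP.weylDensity_ne_zero
  rw [weylMass, setIntegral_pos_iff_support_of_nonneg_ae (.of_forall D.weylDensity_nonneg)
    (D.integrableOn_weylDensity m hP.isBounded), hsupp]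
  exact hP.isOpen.measure_pos m hne

variable [CompactSpace G] [MeasurableSpace G] [BorelSpace G] (μ : Measure G) [μ.IsHaarMeasure]
  [IsProbabilityMeasure μ]

theorem weylMeasure_eq_smul (D : IsTorusDecomposition G T 𝔤 𝔱 𝔨 B) (hP : D.IsWeylDomain P) :
    D.weylMeasure m μ P = ENNReal.ofReal (D.weylMass m P) • μ := by
  have := secondCountableTopology_subgroup G
  have := D.isFiniteMeasure_densityMeasure m hP.isBounded
  have hconj : Measurable fun p : G × 𝔱 ↦ p.1 * D.expTorus p.2 * p.1⁻¹ :=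
    D.continuous_conj_expTorus.measurable
  have : IsFiniteMeasure (D.weylMeasure m μ P) := Measure.isFiniteMeasure_map _ _
  have : (D.weylMeasure m μ P).IsMulRightInvariant := by
    refine D.isLieAlgebraOf.isMulRightInvariant D.isConnected fun Y hY F hF ↦ ?_
    rw [D.integral_weylMeasure m μ hP.isBounded (continuous_fderiv_coe_mul hF Y)]
    exact D.setIntegral_integral_fderiv_mul_eq_zero μ m hP hF hY
  rw [eq_measure_univ_smul_of_isMulRightInvariant μ (D.weylMeasure m μ P)]
  congr 1
  rw [weylMeasure, Measure.map_apply hconj .univ, Set.preimage_univ, ← Set.univ_prod_univ,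
    Measure.prod_prod, measure_univ, one_mul, D.densityMeasure_univ m hP.isBounded]

theorem setIntegral_mul_weylDensity_eq (D : IsTorusDecomposition G T 𝔤 𝔱 𝔨 B)
    (hP : D.IsWeylDomain P) {f : G → ℂ} (hf : Continuous f)
    (hconj : ∀ g h : G, f (h * g * h⁻¹) = f g) :
    ∫ b in P, f (D.expTorus b) * D.weylDensity b ∂m = D.weylMass m P * ∫ u, f u ∂μ := by
  have hmass : 0 ≤ D.weylMass m P := integral_nonneg D.weylDensity_nonneg
  calc ∫ b in P, f (D.expTorus b) * D.weylDensity b ∂m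
      = ∫ v, f v ∂(D.weylMeasure m μ P) := by
        simp [D.integral_weylMeasure m μ hP.isBounded hf, hconj]
    _ = D.weylMass m P * ∫ u, f u ∂μ := by
        rw [D.weylMeasure_eq_smul m μ hP, integral_smul_measure, ENNReal.toReal_ofReal hmass,
          Complex.real_smul]

end WeylFormula

/-- Otherwise the complement of the conjugates of `exp (closure P)` would be a nonempty open set of
measure zero for `weylMeasure`, which is a multiple of the Haar measure. -/
theorem exists_mem_closure_conj_eq [CompactSpace G] {P : Set 𝔱}
    (D : IsTorusDecomposition G T 𝔤 𝔱 𝔨 B) (hP : D.IsWeylDomain P) (hne : P.Nonempty) (v : G) :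
    ∃ u : G, ∃ b ∈ closure P, u * D.expTorus b * u⁻¹ = v := by
  let _ : MeasurableSpace G := borel G
  have : BorelSpace G := ⟨rfl⟩
  let _ : MeasurableSpace 𝔱 := borel 𝔱
  have : BorelSpace 𝔱 := ⟨rfl⟩
  let μ : Measure G := Measure.haarMeasure ⊤
  have : IsProbabilityMeasure μ := ⟨Measure.haarMeasure_self⟩
  set C := (fun p : G × 𝔱 ↦ p.1 * D.expTorus p.2 * p.1⁻¹) '' (Set.univ ×ˢ closure P)
  have hclosed : IsClosed C := ((isCompact_univ.prod hP.isBounded.isCompact_closure).image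
    D.continuous_conj_expTorus).isClosed
  have hmass := D.weylMass_pos Measure.addHaar hP hne
  have hnull : μ Cᶜ = 0 := by
    have hsmul := D.weylMeasure_compl_conj_closure Measure.addHaar μ hP
    rw [D.weylMeasure_eq_smul Measure.addHaar μ hP, Measure.smul_apply, smul_eq_mul] at hsmul
    exact (mul_eq_zero.1 hsmul).resolve_left (by simpa using hmass)
  have huniv : C = Set.univ :=
    Set.compl_empty_iff.1 ((hclosed.isOpen_compl.measure_eq_zero_iff μ).1 hnull)
  obtain ⟨⟨u, b⟩, ⟨-, hb⟩, hub⟩ : v ∈ C := huniv ▸ Set.mem_univ v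
  exact ⟨u, b, hb, hub⟩

end IsTorusDecomposition

/-! ### Independence of the alcove -/

section Isometry

theorem abs_det_eq_one {V : Type*} [AddCommGroup V] [Module ℝ V] [FiniteDimensional ℝ V]
    {B : LinearMap.BilinForm ℝ V} (hB : B.Nondegenerate) {f : V →ₗ[ℝ] V}
    (hf : ∀ x y, B (f x) (f y) = B x y) : |LinearMap.det f| = 1 := by
  classical
  let e := Module.finBasis ℝ V
  have hgram := (LinearMap.BilinForm.nondegenerate_iff_det_ne_zero e).1 hB
  have hcomp : B.comp f f = B := LinearMap.ext₂ hf
  have hdet := congr_arg Matrix.det (LinearMap.BilinForm.toMatrix_comp e e B f f)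
  rw [hcomp, Matrix.det_mul, Matrix.det_mul, Matrix.det_transpose, LinearMap.det_toMatrix] at hdet
  have hsq : LinearMap.det f * LinearMap.det f = 1 := mul_right_cancel₀ hgram (by linarith)
  rcases mul_self_eq_one_iff.1 hsq with h | h <;> simp [h]

variable {V : Type*} [NormedAddCommGroup V] [NormedSpace ℝ V] [FiniteDimensional ℝ V]
  [MeasurableSpace V] [BorelSpace V] {B : LinearMap.BilinForm ℝ V}

theorem measurePreserving_of_bilin_map_eq (m : Measure V) [m.IsAddHaarMeasure]
    (hB : B.Nondegenerate) {f : V →ₗ[ℝ] V} (hf : ∀ x y, B (f x) (f y) = B x y) :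
    MeasurePreserving f m m := by
  have habs := abs_det_eq_one hB hf
  have hdet : LinearMap.det f ≠ 0 := fun h ↦ by simp [h] at habs
  refine ⟨f.continuous_of_finiteDimensional.measurable, ?_⟩
  rw [Measure.map_linearMap_addHaar_eq_smul_addHaar m hdet, abs_inv, habs]
  simp

theorem addHaar_eq_of_orthonormal {ι ι' : Type*} [Fintype ι] [Fintype ι'] [DecidableEq ι]
    [DecidableEq ι'] (hB : B.Nondegenerate) (e : Module.Basis ι ℝ V) (e' : Module.Basis ι' ℝ V)
    (he : ∀ i j, B (e i) (e j) = if i = j then 1 else 0)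
    (he' : ∀ i j, B (e' i) (e' j) = if i = j then 1 else 0) : e.addHaar = e'.addHaar := by
  let f : V ≃L[ℝ] V := (e.equiv e' (e.indexEquiv e')).toContinuousLinearEquiv
  have hf : B.comp f.toLinearMap f.toLinearMap = B := LinearMap.BilinForm.ext_basis e fun i j ↦ by
    simp [f, he, he']
  have hmap : e.map f.toLinearEquiv = e'.reindex (e.indexEquiv e').symm := by
    ext i
    simp [f]
  rw [← (measurePreserving_of_bilin_map_eq e.addHaar hB (LinearMap.ext_iff₂.1 hf)).map_eq]
  rw [← Module.Basis.addHaar_reindex e' (e.indexEquiv e').symm, ← hmap]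
  exact e.map_addHaar f

end Isometry

section Restriction

variable {A : Type*} [NormedRing A] [NormedAlgebra ℝ A] [FiniteDimensional ℝ A]
  {𝔰 : Submodule ℝ A} {u : Aˣ}

/-- The action of `Ad u` on a subspace that it maps into itself. -/
noncomputable def AdRestrict (h : ∀ X ∈ 𝔰, Ad u X ∈ 𝔰) : 𝔰 ≃ₗ[ℝ] 𝔰 :=
  LinearEquiv.ofInjectiveEndo ((Ad u).toLinearMap.restrict h) fun X Y hXY ↦ by
    have hAd : Ad u (X : A) = Ad u (Y : A) := congr_arg Subtype.val hXY
    exact Subtype.ext <| by rw [← Ad_inv_apply_Ad u (X : A), hAd, Ad_inv_apply_Ad]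

theorem coe_AdRestrict (h : ∀ X ∈ 𝔰, Ad u X ∈ 𝔰) (X : 𝔰) : (AdRestrict h X : A) = Ad u X := rfl

/-- The affine transformation `x ↦ Ad u x + (c - Ad u b)`. On a torus algebra it is an element of
the affine Weyl group when `exp c = u * exp b * u⁻¹`. -/
noncomputable def affineAd (hu : ∀ X ∈ 𝔰, Ad u X ∈ 𝔰) (b c : 𝔰) : 𝔰 ≃ₜ 𝔰 :=
  (AdRestrict hu).toContinuousLinearEquiv.toHomeomorph.trans
    (Homeomorph.addRight (c - AdRestrict hu b))

theorem affineAd_apply (hu : ∀ X ∈ 𝔰, Ad u X ∈ 𝔰) (b c x : 𝔰) :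
    affineAd hu b c x = AdRestrict hu x + (c - AdRestrict hu b) := rfl

theorem affineAd_apply_self (hu : ∀ X ∈ 𝔰, Ad u X ∈ 𝔰) (b c : 𝔰) : affineAd hu b c b = c := by
  rw [affineAd_apply, add_sub_cancel]

end Restriction

namespace IsTorusDecomposition

variable {A : Type*} [NormedRing A] [NormedAlgebra ℝ A] [CompleteSpace A] [FiniteDimensional ℝ A]
  {G T : Subgroup Aˣ} {𝔤 𝔱 𝔨 : Submodule ℝ A} {B : LinearMap.BilinForm ℝ A} {b c : 𝔱} {u : Aˣ}

theorem weylDensity_eq_of_conj (D : IsTorusDecomposition G T 𝔤 𝔱 𝔨 B)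
    (hu : ∀ X ∈ 𝔨, Ad u X ∈ 𝔨) (h : expUnit (c : A) = u * expUnit (b : A) * u⁻¹) :
    D.weylDensity c = D.weylDensity b := by
  let E := AdRestrict hu
  have hAdK (X : 𝔨) : D.AdK c (E X) = E (D.AdK b X) := by
    ext
    rw [coe_AdK, coe_AdRestrict, coe_AdRestrict, coe_AdK, h, Ad_mul_apply, Ad_mul_apply,
      Ad_inv_apply_Ad]
  have hconj : (1 - D.AdK c).toLinearMap = E ∘ₗ (1 - D.AdK b).toLinearMap ∘ₗ E.symm := by
    refine LinearMap.ext fun X ↦ ?_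
    obtain ⟨Y, rfl⟩ := E.surjective X
    simp [hAdK]
  rw [weylDensity, ContinuousLinearMap.det, hconj, LinearMap.det_conj]
  rfl

theorem expUnit_affineAd (D : IsTorusDecomposition G T 𝔤 𝔱 𝔨 B) (hu : ∀ X ∈ 𝔱, Ad u X ∈ 𝔱)
    (h : expUnit (c : A) = u * expUnit (b : A) * u⁻¹) (x : 𝔱) :
    expUnit (affineAd hu b c x : A) = u * expUnit (x : A) * u⁻¹ := by
  have hadd (X Y : 𝔱) : expUnit ((X + Y : 𝔱) : A) = expUnit (X : A) * expUnit (Y : A) :=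
    expUnit_add (D.commute X.2 Y.2)
  have hAd (X : 𝔱) : expUnit (AdRestrict hu X : A) = u * expUnit (X : A) * u⁻¹ := expUnit_Ad u X
  have htranslation : expUnit ((c - AdRestrict hu b : 𝔱) : A) = 1 := by
    have hc := hadd (c - AdRestrict hu b) (AdRestrict hu b)
    rwa [sub_add_cancel, h, hAd, eq_comm, mul_eq_right] at hc
  rw [affineAd_apply, hadd, hAd, htranslation, mul_one]

variable [MeasurableSpace 𝔱] [BorelSpace 𝔱] (m : Measure 𝔱) [m.IsAddHaarMeasure]

theorem measurePreserving_affineAd (D : IsTorusDecomposition G T 𝔤 𝔱 𝔨 B) (huG : u ∈ G)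
    (hu : ∀ X ∈ 𝔱, Ad u X ∈ 𝔱) : MeasurePreserving (affineAd hu b c) m m :=
  (measurePreserving_add_right m _).comp <| measurePreserving_of_bilin_map_eq m
    D.nondegenerate_restrict_torus (f := (AdRestrict hu).toLinearMap) fun X Y ↦
      D.invariant u huG X (D.torus_le X.2) Y (D.torus_le Y.2)

variable {P P' : Set 𝔱}

theorem weylMass_eq_of_conj (D : IsTorusDecomposition G T 𝔤 𝔱 𝔨 B) (hP : D.IsAlcove P)
    (hP' : D.IsAlcove P') (huG : u ∈ G) (hu : MulAut.conj u • T = T) (hb : b ∈ P) (hc : c ∈ P')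
    (h : expUnit (c : A) = u * expUnit (b : A) * u⁻¹) : D.weylMass m P' = D.weylMass m P := by
  let θ := affineAd (fun X hX ↦ D.Ad_mem_torus_of_conj_eq hu hX) b c
  have hdensity (x : 𝔱) : D.weylDensity (θ x) = D.weylDensity x :=
    D.weylDensity_eq_of_conj (fun X hX ↦ D.Ad_mem_compl_of_conj_eq huG hu hX)
      (D.expUnit_affineAd _ h x)
  have hreg : θ '' {x | D.weylDensity x ≠ 0} = {x | D.weylDensity x ≠ 0} := by
    rw [θ.image_eq_preimage_symm]
    ext x
    simp [← hdensity (θ.symm x)]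
  have hbreg : b ∈ {x | D.weylDensity x ≠ 0} := hP.weylDensity_ne_zero hb
  have himage : θ '' P = P' := by
    obtain ⟨b₀, -, rfl⟩ := hP
    obtain ⟨c₀, -, rfl⟩ := hP'
    rw [connectedComponentIn_eq hb, connectedComponentIn_eq hc,
      θ.image_connectedComponentIn hbreg, hreg]
    exact congr_arg _ (affineAd_apply_self _ b c)
  rw [weylMass, ← himage, (D.measurePreserving_affineAd m huG _).setIntegral_image_emb
    θ.measurableEmbedding]
  exact setIntegral_congr_fun hP.isOpen.measurableSet fun x _ ↦ hdensity x

theorem weylMass_eq [CompactSpace G] (D : IsTorusDecomposition G T 𝔤 𝔱 𝔨 B)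
    (hfaithful : ∀ b ∈ 𝔱, (∀ X ∈ 𝔨, Commute b X) → b = 0) (hP : D.IsAlcove P)
    (hP' : D.IsAlcove P') : D.weylMass m P' = D.weylMass m P := by
  obtain ⟨c, hc⟩ := hP'.isConnected.nonempty
  obtain ⟨u, b, hb, h⟩ := D.exists_mem_closure_conj_eq (hP.isWeylDomain hfaithful)
    hP.isConnected.nonempty (D.expTorus c)
  have hconj : expUnit (c : A) = u * expUnit (b : A) * (u : Aˣ)⁻¹ := congr_arg Subtype.val h.symm
  have hcreg := D.weylDensity_ne_zero_iff.1 (hP'.weylDensity_ne_zero hc)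
  have hu : MulAut.conj (u : Aˣ) • T = T := by
    refine D.eq_of_isMaximalTorus_of_expUnit_mem c.2 hcreg (D.isMaximalTorus.conj u.2) ?_
    rw [hconj]
    exact Subgroup.smul_mem_pointwise_smul _ (MulAut.conj (u : Aˣ)) T (D.expUnit_mem_torus b.2)
  have hbreg : D.weylDensity b ≠ 0 := by
    rw [← D.weylDensity_eq_of_conj (fun X hX ↦ D.Ad_mem_compl_of_conj_eq u.2 hu hX) hconj]
    exact hP'.weylDensity_ne_zero hc
  exact D.weylMass_eq_of_conj m hP hP' u.2 hu (hP.mem_of_mem_closure hb hbreg) hc hconj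

theorem exists_forall_integral_eq [CompactSpace G] [MeasurableSpace G] [BorelSpace G]
    (μ : Measure G) [μ.IsHaarMeasure] [IsProbabilityMeasure μ]
    (D : IsTorusDecomposition G T 𝔤 𝔱 𝔨 B)
    (hfaithful : ∀ b ∈ 𝔱, (∀ X ∈ 𝔨, Commute b X) → b = 0) :
    ∃ κ : ℝ, 0 < κ ∧ ∀ P, D.IsAlcove P → ∀ f : G → ℂ, Continuous f →
      (∀ g h : G, f (h * g * h⁻¹) = f g) →
      ∫ u, f u ∂μ = κ * ∫ b in P, f (D.expTorus b) * D.weylDensity b ∂m := by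
  by_cases hex : ∃ P₀, D.IsAlcove P₀
  · obtain ⟨P₀, hP₀⟩ := hex
    have hmass := D.weylMass_pos m (hP₀.isWeylDomain hfaithful) hP₀.isConnected.nonempty
    refine ⟨(D.weylMass m P₀)⁻¹, inv_pos.2 hmass, fun P hP f hf hconj ↦ ?_⟩
    rw [D.setIntegral_mul_weylDensity_eq m μ (hP.isWeylDomain hfaithful) hf hconj,
      D.weylMass_eq m hfaithful hP₀ hP, ← mul_assoc, ← Complex.ofReal_mul,
      inv_mul_cancel₀ hmass.ne', Complex.ofReal_one, one_mul]
  · exact ⟨1, one_pos, fun P hP ↦ absurd ⟨P, hP⟩ hex⟩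

end IsTorusDecomposition

/-! ### The formula in orthonormal coordinates -/

section ExponentialSeries

theorem hasSum_exp {R : Type*} [NormedRing R] [NormedAlgebra ℝ R] [CompleteSpace R] (x : R) :
    HasSum (fun n : ℕ ↦ (n.factorial : ℝ)⁻¹ • x ^ n) (NormedSpace.exp x) := by
  let _ := NormedAlgebra.restrictScalars ℚ ℝ R
  exact NormedSpace.exp_series_hasSum_exp' (𝕂 := ℝ) x

theorem exp_apply_eq_of_pow_apply_eq {R S : Type*} [NormedRing R] [NormedAlgebra ℝ R]
    [CompleteSpace R] [NormedRing S] [NormedAlgebra ℝ S] [CompleteSpace S] {f : R →L[ℝ] S} {x : R}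
    (h : ∀ n : ℕ, f (x ^ n) = f x ^ n) : NormedSpace.exp (f x) = f (NormedSpace.exp x) := by
  refine (hasSum_exp (f x)).unique ?_
  simpa [h] using f.hasSum (hasSum_exp x)

variable {A : Type*} [NormedRing A] [NormedAlgebra ℝ A] [CompleteSpace A]

/-- Left and right multiplications commute, so `exp (ad b)` is the product of their exponentials. -/
theorem exp_mul_sub_mul_flip_apply (b X : A) :
    NormedSpace.exp (ContinuousLinearMap.mul ℝ A b - (ContinuousLinearMap.mul ℝ A).flip b) X =
      Ad (expUnit b) X := by
  have hleft (n : ℕ) :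
      ContinuousLinearMap.mul ℝ A (b ^ n) = ContinuousLinearMap.mul ℝ A b ^ n := by
    induction n with
    | zero => ext x; simp
    | succ n ih => ext x; simp [pow_succ, ← ih, mul_assoc]
  have hright (n : ℕ) : (ContinuousLinearMap.mul ℝ A).flip ((-b) ^ n) =
      (ContinuousLinearMap.mul ℝ A).flip (-b) ^ n := by
    induction n with
    | zero => ext x; simp
    | succ n ih => ext x; rw [pow_succ (_ : A →L[ℝ] A), ← ih, pow_succ']; simp [mul_assoc]
  have hcomm : Commute (ContinuousLinearMap.mul ℝ A b)
      ((ContinuousLinearMap.mul ℝ A).flip (-b)) := by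
    ext x
    simp [mul_assoc]
  rw [sub_eq_add_neg, ← map_neg, exp_add_of_commute hcomm, exp_apply_eq_of_pow_apply_eq hleft,
    exp_apply_eq_of_pow_apply_eq hright]
  simp [mul_assoc]

theorem eq_Ad_expUnit_of_hasSum {𝔰 : Submodule ℝ A} {b Y : A} {ad : Module.End ℝ 𝔰}
    (had : ∀ X : 𝔰, (ad X : A) = b * X - X * b) {X : 𝔰}
    (hY : HasSum (fun n : ℕ ↦ (n.factorial : ℝ)⁻¹ • ((ad ^ n) X : A)) Y) :
    Y = Ad (expUnit b) X := by
  let L := ContinuousLinearMap.mul ℝ A b - (ContinuousLinearMap.mul ℝ A).flip b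
  have hpow (n : ℕ) : ((ad ^ n) X : A) = (L ^ n) X := by
    induction n with
    | zero => simp
    | succ n ih => rw [pow_succ', pow_succ', Module.End.mul_apply, had, ih]; simp [L]
  rw [← exp_mul_sub_mul_flip_apply]
  refine hY.unique ?_
  simpa [hpow] using (ContinuousLinearMap.apply ℝ A (X : A)).hasSum (hasSum_exp L)

end ExponentialSeries

section Coordinates

theorem exists_bilinForm_eq_on {V : Type*} [AddCommGroup V] [Module ℝ V] {p : Submodule ℝ V}
    {ip : V → V → ℝ} (hsymm : ∀ x ∈ p, ∀ y ∈ p, ip x y = ip y x)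
    (hadd : ∀ x ∈ p, ∀ y ∈ p, ∀ z ∈ p, ip (x + y) z = ip x z + ip y z)
    (hsmul : ∀ c : ℝ, ∀ x ∈ p, ∀ y ∈ p, ip (c • x) y = c * ip x y) :
    ∃ B : LinearMap.BilinForm ℝ V, B.IsSymm ∧ ∀ x ∈ p, ∀ y ∈ p, B x y = ip x y := by
  obtain ⟨π, hπ⟩ := p.subtype.exists_leftInverse_of_injective p.ker_subtype
  let C : LinearMap.BilinForm ℝ p := LinearMap.mk₂ ℝ (fun x y ↦ ip x y)
    (fun x y z ↦ hadd x x.2 y y.2 z z.2) (fun c x y ↦ hsmul c x x.2 y y.2)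
    (fun x y z ↦ by
      rw [hsymm x x.2 _ (y + z).2, Submodule.coe_add, hadd y y.2 z z.2 x x.2,
        hsymm y y.2 x x.2, hsymm z z.2 x x.2])
    (fun c x y ↦ by
      rw [hsymm x x.2 _ (c • y).2, Submodule.coe_smul, hsmul c y y.2 x x.2, hsymm y y.2 x x.2]
      rfl)
  refine ⟨C.comp π π, ⟨fun x y ↦ hsymm _ (π x).2 _ (π y).2⟩, fun x hx y hy ↦ ?_⟩
  have hπx : π x = ⟨x, hx⟩ := LinearMap.congr_fun hπ ⟨x, hx⟩
  have hπy : π y = ⟨y, hy⟩ := LinearMap.congr_fun hπ ⟨y, hy⟩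
  rw [LinearMap.BilinForm.comp_apply, hπx, hπy]
  rfl

variable {V : Type*} [NormedAddCommGroup V] [NormedSpace ℝ V] [FiniteDimensional ℝ V]
  [MeasurableSpace V] [BorelSpace V]

theorem exists_forall_orthonormal_addHaar_eq {B : LinearMap.BilinForm ℝ V} (hsymm : B.IsSymm)
    (hpos : ∀ x, x ≠ 0 → 0 < B x x) :
    ∃ m : Measure V, m.IsAddHaarMeasure ∧ ∀ (d : ℕ) (e : Module.Basis (Fin d) ℝ V),
      (∀ i j, B (e i) (e j) = if i = j then 1 else 0) → e.addHaar = m := by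
  obtain ⟨n, φ, hφ⟩ := exists_linearEquiv_euclideanSpace hsymm hpos
  have hB : B.Nondegenerate := hsymm.isRefl.nondegenerate_iff_separatingLeft.2
    fun x hx ↦ by_contra fun hne ↦ (hpos x hne).ne' (hx x)
  let e₀ := (EuclideanSpace.basisFun (Fin n) ℝ).toBasis.map φ
  refine ⟨e₀.addHaar, inferInstance, fun d e he ↦ addHaar_eq_of_orthonormal hB e e₀ he ?_⟩
  intro i j
  rw [Module.Basis.map_apply, Module.Basis.map_apply, hφ]
  simpa using orthonormal_iff_ite.1 (EuclideanSpace.basisFun (Fin n) ℝ).orthonormal i j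

theorem setIntegral_addHaar_eq {ι : Type*} [Fintype ι] (e : Module.Basis ι ℝ V) (P : Set V)
    (F : V → ℂ) :
    ∫ b in P, F b ∂e.addHaar =
      ∫ x in {x : ι → ℝ | ∑ i, x i • e i ∈ P}, F (∑ i, x i • e i) := by
  let φ : (ι → ℝ) ≃L[ℝ] V := e.equivFunL.symm
  have hφ_apply (x : ι → ℝ) : φ x = ∑ i, x i • e i := e.equivFun_symm_apply x
  have hbasis : (Pi.basisFun ℝ ι).map φ.toLinearEquiv = e := by
    classical
    ext i
    simp [hφ_apply, Pi.single_apply]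
  have hφ : MeasurePreserving φ volume e.addHaar := by
    refine ⟨φ.continuous.measurable, ?_⟩
    rw [← addHaarMeasure_eq_volume_pi, ← Module.Basis.parallelepiped_basisFun,
      ← Module.Basis.addHaar_def, Module.Basis.map_addHaar, hbasis]
  simp only [← hφ_apply]
  exact (hφ.setIntegral_preimage_emb φ.toHomeomorph.measurableEmbedding F P).symm

end Coordinates

section Encoding

variable {A : Type*} [NormedRing A] {G S : Subgroup Aˣ}

theorem isMaximalTorus_iff :
    IsMaximalTorus G S ↔ S ≤ G ∧ IsCompact (S : Set Aˣ) ∧ IsConnected (S : Set Aˣ) ∧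
      (∀ x ∈ S, ∀ y ∈ S, x * y = y * x) ∧
      ∀ S' : Subgroup Aˣ, S' ≤ G → IsCompact (S' : Set Aˣ) → IsConnected (S' : Set Aˣ) →
        (∀ x ∈ S', ∀ y ∈ S', x * y = y * x) → S ≤ S' → S = S' := by
  constructor
  · exact fun h ↦ ⟨h.prop.le, h.prop.isCompact, h.prop.isConnected, h.prop.commute,
      fun S' hle hcpt hconn hcomm hSS' ↦ h.eq_of_le ⟨hle, hcpt, hconn, hcomm⟩ hSS'⟩
  · rintro ⟨hle, hcpt, hconn, hcomm, hmax⟩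
    exact ⟨⟨hle, hcpt, hconn, hcomm⟩, fun S' hS' hSS' ↦
      (hmax S' hS'.le hS'.isCompact hS'.isConnected hS'.commute hSS').ge⟩

variable [NormedAlgebra ℝ A] [CompleteSpace A]

theorem exists_mem_val_eq_exp_and_iff {p : Aˣ → Prop} {b : A} :
    (∃ u : Aˣ, u ∈ S ∧ (u : A) = NormedSpace.exp b ∧ p u) ↔ expUnit b ∈ S ∧ p (expUnit b) := by
  constructor
  · rintro ⟨u, huS, hu, hpu⟩
    obtain rfl : u = expUnit b := Units.ext hu
    exact ⟨huS, hpu⟩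
  · exact fun h ↦ ⟨_, h.1, val_expUnit b, h.2⟩

theorem exists_mem_val_eq_exp_iff {b : A} :
    (∃ u ∈ S, (u : A) = NormedSpace.exp b) ↔ expUnit b ∈ S := by
  simpa using exists_mem_val_eq_exp_and_iff (S := S) (p := fun _ ↦ True) (b := b)

theorem isLieAlgebraOf_iff_coe_eq {𝔰 : Submodule ℝ A} :
    IsLieAlgebraOf 𝔰 S ↔
      (𝔰 : Set A) = {X | ∀ s : ℝ, ∃ u ∈ S, (u : A) = NormedSpace.exp (s • X)} := by
  simp only [exists_mem_val_eq_exp_iff]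
  exact Set.ext_iff.symm

end Encoding

theorem IsTorusDecomposition.of_coe_eq {A : Type*} [NormedRing A] [NormedAlgebra ℝ A]
    [CompleteSpace A] {G T : Subgroup Aˣ} [CompactSpace G] [ConnectedSpace G]
    {𝔤 𝔱 𝔨 : Submodule ℝ A} {B : LinearMap.BilinForm ℝ A} {ip : A → A → ℝ}
    (hT : IsMaximalTorus G T)
    (h𝔤 : (𝔤 : Set A) = {X | ∀ s : ℝ, ∃ u ∈ G, (u : A) = NormedSpace.exp (s • X)})
    (h𝔱 : (𝔱 : Set A) = {X | X ∈ 𝔤 ∧ ∀ s : ℝ, ∃ u ∈ T, (u : A) = NormedSpace.exp (s • X)})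
    (hB : B.IsSymm) (hBip : ∀ X ∈ 𝔤, ∀ Y ∈ 𝔤, B X Y = ip X Y)
    (hpos : ∀ X ∈ 𝔤, X ≠ 0 → 0 < ip X X)
    (hAd : ∀ u ∈ G, ∀ X ∈ 𝔤, ∀ Y ∈ 𝔤, ip (u * X * (u⁻¹ : Aˣ)) (u * Y * (u⁻¹ : Aˣ)) = ip X Y)
    (h𝔨 : (𝔨 : Set A) = {X | X ∈ 𝔤 ∧ ∀ Y ∈ 𝔱, ip X Y = 0}) :
    IsTorusDecomposition G T 𝔤 𝔱 𝔨 B := by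
  simp only [exists_mem_val_eq_exp_iff] at h𝔱
  have hG : IsLieAlgebraOf 𝔤 G := isLieAlgebraOf_iff_coe_eq.2 h𝔤
  have htorus : IsLieAlgebraOf 𝔱 T := fun X ↦ (Set.ext_iff.1 h𝔱 X).trans <|
    and_iff_right_of_imp fun hX ↦ (hG X).2 fun s ↦ hT.prop.le (hX s)
  have hle : 𝔱 ≤ 𝔤 := fun X hX ↦ ((Set.ext_iff.1 h𝔱 X).1 hX).1
  refine ⟨isCompact_iff_compactSpace.2 ‹_›, isConnected_iff_connectedSpace.2 ‹_›, hT, hG, htorus,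
    hB, fun X hX ↦ (hBip X hX X hX).symm ▸ hpos X hX, ?_, fun X ↦ ?_⟩
  · intro u hu X hX Y hY
    have hmem {Z : A} (hZ : Z ∈ 𝔤) : Ad u Z ∈ 𝔤 :=
      hG.Ad_mem (fun _ hx ↦ G.mul_mem (G.mul_mem hu hx) (G.inv_mem hu)) hZ
    rw [hBip _ (hmem hX) _ (hmem hY), hBip X hX Y hY]
    exact hAd u hu X hX Y hY
  · refine (Set.ext_iff.1 h𝔨 X).trans <| and_congr_right fun hX ↦ ?_
    exact forall₂_congr fun Y hY ↦ by rw [hBip X hX Y (hle hY)]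

namespace IsTorusDecomposition

variable {A : Type*} [NormedRing A] [NormedAlgebra ℝ A] [CompleteSpace A] [FiniteDimensional ℝ A]
  {G T : Subgroup Aˣ} {𝔤 𝔱 𝔨 : Submodule ℝ A} {B : LinearMap.BilinForm ℝ A}

theorem setOf_regular_eq (D : IsTorusDecomposition G T 𝔤 𝔱 𝔨 B) :
    {b : 𝔱 | ∃ u : Aˣ, u ∈ G ∧ (u : A) = NormedSpace.exp (b : A) ∧
      ∃! S, IsMaximalTorus G S ∧ u ∈ S} = {b | D.weylDensity b ≠ 0} := by
  ext b
  simp only [Set.mem_ofPred_eq]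
  rw [exists_mem_val_eq_exp_and_iff, D.existsUnique_isMaximalTorus_iff b.2,
    D.weylDensity_ne_zero_iff, and_iff_right (D.expUnit_mem (D.torus_le b.2))]

theorem det_one_sub_eq_weylDensity (D : IsTorusDecomposition G T 𝔤 𝔱 𝔨 B) (b : 𝔱)
    {ad expAd : Module.End ℝ 𝔨} (had : ∀ X : 𝔨, (ad X : A) = b * X - X * b)
    (hexp : ∀ X : 𝔨, HasSum (fun n : ℕ ↦ (n.factorial : ℝ)⁻¹ • ((ad ^ n) X : A)) (expAd X)) :
    LinearMap.det (1 - expAd) = D.weylDensity b := by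
  have hAdK : 1 - expAd = (1 - D.AdK b).toLinearMap := by
    ext X
    simp [eq_Ad_expUnit_of_hasSum had (hexp X), D.coe_AdK]
  rw [hAdK]
  rfl

theorem eq_zero_of_forall_commute_compl (D : IsTorusDecomposition G T 𝔤 𝔱 𝔨 B)
    (hcentre : ∀ X ∈ 𝔤, (∀ Y ∈ 𝔤, Commute X Y) → X = 0) {b : A} (hb : b ∈ 𝔱)
    (hcomm : ∀ X ∈ 𝔨, Commute b X) : b = 0 := by
  refine hcentre b (D.torus_le hb) fun Y hY ↦ ?_
  obtain ⟨τ, hτ, hκ⟩ := D.exists_sub_mem_compl hY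
  simpa using (hcomm _ hκ).add_right (D.commute hb hτ)

theorem exists_forall_integral_eq_coordinates [CompactSpace G] [MeasurableSpace G] [BorelSpace G]
    (μ : Measure G) [μ.IsHaarMeasure] [IsProbabilityMeasure μ]
    (D : IsTorusDecomposition G T 𝔤 𝔱 𝔨 B)
    (hcentre : ∀ X ∈ 𝔤, (∀ Y ∈ 𝔤, Commute X Y) → X = 0) :
    ∃ c : ℝ, 0 < c ∧ ∀ P, D.IsAlcove P → ∀ f : G → ℂ, Continuous f →
      (∀ g h : G, f (h * g * h⁻¹) = f g) →
      ∀ (d : ℕ) (e : Module.Basis (Fin d) ℝ 𝔱), (∀ i j, B (e i) (e j) = if i = j then 1 else 0) →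
      ∫ u, f u ∂μ = c * ∫ x in {x : Fin d → ℝ | ∑ i, x i • e i ∈ P},
        f (D.expTorus (∑ i, x i • e i)) * D.weylDensity (∑ i, x i • e i) := by
  let _ : MeasurableSpace 𝔱 := borel 𝔱
  have : BorelSpace 𝔱 := ⟨rfl⟩
  obtain ⟨m, hm, hcoord⟩ := exists_forall_orthonormal_addHaar_eq (B := B.restrict 𝔱)
    ⟨fun X Y ↦ D.isSymm.eq X Y⟩ fun X hX ↦ D.pos X (D.torus_le X.2) (by simpa using hX)
  obtain ⟨c, hc, hformula⟩ := D.exists_forall_integral_eq m μ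
    fun b hb hcomm ↦ D.eq_zero_of_forall_commute_compl hcentre hb hcomm
  refine ⟨c, hc, fun P hP f hf hconj d e he ↦ ?_⟩
  rw [hformula P hP f hf hconj, ← hcoord d e he, setIntegral_addHaar_eq]

end IsTorusDecomposition

theorem eq_zero_of_forall_commute_of_simplyConnectedSpace {A : Type*} [NormedRing A]
    [NormedAlgebra ℝ A] [FiniteDimensional ℝ A] {G : Subgroup Aˣ} [CompactSpace G]
    [SimplyConnectedSpace G] {𝔤 : Submodule ℝ A}
    (h𝔤 : (𝔤 : Set A) = {X | ∀ s : ℝ, ∃ u ∈ G, (u : A) = NormedSpace.exp (s • X)}) :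
    ∀ X ∈ 𝔤, (∀ Y ∈ 𝔤, Commute X Y) → X = 0 := by
  have : CompleteSpace A := FiniteDimensional.complete ℝ A
  exact fun X hX hcomm ↦ (isLieAlgebraOf_iff_coe_eq.2 h𝔤).eq_zero_of_forall_commute
    (isCompact_iff_compactSpace.2 ‹_›) hX hcomm

end WeylAlcove

open WeylAlcove in
theorem stmt_0_general {A : Type*} [NormedRing A] [NormedAlgebra ℝ A] [FiniteDimensional ℝ A]
    (G : Subgroup Aˣ) [CompactSpace G] [ConnectedSpace G] [MeasurableSpace G] [BorelSpace G]
    (μ : Measure G) [μ.IsHaarMeasure] [IsProbabilityMeasure μ]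
    (IsMaxTorus : Subgroup Aˣ → Prop)
    (hIsMaxTorus : ∀ S : Subgroup Aˣ, IsMaxTorus S ↔
      S ≤ G ∧ IsCompact (S : Set Aˣ) ∧ IsConnected (S : Set Aˣ) ∧
        (∀ x ∈ S, ∀ y ∈ S, x * y = y * x) ∧
        ∀ S' : Subgroup Aˣ, S' ≤ G → IsCompact (S' : Set Aˣ) → IsConnected (S' : Set Aˣ) →
          (∀ x ∈ S', ∀ y ∈ S', x * y = y * x) → S ≤ S' → S = S')
    (T : Subgroup Aˣ) (hT : IsMaxTorus T) (𝔤 𝔱 𝔨 : Submodule ℝ A)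
    (h𝔤 : (𝔤 : Set A) = {X | ∀ s : ℝ, ∃ u ∈ G, (u : A) = NormedSpace.exp (s • X)})
    (hcentre : ∀ X ∈ 𝔤, (∀ Y ∈ 𝔤, Commute X Y) → X = 0)
    (h𝔱 : (𝔱 : Set A) = {X | X ∈ 𝔤 ∧ ∀ s : ℝ, ∃ u ∈ T, (u : A) = NormedSpace.exp (s • X)})
    (ip : A → A → ℝ) (hsymm : ∀ X ∈ 𝔤, ∀ Y ∈ 𝔤, ip X Y = ip Y X)
    (hadd : ∀ X ∈ 𝔤, ∀ Y ∈ 𝔤, ∀ Z ∈ 𝔤, ip (X + Y) Z = ip X Z + ip Y Z)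
    (hsmul : ∀ c : ℝ, ∀ X ∈ 𝔤, ∀ Y ∈ 𝔤, ip (c • X) Y = c * ip X Y)
    (hpos : ∀ X ∈ 𝔤, X ≠ 0 → 0 < ip X X)
    (hAd : ∀ u ∈ G, ∀ X ∈ 𝔤, ∀ Y ∈ 𝔤, ip (u * X * (u⁻¹ : Aˣ)) (u * Y * (u⁻¹ : Aˣ)) = ip X Y)
    (h𝔨 : (𝔨 : Set A) = {X | X ∈ 𝔤 ∧ ∀ Y ∈ 𝔱, ip X Y = 0}) (adk expk : A → Module.End ℝ 𝔨)
    (hadk : ∀ b ∈ 𝔱, ∀ X : 𝔨, (adk b X : A) = b * X - X * b)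
    (hexpk : ∀ b ∈ 𝔱, ∀ X : 𝔨,
      HasSum (fun n : ℕ ↦ (n.factorial : ℝ)⁻¹ • ((adk b ^ n) X : A)) (expk b X))
    (treg : Set 𝔱)
    (htreg : treg = {b : 𝔱 | ∃ u : Aˣ, u ∈ G ∧ (u : A) = NormedSpace.exp (b : A) ∧
      ∃! S : Subgroup Aˣ, IsMaxTorus S ∧ u ∈ S}) :
    ∃ c : ℝ, 0 < c ∧ ∀ P : Set 𝔱, (∃ b₀ ∈ treg, P = connectedComponentIn treg b₀) →
      ∀ f : G → ℂ, Continuous f → (∀ g h : G, f (h * g * h⁻¹) = f g) →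
      ∀ fm : A → ℂ, (∀ (u : Aˣ) (hu : u ∈ G), fm u = f ⟨u, hu⟩) →
      ∀ (d : ℕ) (e : Module.Basis (Fin d) ℝ 𝔱),
        (∀ i j, ip (e i) (e j) = if i = j then 1 else 0) →
        ∫ g, f g ∂μ = c * ∫ x in {x : Fin d → ℝ | ∑ i, x i • e i ∈ P},
          fm (NormedSpace.exp ((∑ i, x i • e i : 𝔱) : A)) *
            ((LinearMap.det (1 - expk (∑ i, x i • e i : 𝔱)) : ℝ) : ℂ) := by
  have : CompleteSpace A := FiniteDimensional.complete ℝ A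
  obtain ⟨B, hB, hBip⟩ := exists_bilinForm_eq_on hsymm hadd hsmul
  obtain rfl : IsMaxTorus = IsMaximalTorus G :=
    funext fun S ↦ propext ((hIsMaxTorus S).trans isMaximalTorus_iff.symm)
  have D : IsTorusDecomposition G T 𝔤 𝔱 𝔨 B :=
    .of_coe_eq hT h𝔤 h𝔱 hB hBip hpos hAd h𝔨
  obtain ⟨c, hc, hformula⟩ := D.exists_forall_integral_eq_coordinates μ hcentre
  refine ⟨c, hc, ?_⟩
  rw [D.setOf_regular_eq] at htreg
  subst htreg
  intro P hP f hf hconj fm hfm d e he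
  rw [hformula P hP f hf hconj d e fun i j ↦
    (hBip _ (D.torus_le (e i).2) _ (D.torus_le (e j).2)).trans (he i j)]
  congr with x
  set b : 𝔱 := ∑ i, x i • e i
  rw [D.det_one_sub_eq_weylDensity b (hadk b b.2) (hexpk b b.2)]
  congr 1
  exact (hfm _ _).symm

/-- The Weyl integration formula on a Weyl alcove, for a compact,
connected, simply connected subgroup `G` of `GL(N,ℝ)`: there is a constant `c > 0`,
independent of the Weyl alcove `P` and of the function `f`, such that for every Weyl
alcove `P` (connected component of `𝔱_reg`) and every continuous conjugation-invariant
`f : G → ℂ` one has `∫_G f dμ_G = c·∫_P f(exp b)·det(1_𝔨 − exp(ad b)|_𝔨) db`, where the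
integral over `P` is computed in the orthonormal coordinates on `𝔱` determined by the
fixed `Ad`-invariant inner product `ip` on the Lie algebra `𝔤`. -/
theorem stmt_0
    (N : ℕ) (hN : 0 < N)
    (G : Subgroup (Matrix (Fin N) (Fin N) ℝ)ˣ)
    [CompactSpace G] [ConnectedSpace G] [SimplyConnectedSpace G]
    [MeasurableSpace G] [BorelSpace G]
    (μ : Measure G) [μ.IsHaarMeasure] [IsProbabilityMeasure μ]
    -- `IsMaxTorus S`: `S` is a maximal torus of `G`, i.e. a compact, connected, abelian
    -- subgroup of `G`, maximal with respect to inclusion among such subgroups.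
    (IsMaxTorus : Subgroup (Matrix (Fin N) (Fin N) ℝ)ˣ → Prop)
    (hIsMaxTorus : ∀ S : Subgroup (Matrix (Fin N) (Fin N) ℝ)ˣ,
      IsMaxTorus S ↔
        S ≤ G ∧ IsCompact (S : Set (Matrix (Fin N) (Fin N) ℝ)ˣ) ∧
          IsConnected (S : Set (Matrix (Fin N) (Fin N) ℝ)ˣ) ∧
          (∀ x ∈ S, ∀ y ∈ S, x * y = y * x) ∧
          ∀ S' : Subgroup (Matrix (Fin N) (Fin N) ℝ)ˣ,
            S' ≤ G → IsCompact (S' : Set (Matrix (Fin N) (Fin N) ℝ)ˣ) →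
            IsConnected (S' : Set (Matrix (Fin N) (Fin N) ℝ)ˣ) →
            (∀ x ∈ S', ∀ y ∈ S', x * y = y * x) → S ≤ S' → S = S')
    -- a fixed maximal torus `T` of `G`
    (T : Subgroup (Matrix (Fin N) (Fin N) ℝ)ˣ) (hT : IsMaxTorus T)
    -- the Lie algebras `𝔤` of `G` and `𝔱` of `T`, and the orthogonal complement `𝔨`
    -- of `𝔱` in `𝔤`
    (g' t' k' : Submodule ℝ (Matrix (Fin N) (Fin N) ℝ))
    (hg' : (g' : Set (Matrix (Fin N) (Fin N) ℝ)) =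
      {X | ∀ s : ℝ, ∃ u ∈ G, (u : Matrix (Fin N) (Fin N) ℝ) = NormedSpace.exp (s • X)})
    (ht' : (t' : Set (Matrix (Fin N) (Fin N) ℝ)) =
      {X | X ∈ g' ∧ ∀ s : ℝ, ∃ u ∈ T, (u : Matrix (Fin N) (Fin N) ℝ) = NormedSpace.exp (s • X)})
    -- an `Ad`-invariant inner product on `𝔤`
    (ip : Matrix (Fin N) (Fin N) ℝ → Matrix (Fin N) (Fin N) ℝ → ℝ)
    (hsym : ∀ X ∈ g', ∀ Y ∈ g', ip X Y = ip Y X)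
    (hadd : ∀ X ∈ g', ∀ Y ∈ g', ∀ Z ∈ g', ip (X + Y) Z = ip X Z + ip Y Z)
    (hsmul : ∀ c : ℝ, ∀ X ∈ g', ∀ Y ∈ g', ip (c • X) Y = c * ip X Y)
    (hpos : ∀ X ∈ g', X ≠ 0 → 0 < ip X X)
    (hAd : ∀ u ∈ G, ∀ X ∈ g', ∀ Y ∈ g',
      ip ((u : Matrix (Fin N) (Fin N) ℝ) * X * ((u⁻¹ : (Matrix (Fin N) (Fin N) ℝ)ˣ) : Matrix (Fin N) (Fin N) ℝ))
        ((u : Matrix (Fin N) (Fin N) ℝ) * Y * ((u⁻¹ : (Matrix (Fin N) (Fin N) ℝ)ˣ) : Matrix (Fin N) (Fin N) ℝ))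
        = ip X Y)
    (hk' : (k' : Set (Matrix (Fin N) (Fin N) ℝ)) = {X | X ∈ g' ∧ ∀ Y ∈ t', ip X Y = 0})
    -- for `b ∈ 𝔱`, `adk b` is the restriction of `ad(b) = [b,·]` to `𝔨`, and
    -- `expk b` is the exponential `exp(ad(b)|_𝔨)` of this restriction
    (adk expk : Matrix (Fin N) (Fin N) ℝ → Module.End ℝ k')
    (hadk : ∀ b ∈ t', ∀ X : k', (adk b X : Matrix (Fin N) (Fin N) ℝ) =
      b * (X : Matrix (Fin N) (Fin N) ℝ) - (X : Matrix (Fin N) (Fin N) ℝ) * b)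
    (hexpk : ∀ b ∈ t', ∀ X : k', ∀ i j : Fin N,
      HasSum
        (fun n : ℕ => (((n.factorial : ℝ)⁻¹ •
          ((((adk b) ^ n) X : Matrix (Fin N) (Fin N) ℝ))) : Matrix (Fin N) (Fin N) ℝ) i j)
        ((expk b X : Matrix (Fin N) (Fin N) ℝ) i j))
    -- `𝔱_reg = {b ∈ 𝔱 : exp b ∈ G_reg}`, where `G_reg` is the set of regular elements
    -- of `G`, i.e. of those elements contained in exactly one maximal torus of `G`
    (treg : Set t')
    (htreg : treg = {b : t' | ∃ u : (Matrix (Fin N) (Fin N) ℝ)ˣ, u ∈ G ∧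
      (u : Matrix (Fin N) (Fin N) ℝ) = NormedSpace.exp (b : Matrix (Fin N) (Fin N) ℝ) ∧
      ∃! S : Subgroup (Matrix (Fin N) (Fin N) ℝ)ˣ, IsMaxTorus S ∧ u ∈ S}) :
    ∃ c : ℝ, 0 < c ∧
      -- for every Weyl alcove `P`, i.e. every connected component of `𝔱_reg`, ...
      ∀ P : Set t', (∃ b₀ ∈ treg, P = connectedComponentIn treg b₀) →
      -- ... and every continuous conjugation-invariant function `f : G → ℂ`
      -- (transported to the matrix level as `fm`) ...
      ∀ f : G → ℂ, Continuous f → (∀ g h : G, f (h * g * h⁻¹) = f g) →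
      ∀ fm : Matrix (Fin N) (Fin N) ℝ → ℂ,
        (∀ (u : (Matrix (Fin N) (Fin N) ℝ)ˣ) (hu : u ∈ G),
          fm (u : Matrix (Fin N) (Fin N) ℝ) = f ⟨u, hu⟩) →
      -- ... in any `ip`-orthonormal coordinates on `𝔱` ...
      ∀ (d : ℕ) (e : Module.Basis (Fin d) ℝ t'),
        (∀ i j, ip (e i : Matrix (Fin N) (Fin N) ℝ) (e j : Matrix (Fin N) (Fin N) ℝ) =
          if i = j then 1 else 0) →
        -- ... one has `∫_G f dμ_G = c ∫_P f(exp b) det(1_𝔨 − exp(ad b)|_𝔨) db`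
        ∫ g, f g ∂μ =
          (c : ℂ) * ∫ x in {x : Fin d → ℝ | (∑ i, x i • e i) ∈ P},
            fm (NormedSpace.exp ((∑ i, x i • e i : t') : Matrix (Fin N) (Fin N) ℝ)) *
              ((LinearMap.det ((1 : Module.End ℝ k') -
                expk ((∑ i, x i • e i : t') : Matrix (Fin N) (Fin N) ℝ)) : ℝ) : ℂ) := by
  have hcentre := @WeylAlcove.eq_zero_of_forall_commute_of_simplyConnectedSpace _
    Matrix.linftyOpNormedRing Matrix.linftyOpNormedAlgebra inferInstance G ‹_› ‹_› g' hg'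
  exact @stmt_0_general _ Matrix.linftyOpNormedRing Matrix.linftyOpNormedAlgebra inferInstance G
    ‹_› ‹_› _ ‹_› μ ‹_› ‹_› IsMaxTorus hIsMaxTorus T hT g' t' k' hg' hcentre ht' ip hsym hadd hsmul
    hpos hAd hk' adk expk hadk
    (fun b hb X ↦ Pi.hasSum.2 fun i ↦ Pi.hasSum.2 fun j ↦ hexpk b hb X i j) treg htreg
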